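/- For every integer q ≥ 1 and every a ∈ G_q, ψ_K(x;q,a) is asymptotic to x/φ_K(q) as x → ∞; that is, lim_{x→∞} ψ_K(x;q,a)·φ_K(q)/x = 1. -/

import Mathlib

/-!
Setting: `K` is a number field, Galois over `ℚ`, with ring of integers `𝓞 K`.
We formalize the objects from Smith, "A generalization of the
Barban-Davenport-Halberstam Theorem to number fields".
-/

open NumberField Ideal
open scoped Classical BigOperators

noncomputable section

/-- `𝔞` is a (positive) power of a nonzero prime ideal of `𝓞 K`. -/
def IsPrimeIdealPower {K : Type*} [Field K] [NumberField K] (𝔞 : Ideal (𝓞 K)) : Prop :=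
  ∃ (𝔭 : Ideal (𝓞 K)) (m : ℕ), 𝔭.IsPrime ∧ 𝔭 ≠ ⊥ ∧ 1 ≤ m ∧ 𝔞 = 𝔭 ^ m

/-- The von Mangoldt function on ideals of `𝓞 K`: `Λ_K(𝔭^m) = log N𝔭`, and `0` otherwise.
(For `𝔞 = 𝔭^m` with `𝔭` prime, the radical of `𝔞` is `𝔭`.) -/
def LambdaK (K : Type*) [Field K] [NumberField K] (𝔞 : Ideal (𝓞 K)) : ℝ :=
  if IsPrimeIdealPower 𝔞 then Real.log (absNorm 𝔞.radical) else 0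

/-- `ψ_K(x; q, a) = ∑_{N𝔭^m ≤ x, N𝔭^m ≡ a (mod q)} log N𝔭`. -/
def psiK (K : Type*) [Field K] [NumberField K] (x : ℝ) (q : ℕ) (a : ZMod q) : ℝ :=
  ∑' 𝔞 : Ideal (𝓞 K),
    if (absNorm 𝔞 : ℝ) ≤ x ∧ ((absNorm 𝔞 : ZMod q) = a) then LambdaK K 𝔞 else 0

/-- `G_q`: the image of `Gal(K(ζ_q)/K)` in `(ℤ/qℤ)ˣ` under restriction to `ℚ(ζ_q)` followed
by the canonical isomorphism `Gal(ℚ(ζ_q)/ℚ) ≅ (ℤ/qℤ)ˣ`; concretely, the range of the map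
sending `σ ∈ Gal(K(ζ_q)/K)` to the exponent `a ∈ (ℤ/qℤ)ˣ` with `σ(ζ_q) = ζ_q^a`. -/
def Gq (K : Type*) [Field K] [NumberField K] (q : ℕ) : Subgroup (ZMod q)ˣ :=
  if h : 0 < q then
    haveI : NeZero q := ⟨h.ne'⟩
    haveI : NeZero (((⟨q, h⟩ : ℕ+) : ℕ) : K) := ⟨Nat.cast_ne_zero.mpr h.ne'⟩
    ((IsCyclotomicExtension.zeta_spec (⟨q, h⟩ : ℕ+) K
        (CyclotomicField (⟨q, h⟩ : ℕ+) K)).autToPow K).range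
  else ⊥

/-- `φ_K(q) = |G_q|`. -/
def phiK (K : Type*) [Field K] [NumberField K] (q : ℕ) : ℕ :=
  Nat.card (Gq K q)

/-- `ψ_K(x, χ∘N) = ∑_{N𝔞 ≤ x} χ(N𝔞) Λ_K(𝔞)`. -/
def psiKChi (K : Type*) [Field K] [NumberField K] (x : ℝ) {q : ℕ}
    (χ : DirichletCharacter ℂ q) : ℂ :=
  ∑' 𝔞 : Ideal (𝓞 K),
    if (absNorm 𝔞 : ℝ) ≤ x then χ (absNorm 𝔞 : ZMod q) * (LambdaK K 𝔞 : ℂ) else 0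

/-- `ψ'_K(x, χ∘N)`: equals `ψ_K(x, χ∘N) − x` when `χ` is trivial on `G_q`,
and `ψ_K(x, χ∘N)` otherwise. -/
def psiKChi' (K : Type*) [Field K] [NumberField K] (x : ℝ) {q : ℕ}
    (χ : DirichletCharacter ℂ q) : ℂ :=
  if ∀ a ∈ Gq K q, χ (a : ZMod q) = 1 then psiKChi K x χ - x else psiKChi K x χ

/-- The common residue degree `f(K/ℚ; p)` of the primes of `K` above `p`
(well-defined when `K/ℚ` is Galois): any prime `𝔭` above `p` has `N𝔭 = p^f`. -/
def resDeg (K : Type*) [Field K] [NumberField K] (p : ℕ) : ℕ :=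
  if h : ∃ 𝔭 : Ideal (𝓞 K), 𝔭.IsPrime ∧ 𝔭 ≠ ⊥ ∧ (p : 𝓞 K) ∈ 𝔭 then
    (absNorm h.choose).factorization p
  else 0

/-- `D_K(n)`: the number of prime ideal powers `𝔭^m` of `𝓞 K` with `N𝔭^m = n`. -/
def DK (K : Type*) [Field K] [NumberField K] (n : ℕ) : ℕ :=
  Nat.card {𝔞 : Ideal (𝓞 K) // IsPrimeIdealPower 𝔞 ∧ absNorm 𝔞 = n}

/-- `Λ_K^*(n) = f(K/ℚ; p) · log p` if `n = p^k` is a prime power, and `0` otherwise. -/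
def LambdaStarK (K : Type*) [Field K] [NumberField K] (n : ℕ) : ℝ :=
  if IsPrimePow n then (resDeg K n.minFac : ℝ) * Real.log n.minFac else 0

end

namespace PrimeIdealNorms

open MeasureTheory Set

/-- `S` can be covered, at every scale `1 / m`, by `O(m ^ d)` sets of diameter `O(1 / m)`. -/
def BoxDimLE {E : Type*} [PseudoMetricSpace E] (d : ℕ) (S : Set E) : Prop :=
  ∃ C : ℝ, 0 ≤ C ∧ ∀ m : ℕ, 1 ≤ m → ∃ F : Finset (Set E), (F.card : ℝ) ≤ C * m ^ d ∧
    S ⊆ ⋃₀ (F : Set (Set E)) ∧ ∀ A ∈ F, ∀ x ∈ A, ∀ y ∈ A, dist x y ≤ C / m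

theorem BoxDimLE.mono {E : Type*} [PseudoMetricSpace E] {d : ℕ} {S T : Set E}
    (hT : BoxDimLE d T) (h : S ⊆ T) : BoxDimLE d S := by
  obtain ⟨C, hC, H⟩ := hT
  refine ⟨C, hC, fun m hm ↦ ?_⟩
  obtain ⟨F, h1, h2, h3⟩ := H m hm
  exact ⟨F, h1, h.trans h2, h3⟩

theorem BoxDimLE.union {E : Type*} [PseudoMetricSpace E] {d : ℕ} {S T : Set E}
    (hS : BoxDimLE d S) (hT : BoxDimLE d T) : BoxDimLE d (S ∪ T) := by
  obtain ⟨C, hC, H⟩ := hS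
  obtain ⟨C', hC', H'⟩ := hT
  refine ⟨C + C', by positivity, fun m hm ↦ ?_⟩
  obtain ⟨F, h1, h2, h3⟩ := H m hm
  obtain ⟨F', h1', h2', h3'⟩ := H' m hm
  refine ⟨F ∪ F', ?_, ?_, ?_⟩
  · calc ((F ∪ F').card : ℝ) ≤ F.card + F'.card := by exact_mod_cast Finset.card_union_le _ _
      _ ≤ _ := by rw [add_mul]; gcongr
  · rw [Finset.coe_union, sUnion_union]
    exact union_subset_union h2 h2'
  · intro A hA x hx y hy
    rcases Finset.mem_union.mp hA with hA | hA
    · exact (h3 A hA x hx y hy).trans (by gcongr; linarith)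
    · exact (h3' A hA x hx y hy).trans (by gcongr; linarith)

theorem boxDimLE_empty {E : Type*} [PseudoMetricSpace E] (d : ℕ) : BoxDimLE d (∅ : Set E) :=
  ⟨0, le_rfl, fun m _ ↦ ⟨∅, by simp, by simp, by simp⟩⟩

theorem boxDimLE_singleton {E : Type*} [PseudoMetricSpace E] (d : ℕ) (x : E) :
    BoxDimLE d ({x} : Set E) := by
  refine ⟨1, zero_le_one, fun m hm ↦ ⟨{{x}}, ?_, by simp, ?_⟩⟩
  · simpa using one_le_pow₀ (M₀ := ℝ) (by exact_mod_cast hm)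
  · intro A hA y hy z hz
    rw [Finset.mem_singleton] at hA
    subst hA
    rw [mem_singleton_iff.mp hy, mem_singleton_iff.mp hz, dist_self]
    positivity

theorem BoxDimLE.iUnion {E ι : Type*} [PseudoMetricSpace E] [Finite ι] {d : ℕ} {S : ι → Set E}
    (hS : ∀ i, BoxDimLE d (S i)) : BoxDimLE d (⋃ i, S i) := by
  cases nonempty_fintype ι
  have : ∀ s : Finset ι, BoxDimLE d (⋃ i ∈ s, S i) := by
    intro s
    induction s using Finset.induction_on with
    | empty => simpa using boxDimLE_empty d
    | insert a s _ ih =>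
      rw [Finset.set_biUnion_insert]
      exact (hS a).union ih
  simpa using this Finset.univ

theorem BoxDimLE.image {E F : Type*} [PseudoMetricSpace E] [PseudoMetricSpace F] {d : ℕ}
    {S : Set E} (hS : BoxDimLE d S) {f : E → F} {L : NNReal} (hf : LipschitzOnWith L f S) :
    BoxDimLE d (f '' S) := by
  obtain ⟨C, hC, H⟩ := hS
  refine ⟨max C (L * C), by positivity, fun m hm ↦ ?_⟩
  obtain ⟨G, h1, h2, h3⟩ := H m hm
  refine ⟨G.image fun A ↦ f '' (A ∩ S), ?_, ?_, ?_⟩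
  · calc ((G.image fun A ↦ f '' (A ∩ S)).card : ℝ) ≤ G.card := by
          exact_mod_cast Finset.card_image_le
      _ ≤ _ := h1.trans (by gcongr; exact le_max_left _ _)
  · rintro _ ⟨x, hx, rfl⟩
    obtain ⟨A, hA, hxA⟩ := h2 hx
    exact ⟨f '' (A ∩ S), by simpa using ⟨A, hA, rfl⟩, x, ⟨hxA, hx⟩, rfl⟩
  · intro B hB
    obtain ⟨A, hA, rfl⟩ := Finset.mem_image.mp hB
    rintro _ ⟨x, hx, rfl⟩ _ ⟨y, hy, rfl⟩
    calc dist (f x) (f y) ≤ L * dist x y := hf.dist_le_mul x hx.2 y hy.2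
      _ ≤ L * (C / m) := by gcongr; exact h3 A hA x hx.1 y hy.1
      _ = L * C / m := by ring
      _ ≤ _ := by gcongr; exact le_max_right _ _

/-- A facet of the unit cube. -/
theorem boxDimLE_facet {ι : Type*} [Fintype ι] (i : ι) (b : ℝ) :
    BoxDimLE (Fintype.card ι - 1) {x : ι → ℝ | (∀ j, x j ∈ Icc (0 : ℝ) 1) ∧ x i = b} := by
  refine ⟨1, zero_le_one, fun m hm ↦ ?_⟩
  have hm0 : (0 : ℝ) < m := by exact_mod_cast hm
  have key : ∀ y ∈ Icc (0 : ℝ) 1, ∃ k : Fin m, (k : ℝ) / m ≤ y ∧ y ≤ (k + 1) / m := by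
    intro y hy
    by_cases h1 : y = 1
    · refine ⟨⟨m - 1, by omega⟩, ?_, ?_⟩
      · rw [h1, div_le_one hm0]; simp
      · rw [h1, le_div_iff₀ hm0]; simp [Nat.cast_sub hm]
    · have hy1 : y < 1 := lt_of_le_of_ne hy.2 h1
      have hnn : 0 ≤ y * m := mul_nonneg hy.1 hm0.le
      refine ⟨⟨⌊y * m⌋₊, ?_⟩, ?_, ?_⟩
      · rw [Nat.floor_lt hnn]; nlinarith
      · rw [div_le_iff₀ hm0]; exact Nat.floor_le hnn
      · rw [le_div_iff₀ hm0]; exact (Nat.lt_floor_add_one _).le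
  let A : ({j // j ≠ i} → Fin m) → Set (ι → ℝ) := fun k ↦
    {x | x i = b ∧ ∀ j : {j // j ≠ i}, (k j : ℝ) / m ≤ x j ∧ x j ≤ (k j + 1) / m}
  refine ⟨Finset.univ.image A, ?_, ?_, ?_⟩
  · rw [one_mul]
    calc ((Finset.univ.image A).card : ℝ) ≤ (Finset.univ : Finset ({j // j ≠ i} → Fin m)).card := by
          exact_mod_cast Finset.card_image_le
      _ = _ := by simp [Fintype.card_subtype_compl]
  · rintro x ⟨hx, hxi⟩
    choose k hk using fun j : {j // j ≠ i} ↦ key (x j) (hx j)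
    exact ⟨A k, by simp, hxi, hk⟩
  · intro B hB
    obtain ⟨k, -, rfl⟩ := Finset.mem_image.mp hB
    rintro x ⟨hx, hx'⟩ y ⟨hy, hy'⟩
    rw [dist_pi_le_iff (by positivity)]
    intro j
    by_cases hj : j = i
    · subst hj
      rw [hx, hy, dist_self]
      positivity
    · have h1 := hx' ⟨j, hj⟩
      have h2 := hy' ⟨j, hj⟩
      rw [Real.dist_eq, abs_le]
      have : ((k ⟨j, hj⟩ : ℕ) + 1 : ℝ) / m = (k ⟨j, hj⟩ : ℕ) / m + 1 / m := by ring
      rw [this] at h1 h2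
      constructor <;> linarith [h1.1, h1.2, h2.1, h2.2]

theorem IsPreconnected.inter_frontier_nonempty' {X : Type*} [TopologicalSpace X] {s D : Set X}
    (hs : IsPreconnected s) (h : (s ∩ D).Nonempty) (h' : ∃ x ∈ s, x ∉ D) :
    (s ∩ frontier D).Nonempty := by
  by_contra hne
  rw [not_nonempty_iff_eq_empty, ← disjoint_iff_inter_eq_empty, Set.disjoint_left] at hne
  obtain ⟨x, hx, hxD⟩ := h
  obtain ⟨y, hy, hyD⟩ := h'
  have hint : ∀ z ∈ s, z ∈ D → z ∈ interior D := fun z hz hzD ↦ by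
    by_contra hzi
    exact hne hz ⟨subset_closure hzD, hzi⟩
  have hext : ∀ z ∈ s, z ∉ D → z ∈ (closure D)ᶜ := fun z hz hzD hzc ↦
    hne hz ⟨hzc, fun hzi ↦ hzD (interior_subset hzi)⟩
  obtain ⟨z, -, hz1, hz2⟩ := hs (interior D) (closure D)ᶜ isOpen_interior
    isClosed_closure.isOpen_compl
    (fun z hz ↦ (em (z ∈ D)).imp (hint z hz) (hext z hz))
    ⟨x, hx, hint x hx hxD⟩ ⟨y, hy, hext y hy hyD⟩
  exact hz2 (interior_subset_closure hz1)

section Count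

variable {ι : Type*}

/-- The half-open unit cube with corner `z + v`. -/
def cell (v : ι → ℝ) (z : ι → ℤ) : Set (ι → ℝ) :=
  Set.univ.pi fun i ↦ Ico (z i + v i) (z i + v i + 1)

theorem mem_cell_iff {v : ι → ℝ} {z : ι → ℤ} {x : ι → ℝ} :
    x ∈ cell v z ↔ (fun i ↦ ⌊x i - v i⌋) = z := by
  simp only [cell, mem_univ_pi, mem_Ico, funext_iff, Int.floor_eq_iff]
  refine forall_congr' fun i ↦ ?_
  constructor <;> rintro ⟨h1, h2⟩ <;> constructor <;> linarith

theorem corner_mem_cell (v : ι → ℝ) (z : ι → ℤ) : (fun i ↦ (z i : ℝ) + v i) ∈ cell v z := by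
  simp [cell]

theorem convex_cell (v : ι → ℝ) (z : ι → ℤ) : Convex ℝ (cell v z) :=
  convex_pi fun _ _ ↦ convex_Ico _ _

theorem dist_lt_one_of_mem_cell {v : ι → ℝ} {z : ι → ℤ} {x : ι → ℝ} (hx : x ∈ cell v z) (i : ι) :
    |x i - (z i + v i)| < 1 := by
  have := (mem_univ_pi.mp hx) i
  rw [abs_lt]
  constructor <;> linarith [this.1, this.2]

variable [Fintype ι]

theorem measurableSet_cell (v : ι → ℝ) (z : ι → ℤ) : MeasurableSet (cell v z) :=
  MeasurableSet.univ_pi fun _ ↦ measurableSet_Ico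

theorem volume_cell (v : ι → ℝ) (z : ι → ℤ) : volume (cell v z) = 1 := by
  simp [cell, volume_pi_pi]

theorem finite_setOf_cell_inter {v : ι → ℝ} {S : Set (ι → ℝ)} {R : ℕ}
    (hS : ∀ x ∈ S, ∀ y ∈ S, dist x y ≤ R) :
    {z | (cell v z ∩ S).Nonempty}.Finite ∧
      {z | (cell v z ∩ S).Nonempty}.ncard ≤ (2 * R + 5) ^ Fintype.card ι := by
  rcases eq_empty_or_nonempty {z | (cell v z ∩ S).Nonempty} with h | ⟨z₀, x₀, hx₀, hx₀S⟩
  · rw [h]; simp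
  have hsub : {z | (cell v z ∩ S).Nonempty} ⊆
      (Fintype.piFinset fun i ↦ Finset.Icc (z₀ i - (R + 2)) (z₀ i + (R + 2)) : Set (ι → ℤ)) := by
    rintro z ⟨x, hx, hxS⟩
    simp only [Finset.mem_coe, Fintype.mem_piFinset, Finset.mem_Icc]
    intro i
    have h1 := abs_lt.mp (dist_lt_one_of_mem_cell hx i)
    have h2 := abs_lt.mp (dist_lt_one_of_mem_cell hx₀ i)
    have h3 := abs_le.mp ((Real.dist_eq _ _) ▸ (dist_le_pi_dist x x₀ i).trans (hS x hxS x₀ hx₀S))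
    constructor
    · have : (z₀ i : ℝ) - (R + 2) ≤ z i := by linarith [h1.1, h1.2, h2.1, h2.2, h3.1, h3.2]
      exact_mod_cast this
    · have : (z i : ℝ) ≤ z₀ i + (R + 2) := by linarith [h1.1, h1.2, h2.1, h2.2, h3.1, h3.2]
      exact_mod_cast this
  refine ⟨(Finset.finite_toSet _).subset hsub, (ncard_le_ncard hsub).trans ?_⟩
  rw [ncard_coe_finset, Fintype.card_piFinset]
  refine le_of_eq ?_
  have : ∀ i, (Finset.Icc (z₀ i - ((R : ℤ) + 2)) (z₀ i + (R + 2))).card = 2 * R + 5 := by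
    intro i; rw [Int.card_Icc]; omega
  simp [this]

open Pointwise in
/-- The number of cells meeting the dilate `t • S` is `O(t ^ d)`. -/
theorem BoxDimLE.ncard_cell_le {d : ℕ} {S : Set (ι → ℝ)} (hS : BoxDimLE d S) :
    ∃ C : ℝ, ∀ v : ι → ℝ, ∀ t : ℝ, 1 ≤ t →
      {z | (cell v z ∩ t • S).Nonempty}.Finite ∧
      ({z | (cell v z ∩ t • S).Nonempty}.ncard : ℝ) ≤ C * t ^ d := by
  obtain ⟨C, hC, H⟩ := hS
  set R := ⌈C⌉₊ with hR
  refine ⟨C * 2 ^ d * (2 * R + 5) ^ Fintype.card ι, fun v t ht ↦ ?_⟩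
  have hm : 1 ≤ ⌈t⌉₊ := Nat.one_le_ceil_iff.mpr (by linarith)
  obtain ⟨F, h1, h2, h3⟩ := H ⌈t⌉₊ hm
  have hm0 : (0 : ℝ) < ⌈t⌉₊ := by exact_mod_cast hm
  have hA : ∀ A ∈ F, ∀ x ∈ t • A, ∀ y ∈ t • A, dist x y ≤ R := by
    rintro A hA _ ⟨x, hx, rfl⟩ _ ⟨y, hy, rfl⟩
    simp only [dist_smul₀]
    rw [Real.norm_of_nonneg (by linarith)]
    calc t * dist x y ≤ t * (C / ⌈t⌉₊) := by gcongr; exact h3 A hA x hx y hy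
      _ ≤ ⌈t⌉₊ * (C / ⌈t⌉₊) := by gcongr; exact Nat.le_ceil t
      _ = C := by field_simp
      _ ≤ R := Nat.le_ceil C
  have hsub : {z | (cell v z ∩ t • S).Nonempty} ⊆
      ⋃ A ∈ F, {z | (cell v z ∩ t • A).Nonempty} := by
    rintro z ⟨_, hx, ⟨y, hy, rfl⟩⟩
    obtain ⟨A, hA, hyA⟩ := h2 hy
    exact mem_iUnion₂.mpr ⟨A, hA, t • y, hx, y, hyA, rfl⟩
  have hfin : (⋃ A ∈ F, {z | (cell v z ∩ t • A).Nonempty}).Finite :=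
    F.finite_toSet.biUnion fun A hA' ↦ (finite_setOf_cell_inter (hA A hA')).1
  refine ⟨hfin.subset hsub, ?_⟩
  calc ({z | (cell v z ∩ t • S).Nonempty}.ncard : ℝ)
      ≤ (⋃ A ∈ F, {z | (cell v z ∩ t • A).Nonempty}).ncard := by
        exact_mod_cast ncard_le_ncard hsub hfin
    _ ≤ ∑ A ∈ F, ({z | (cell v z ∩ t • A).Nonempty}.ncard : ℝ) := by
        exact_mod_cast Finset.set_ncard_biUnion_le F _
    _ ≤ ∑ A ∈ F, ((2 * R + 5 : ℝ) ^ Fintype.card ι) := by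
        refine Finset.sum_le_sum fun A hA' ↦ ?_
        exact_mod_cast (finite_setOf_cell_inter (hA A hA')).2
    _ = F.card * (2 * R + 5 : ℝ) ^ Fintype.card ι := by simp
    _ ≤ (C * 2 ^ d * t ^ d) * (2 * R + 5 : ℝ) ^ Fintype.card ι := by
        gcongr
        refine h1.trans ?_
        rw [mul_assoc, ← mul_pow]
        gcongr
        linarith [Nat.ceil_lt_add_one (show 0 ≤ t by linarith)]
    _ = _ := by ring

open Pointwise in
/-- Counting the points of a shifted integer lattice in the dilates of a bounded set with a
boundary of box dimension at most `n - 1`. -/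
theorem exists_abs_ncard_sub_le {D : Set (ι → ℝ)} (hb : Bornology.IsBounded D)
    (hfr : BoxDimLE (Fintype.card ι - 1) (frontier D)) :
    ∃ C : ℝ, ∀ v : ι → ℝ, ∀ t : ℝ, 1 ≤ t →
      {z : ι → ℤ | (fun i ↦ (z i : ℝ) + v i) ∈ t • D}.Finite ∧
      |({z : ι → ℤ | (fun i ↦ (z i : ℝ) + v i) ∈ t • D}.ncard : ℝ)
        - volume.real D * t ^ Fintype.card ι| ≤ C * t ^ (Fintype.card ι - 1) := by
  obtain ⟨C, H⟩ := hfr.ncard_cell_le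
  refine ⟨C, fun v t ht ↦ ?_⟩
  obtain ⟨hfin, hle⟩ := H v t ht
  have ht0 : (0 : ℝ) < t := by linarith
  set Zin := {z | cell v z ⊆ t • D}
  set Zall := {z | (cell v z ∩ t • D).Nonempty}
  set N := {z : ι → ℤ | (fun i ↦ (z i : ℝ) + v i) ∈ t • D}
  have hin : Zin ⊆ N := fun z hz ↦ hz (corner_mem_cell v z)
  have hall : N ⊆ Zall := fun z hz ↦ ⟨_, corner_mem_cell v z, hz⟩
  have hallfin : Zall.Finite := by
    obtain ⟨R, hR⟩ := Metric.isBounded_iff.mp (hb.smul₀ t)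
    refine (finite_setOf_cell_inter (R := ⌈R⌉₊) fun x hx y hy ↦ ?_).1
    exact (hR hx hy).trans (Nat.le_ceil R)
  have hNfin := hallfin.subset hall
  have hinfin := hNfin.subset hin
  have hbd : Zall ⊆ Zin ∪ {z | (cell v z ∩ t • frontier D).Nonempty} := by
    intro z hz
    by_cases hz' : cell v z ⊆ t • D
    · exact Or.inl hz'
    · right
      have := IsPreconnected.inter_frontier_nonempty' (convex_cell v z).isPreconnected hz
        (not_subset.mp hz')
      rwa [show frontier (t • D) = t • frontier D from
        ((Homeomorph.smulOfNeZero t ht0.ne').image_frontier D).symm] at this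
  have hcard : (Zall.ncard : ℝ) ≤ Zin.ncard + C * t ^ (Fintype.card ι - 1) := by
    have h1 : Zall.ncard ≤ Zin.ncard + {z | (cell v z ∩ t • frontier D).Nonempty}.ncard :=
      (ncard_le_ncard hbd (hinfin.union hfin)).trans (ncard_union_le _ _)
    have h2 : (Zall.ncard : ℝ) ≤
      Zin.ncard + ({z | (cell v z ∩ t • frontier D).Nonempty}.ncard : ℝ) := by exact_mod_cast h1
    linarith
  have hvol : volume.real (t • D) = volume.real D * t ^ Fintype.card ι := by
    rw [Measure.real, Measure.addHaar_smul, ENNReal.toReal_mul, Module.finrank_fintype_fun_eq_card,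
      ENNReal.toReal_ofReal (abs_nonneg _), abs_of_nonneg (by positivity), mul_comm, Measure.real]
  have hdisj : Pairwise (Function.onFun Disjoint (cell v)) := by
    intro z z' hzz'
    refine Set.disjoint_left.mpr fun x hx hx' ↦ hzz' ?_
    rw [← mem_cell_iff.mp hx, ← mem_cell_iff.mp hx']
  have hmeasU : ∀ s : Finset (ι → ℤ), volume.real (⋃ z ∈ s, cell v z) = s.card := by
    intro s
    rw [measureReal_biUnion_finset (hdisj.set_pairwise _) (fun z _ ↦ measurableSet_cell v z)
      (fun z _ ↦ by simp [volume_cell])]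
    simp [Measure.real, volume_cell]
  have hlow : (Zin.ncard : ℝ) ≤ volume.real (t • D) := by
    rw [ncard_eq_toFinset_card _ hinfin, ← hmeasU]
    refine measureReal_mono ?_ (hb.smul₀ t).measure_lt_top.ne
    exact iUnion₂_subset fun z hz ↦ by simpa [Zin] using hz
  have hup : volume.real (t • D) ≤ Zall.ncard := by
    rw [ncard_eq_toFinset_card _ hallfin, ← hmeasU]
    refine measureReal_mono ?_ ?_
    · intro x hx
      refine mem_iUnion₂.mpr ⟨fun i ↦ ⌊x i - v i⌋, ?_, mem_cell_iff.mpr rfl⟩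
      exact hallfin.mem_toFinset.mpr ⟨x, mem_cell_iff.mpr rfl, hx⟩
    · refine ((measure_biUnion_finset_le _ _).trans_lt ?_).ne
      simp [volume_cell]
  refine ⟨hNfin, ?_⟩
  have h1 : (Zin.ncard : ℝ) ≤ N.ncard := by exact_mod_cast ncard_le_ncard hin hNfin
  have h2 : (N.ncard : ℝ) ≤ Zall.ncard := by exact_mod_cast ncard_le_ncard hall hallfin
  rw [← hvol, abs_le]
  constructor <;> linarith

end Count

open MeasureTheory Set NumberField.InfinitePlace NumberField.mixedEmbedding
  NumberField.mixedEmbedding.fundamentalCone NumberField.Units.dirichletUnitTheorem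

section Frontier

variable (K : Type*) [Field K] [NumberField K]

/-- A parametrization of the fundamental cone and its boundary by the unit cube, once the signs
`s` at the real places are fixed. -/
noncomputable def coneParam (s : {w : InfinitePlace K // IsReal w} → ℝ)
    (u : InfinitePlace K ⊕ {w : InfinitePlace K // IsComplex w} → ℝ) : mixedSpace K :=
  (fun w ↦ s w * (u (.inl w₀) *
      (expMapBasis (fun i : InfinitePlace K ↦ if i = w₀ then 0 else u (.inl i)) : realSpace K) w),
   fun w ↦ ((u (.inl w₀) *
      (expMapBasis (fun i : InfinitePlace K ↦ if i = w₀ then 0 else u (.inl i)) : realSpace K) w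
        : ℝ) : ℂ) * Complex.exp ((2 * Real.pi * u (.inr w) : ℝ) * Complex.I))

theorem contDiff_expMapBasis :
    ContDiff ℝ 1 (fun x : realSpace K ↦ (expMapBasis x : realSpace K)) := by
  rw [contDiff_pi]
  intro w
  simp only [expMapBasis_apply, expMap_apply]
  refine Real.contDiff_exp.comp (contDiff_const.mul ?_)
  have h := ((completeBasis K).equivFun.symm.toLinearMap.toContinuousLinearMap).contDiff (n := 1)
  exact contDiff_pi.mp h w

theorem contDiff_radialPart (w : InfinitePlace K) : ContDiff ℝ 1
    (fun u : InfinitePlace K ⊕ {w : InfinitePlace K // IsComplex w} → ℝ ↦ u (.inl w₀) *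
    (expMapBasis (fun i : InfinitePlace K ↦ if i = w₀ then 0 else u (.inl i)) : realSpace K) w) := by
  have h1 : ContDiff ℝ 1 (fun u : InfinitePlace K ⊕ {w : InfinitePlace K // IsComplex w} → ℝ ↦
      (fun i : InfinitePlace K ↦ if i = w₀ then (0 : ℝ) else u (.inl i))) := by
    rw [contDiff_pi]
    intro i
    by_cases h : i = w₀
    · simp only [h, if_true]; exact contDiff_const
    · simp only [h, if_false]; exact contDiff_apply ℝ ℝ (Sum.inl i)
  have h2 := (contDiff_expMapBasis K).comp h1
  exact (contDiff_apply ℝ ℝ (Sum.inl w₀)).mul (contDiff_pi.mp h2 w)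

theorem contDiff_coneParam (s : {w : InfinitePlace K // IsReal w} → ℝ) :
    ContDiff ℝ 1 (coneParam K s) := by
  refine ContDiff.prodMk ?_ ?_
  · rw [contDiff_pi]
    exact fun w ↦ contDiff_const.mul (contDiff_radialPart K w)
  · rw [contDiff_pi]
    intro w
    refine ((Complex.ofRealCLM.contDiff).comp (contDiff_radialPart K w)).mul (ContDiff.comp
      (Complex.contDiff_exp (𝕜 := ℝ)) ?_)
    refine ContDiff.mul ((Complex.ofRealCLM.contDiff).comp ?_) contDiff_const
    exact contDiff_const.mul (contDiff_apply ℝ ℝ _)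

theorem card_places : Fintype.card (InfinitePlace K ⊕ {w : InfinitePlace K // IsComplex w}) =
    Module.finrank ℚ K := by
  rw [Fintype.card_sum, card_eq_nrRealPlaces_add_nrComplexPlaces,
    ← card_add_two_mul_card_eq_rank]
  rw [nrComplexPlaces]
  ring

theorem boxDimLE_image_coneParam (s : {w : InfinitePlace K // IsReal w} → ℝ)
    (i : InfinitePlace K ⊕ {w : InfinitePlace K // IsComplex w}) (b : ℝ) :
    BoxDimLE (Module.finrank ℚ K - 1)
      (coneParam K s '' {u | (∀ j, u j ∈ Icc (0 : ℝ) 1) ∧ u i = b}) := by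
  obtain ⟨L, hL⟩ := ((contDiff_coneParam K s).contDiffOn (s := Icc 0 1)).exists_lipschitzOnWith
    one_ne_zero (convex_Icc _ _) isCompact_Icc
  rw [← card_places K]
  refine (boxDimLE_facet i b).image (L := L) (hL.mono ?_)
  rintro u ⟨hu, -⟩
  exact ⟨fun j ↦ (hu j).1, fun j ↦ (hu j).2⟩

/-- The elements of the mixed space with the signs `s` at the real places. -/
def signSet (s : {w : InfinitePlace K // IsReal w} → ℝ) : Set (mixedSpace K) :=
  {x | ∀ w, 0 < s w * x.1 w}

theorem exists_coneParam_eq {x : mixedSpace K} {c : ℝ} {y : realSpace K}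
    (hx : normAtAllPlaces x =
      c • (expMapBasis (fun i ↦ if i = w₀ then 0 else y i) : realSpace K)) :
    ∃ s : {w : InfinitePlace K // IsReal w} → SignType,
    ∃ u, (u (.inl w₀) = c ∧ (∀ w, w ≠ w₀ → u (.inl w) = y w) ∧ (∀ w, u (.inr w) ∈ Icc (0 : ℝ) 1)) ∧
      coneParam K (fun w ↦ s w) u = x := by
  have harg : ∀ z : ℂ, ∃ θ ∈ Icc (0 : ℝ) 1,
      z = (‖z‖ : ℂ) * Complex.exp ((2 * Real.pi * θ : ℝ) * Complex.I) := by
    intro z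
    have h := Complex.norm_mul_exp_arg_mul_I z
    have hpi := Real.pi_pos
    by_cases h0 : 0 ≤ z.arg
    · refine ⟨z.arg / (2 * Real.pi), ⟨by positivity, ?_⟩, ?_⟩
      · rw [div_le_one (by positivity)]; linarith [Complex.arg_le_pi z]
      · rw [mul_div_cancel₀ _ (by positivity), h]
    · refine ⟨z.arg / (2 * Real.pi) + 1, ⟨?_, ?_⟩, ?_⟩
      · have : -1 ≤ z.arg / (2 * Real.pi) := by
          rw [le_div_iff₀ (by positivity)]; linarith [Complex.neg_pi_lt_arg z]
        linarith
      · have : z.arg / (2 * Real.pi) ≤ 0 := div_nonpos_of_nonpos_of_nonneg (by linarith) (by positivity)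
        linarith
      · rw [mul_add, mul_div_cancel₀ _ (by positivity)]
        push_cast
        rw [add_mul, Complex.exp_add, mul_one, Complex.exp_two_pi_mul_I, mul_one, h]
  choose θ hθ hθ' using harg
  refine ⟨fun w ↦ SignType.sign (x.1 w),
    Sum.elim (fun w ↦ if w = w₀ then c else y w) (fun w ↦ θ (x.2 w)), ⟨by simp, ?_, ?_⟩, ?_⟩
  · intro w hw; simp [hw]
  · intro w; exact hθ _
  have hy : (fun i : InfinitePlace K ↦ if i = w₀ then (0 : ℝ) else
      Sum.elim (fun w ↦ if w = w₀ then c else y w)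
        (fun w : {w : InfinitePlace K // IsComplex w} ↦ θ (x.2 w)) (.inl i))
      = fun i ↦ if i = w₀ then 0 else y i := by
    ext i; by_cases h : i = w₀ <;> simp [h]
  have hx' : ∀ w, c * (expMapBasis (fun i ↦ if i = w₀ then 0 else y i) : realSpace K) w
      = normAtPlace w x := fun w ↦ (congrFun hx w).symm
  unfold coneParam
  rw [hy]
  refine Prod.ext (funext fun w ↦ ?_) (funext fun w ↦ ?_)
  · simp only [Sum.elim_inl, if_true]
    rw [hx', normAtPlace_apply_of_isReal w.2, Real.norm_eq_abs, sign_mul_abs]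
  · simp only [Sum.elim_inl, Sum.elim_inr, if_true]
    rw [hx', normAtPlace_apply_of_isComplex w.2]
    exact (hθ' _).symm

theorem frontier_normLeOne_subset :
    frontier (normLeOne K) ⊆ ⋃ s : {w : InfinitePlace K // IsReal w} → SignType,
      ⋃ i : InfinitePlace K, ⋃ b : Bool, coneParam K (fun w ↦ s w) ''
        {u | (∀ j, u j ∈ Icc (0 : ℝ) 1) ∧ u (.inl i) = if b then 1 else 0} := by
  rintro x ⟨hx, hx'⟩
  obtain ⟨c, hc, _, ⟨y, hy, rfl⟩, hxy⟩ := closure_normLeOne_subset K hx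
  rw [Set.mem_univ_pi] at hy
  have hy0 : (fun i ↦ if i = w₀ then 0 else y i) = y := by
    ext i
    have := hy i
    by_cases h : i = w₀
    · subst h; simpa [eq_comm] using this
    · simp [h]
  obtain ⟨s, u, ⟨hu0, hu1, hu2⟩, hux⟩ := exists_coneParam_eq K (x := x) (c := c) (y := y) (by
    rw [hy0]; exact hxy.symm)
  have hcube : ∀ j, u j ∈ Icc (0 : ℝ) 1 := by
    rintro (w | w)
    · by_cases h : w = w₀
      · rw [h, hu0]; exact hc
      · rw [hu1 w h]; simpa [h] using hy w
    · exact hu2 w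
  suffices h : ∃ i : InfinitePlace K, u (.inl i) = 0 ∨ u (.inl i) = 1 by
    obtain ⟨i, h | h⟩ := h
    · simp only [mem_iUnion]
      exact ⟨s, i, false, u, ⟨hcube, by simpa using h⟩, hux⟩
    · simp only [mem_iUnion]
      exact ⟨s, i, true, u, ⟨hcube, by simpa using h⟩, hux⟩
  by_contra! h
  have hoo : ∀ i : InfinitePlace K, u (.inl i) ∈ Ioo (0 : ℝ) 1 := fun i ↦
    ⟨lt_of_le_of_ne (hcube _).1 (h i).1.symm, lt_of_le_of_ne (hcube _).2 (h i).2⟩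
  refine hx' (subset_interior_normLeOne K ?_)
  have hc0 : c ∈ Ioo (0 : ℝ) 1 := hu0 ▸ hoo w₀
  refine ⟨fun i ↦ if i = w₀ then Real.log c else y i, ?_, ?_⟩
  · rw [interior_paramSet, Set.mem_univ_pi]
    intro w
    by_cases hw : w = w₀
    · simpa [hw] using Real.log_neg hc0.1 hc0.2
    · simpa [hw, ← hu1 w hw] using hoo w
  · rw [← hxy, expMapBasis_apply'']
    simp only [if_true, Real.exp_log hc0.1]
    congr 2
    ext i
    by_cases hi : i = w₀
    · simp [hi, ← congrFun hy0 w₀]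
    · simp [hi]

theorem isOpen_signSet (s : {w : InfinitePlace K // IsReal w} → ℝ) : IsOpen (signSet K s) := by
  have : signSet K s = ⋂ w, {x : mixedSpace K | 0 < s w * x.1 w} := by
    ext; simp [signSet]
  rw [this]
  exact isOpen_iInter_of_finite fun w ↦ isOpen_lt continuous_const (by fun_prop)

theorem frontier_signSet_subset (s : {w : InfinitePlace K // IsReal w} → ℝ) (hs : ∀ w, s w ≠ 0) :
    frontier (signSet K s) ⊆ {x | ∃ w, x.1 w = 0} := by
  intro x hx
  rw [(isOpen_signSet K s).frontier_eq] at hx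
  by_contra h
  refine hx.2 fun w ↦ ?_
  have hcl : closure (signSet K s) ⊆ {x : mixedSpace K | 0 ≤ s w * x.1 w} :=
    closure_minimal (fun y hy ↦ (hy w).le) (isClosed_le continuous_const (by fun_prop))
  exact lt_of_le_of_ne (hcl hx.1) (mul_ne_zero (hs w) fun h0 ↦ h ⟨w, h0⟩).symm

theorem boxDimLE_frontier (s : {w : InfinitePlace K // IsReal w} → ℝ) (hs : ∀ w, s w ≠ 0) :
    BoxDimLE (Module.finrank ℚ K - 1) (frontier (normLeOne K ∩ signSet K s)) := by
  have h1 : BoxDimLE (Module.finrank ℚ K - 1) (frontier (normLeOne K)) := by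
    refine BoxDimLE.mono ?_ (frontier_normLeOne_subset K)
    exact .iUnion fun s ↦ .iUnion fun i ↦ .iUnion fun b ↦ boxDimLE_image_coneParam K _ _ _
  refine (h1.union (boxDimLE_singleton _ 0)).mono ?_
  refine (frontier_inter_subset _ _).trans ?_
  refine union_subset_union inter_subset_left ?_
  rintro x ⟨hx, hx'⟩
  obtain ⟨w, hw⟩ := frontier_signSet_subset K s hs hx'
  obtain ⟨c, hc, _, ⟨y, hy, rfl⟩, hxy⟩ := closure_normLeOne_subset K hx
  have h2 : ∀ v, c * (expMapBasis y : realSpace K) v = normAtPlace v x := fun v ↦ congrFun hxy v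
  have h0 : c = 0 := by
    have := h2 w
    rw [normAtPlace_apply_of_isReal w.2, hw, norm_zero] at this
    exact (mul_eq_zero.mp this).resolve_right (expMapBasis_pos y w).ne'
  rw [mem_singleton_iff, ← forall_normAtPlace_eq_zero_iff]
  intro v
  rw [← h2, h0, zero_mul]

end Frontier

open MeasureTheory Set NumberField.InfinitePlace NumberField.mixedEmbedding
  NumberField.mixedEmbedding.fundamentalCone NumberField.Units.dirichletUnitTheorem
open Filter Asymptotics

section CosetCount

variable (K : Type*) [Field K] [NumberField K]

/-- The coordinates in the lattice basis. -/
noncomputable def coords :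
    mixedSpace K ≃L[ℝ] (Module.Free.ChooseBasisIndex ℤ (𝓞 K) → ℝ) :=
  (latticeBasis K).equivFun.toContinuousLinearEquiv

theorem coords_mixedEmbedding (α : 𝓞 K) (i : Module.Free.ChooseBasisIndex ℤ (𝓞 K)) :
    coords K (mixedEmbedding K α) i = ((RingOfIntegers.basis K).repr α i : ℤ) := by
  have h : mixedEmbedding K α =
      ∑ i, ((RingOfIntegers.basis K).repr α i : ℝ) • latticeBasis K i := by
    conv_lhs => rw [← (RingOfIntegers.basis K).sum_repr α]
    change mixedEmbedding K (algebraMap (𝓞 K) K _) = _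
    rw [map_sum, map_sum]
    refine Finset.sum_congr rfl fun i _ ↦ ?_
    rw [latticeBasis_apply, integralBasis_apply, zsmul_eq_mul, map_mul, map_mul, map_intCast,
      map_intCast, ← zsmul_eq_mul, Int.cast_smul_eq_zsmul]
  rw [h]
  have := congrFun ((latticeBasis K).equivFun_symm_apply
    (fun i ↦ ((RingOfIntegers.basis K).repr α i : ℝ)) ▸
    (latticeBasis K).equivFun.apply_symm_apply
      (fun i ↦ ((RingOfIntegers.basis K).repr α i : ℝ))) i
  exact this

theorem card_index :
    Fintype.card (Module.Free.ChooseBasisIndex ℤ (𝓞 K)) = Module.finrank ℚ K := by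
  rw [← Module.finrank_eq_card_basis (RingOfIntegers.basis K), RingOfIntegers.rank]

open Pointwise in
theorem smul_normLeOne_inter_signSet (s : {w : InfinitePlace K // IsReal w} → ℝ) {t : ℝ}
    (ht : 0 < t) : t • (normLeOne K ∩ signSet K s) =
      {x | x ∈ fundamentalCone K ∧ x ∈ signSet K s ∧
        mixedEmbedding.norm x ≤ t ^ Module.finrank ℚ K} := by
  ext x
  rw [mem_smul_set_iff_inv_smul_mem₀ ht.ne']
  have h1 : t⁻¹ • x ∈ signSet K s ↔ x ∈ signSet K s := by
    refine forall_congr' fun w ↦ ?_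
    rw [show s w * (t⁻¹ • x).1 w = t⁻¹ * (s w * x.1 w) by simp; ring]
    exact mul_pos_iff_of_pos_left (inv_pos.mpr ht)
  have h2 : mixedEmbedding.norm (t⁻¹ • x) ≤ 1 ↔
      mixedEmbedding.norm x ≤ t ^ Module.finrank ℚ K := by
    rw [mixedEmbedding.norm_smul, abs_of_pos (inv_pos.mpr ht), inv_pow,
      inv_mul_le_iff₀ (by positivity), mul_one]
  simp only [mem_inter_iff, mem_ofPred_eq, h1, h2, smul_mem_iff_mem (inv_ne_zero ht.ne')]
  tauto

/-- The elements of the coset `β + Q 𝓞 K` in the fundamental cone, of norm at most `X` and with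
signs `s` at the real places. -/
def cosetSet (Q : ℕ) (β : 𝓞 K) (s : {w : InfinitePlace K // IsReal w} → ℝ) (X : ℝ) :
    Set (𝓞 K) :=
  {α | mixedEmbedding K α ∈ fundamentalCone K ∧ mixedEmbedding K α ∈ signSet K s ∧
    mixedEmbedding.norm (mixedEmbedding K α) ≤ X ∧ ∃ γ, α = β + Q * γ}

open Pointwise in
theorem exists_cosetSet_asymp {Q : ℕ} (hQ : 0 < Q) (β : 𝓞 K)
    {s : {w : InfinitePlace K // IsReal w} → ℝ} (hs : ∀ w, s w ≠ 0) :
    (∀ X, (cosetSet K Q β s X).Finite) ∧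
    ∃ c : ℝ, (fun X : ℝ ↦ ((cosetSet K Q β s X).ncard : ℝ) - c * X) =O[atTop]
      fun X : ℝ ↦ X ^ (1 - 1 / (Module.finrank ℚ K : ℝ)) := by
  set n := Module.finrank ℚ K with hn
  have hn0 : 0 < n := Module.finrank_pos
  have hn0' : (0 : ℝ) < n := by exact_mod_cast hn0
  have hQ' : (0 : ℝ) < Q := by exact_mod_cast hQ
  set D := coords K '' (normLeOne K ∩ signSet K s) with hD
  obtain ⟨C, hC⟩ := exists_abs_ncard_sub_le (D := D)
    ((coords K).lipschitz.isBounded_image ((isBounded_normLeOne K).subset inter_subset_left))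
    (by
      rw [card_index, hD, ← ContinuousLinearEquiv.coe_toHomeomorph, ← Homeomorph.image_frontier]
      exact (boxDimLE_frontier K s hs).image ((coords K).lipschitz.lipschitzOnWith))
  set v : Module.Free.ChooseBasisIndex ℤ (𝓞 K) → ℝ := fun i ↦
    ((RingOfIntegers.basis K).repr β i : ℝ) / Q with hv
  have hcount : ∀ t : ℝ, 0 < t → cosetSet K Q β s ((Q * t) ^ n) =
      (fun z : Module.Free.ChooseBasisIndex ℤ (𝓞 K) → ℤ ↦
        β + Q * (RingOfIntegers.basis K).equivFun.symm z) ''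
      {z | (fun i ↦ (z i : ℝ) + v i) ∈ t • D} := by
    intro t ht
    have key : ∀ z : Module.Free.ChooseBasisIndex ℤ (𝓞 K) → ℤ,
        (fun i ↦ (z i : ℝ) + v i) ∈ t • D ↔
        mixedEmbedding K ((β + Q * (RingOfIntegers.basis K).equivFun.symm z : 𝓞 K) : K) ∈
          (Q * t) • (normLeOne K ∩ signSet K s) := by
      intro z
      set α : 𝓞 K := β + Q * (RingOfIntegers.basis K).equivFun.symm z
      have h1 : coords K (mixedEmbedding K α) = (Q : ℝ) • fun i ↦ (z i : ℝ) + v i := by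
        ext i
        rw [coords_mixedEmbedding]
        have : (RingOfIntegers.basis K).repr α i = (RingOfIntegers.basis K).repr β i + Q * z i := by
          have h3 : (RingOfIntegers.basis K).repr ((RingOfIntegers.basis K).equivFun.symm z) i
              = z i := congrFun ((RingOfIntegers.basis K).equivFun.apply_symm_apply z) i
          simp only [α]
          rw [map_add, ← nsmul_eq_mul, map_nsmul, Finsupp.add_apply, Finsupp.smul_apply, h3,
            nsmul_eq_mul]
        rw [this]
        simp only [hv, Pi.smul_apply, smul_eq_mul]
        push_cast
        field_simp
        ring
      have h2 : (fun i ↦ (z i : ℝ) + v i) = (Q : ℝ)⁻¹ • coords K (mixedEmbedding K α) := by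
        rw [h1, smul_smul, inv_mul_cancel₀ hQ'.ne', one_smul]
      rw [h2, mem_smul_set_iff_inv_smul_mem₀ ht.ne', mem_smul_set_iff_inv_smul_mem₀ (by positivity),
        smul_smul, ← map_smul, hD, (coords K).injective.mem_set_image, mul_inv_rev]
    ext α
    simp only [cosetSet, mem_image, mem_ofPred_eq]
    rw [hn]
    constructor
    · rintro ⟨h1, h2, h3, γ, rfl⟩
      refine ⟨(RingOfIntegers.basis K).equivFun γ, ?_, by
        rw [LinearEquiv.symm_apply_apply]⟩
      rw [key, smul_normLeOne_inter_signSet K s (by positivity), LinearEquiv.symm_apply_apply]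
      exact ⟨h1, h2, h3⟩
    · rintro ⟨z, hz, rfl⟩
      rw [key, smul_normLeOne_inter_signSet K s (by positivity)] at hz
      exact ⟨hz.1, hz.2.1, hz.2.2, _, rfl⟩
  have hinj : Function.Injective (fun z : Module.Free.ChooseBasisIndex ℤ (𝓞 K) → ℤ ↦
        β + Q * (RingOfIntegers.basis K).equivFun.symm z) := by
    intro z z' h
    have h' := add_left_cancel h
    have hQ0 : (Q : 𝓞 K) ≠ 0 := by exact_mod_cast hQ.ne'
    exact (RingOfIntegers.basis K).equivFun.symm.injective (mul_left_cancel₀ hQ0 h')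
  have hpow : ∀ X : ℝ, (Q : ℝ) ^ n ≤ X → ∃ t : ℝ, 1 ≤ t ∧ X = (Q * t) ^ n ∧ t ≤ X ^ (1 / (n : ℝ)) := by
    intro X hX
    have hX0 : 0 ≤ X := le_trans (by positivity) hX
    have h0 : (Q : ℝ) ≤ X ^ (1 / (n : ℝ)) := by
      rw [one_div, Real.le_rpow_inv_iff_of_pos hQ'.le hX0 hn0', Real.rpow_natCast]
      exact hX
    refine ⟨X ^ (1 / (n : ℝ)) / Q, ?_, ?_, ?_⟩
    · rwa [le_div_iff₀ hQ', one_mul]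
    · rw [mul_div_cancel₀ _ hQ'.ne', one_div, Real.rpow_inv_natCast_pow hX0 hn0.ne']
    · exact div_le_self (by positivity) (by exact_mod_cast hQ)
  refine ⟨fun X ↦ ?_, volume.real D / Q ^ n, ?_⟩
  · obtain ⟨t, ht, hX, -⟩ := hpow (max X (Q ^ n)) (le_max_right _ _)
    have : (cosetSet K Q β s ((Q * t) ^ n)).Finite := by
      rw [hcount t (by linarith)]
      exact (hC v t ht).1.image _
    refine this.subset ?_
    rintro α ⟨h1, h2, h3, h4⟩
    exact ⟨h1, h2, h3.trans (hX ▸ le_max_left _ _), h4⟩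
  · refine IsBigO.of_bound |C| ?_
    filter_upwards [eventually_ge_atTop ((Q : ℝ) ^ n)] with X hX
    obtain ⟨t, ht, hX', htX⟩ := hpow X hX
    have hX0 : 0 < X := lt_of_lt_of_le (by positivity) hX
    obtain ⟨-, h⟩ := hC v t ht
    rw [← ncard_image_of_injective _ hinj, ← hcount t (by linarith), ← hX', card_index] at h
    have h1 : volume.real D / Q ^ n * X = volume.real D * t ^ n := by
      rw [hX', mul_pow]; field_simp
    rw [h1, Real.norm_eq_abs]
    refine h.trans ?_
    rw [Real.norm_of_nonneg (by positivity)]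
    refine mul_le_mul (le_abs_self C) ?_ (by positivity) (abs_nonneg _)
    calc t ^ (n - 1) ≤ (X ^ (1 / (n : ℝ))) ^ (n - 1) := by gcongr
      _ = X ^ (1 - 1 / (n : ℝ)) := by
        rw [← Real.rpow_natCast, ← Real.rpow_mul hX0.le, Nat.cast_sub hn0]
        congr 1
        field_simp
        simp

end CosetCount

open Set NumberField.InfinitePlace NumberField.mixedEmbedding
  NumberField.mixedEmbedding.fundamentalCone NumberField.Units.dirichletUnitTheorem
open Filter Asymptotics

section Norm

variable (K : Type*) [Field K] [NumberField K]

theorem norm_pos_of_real_pos {x : K} (hx0 : x ≠ 0)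
    (hx : ∀ w : {w : InfinitePlace K // IsReal w}, 0 < (mixedEmbedding K x).1 w) :
    0 < Algebra.norm ℚ x := by
  have hfib : ∀ w : InfinitePlace K, ∃ r : ℝ, 0 < r ∧
      ∏ φ : K →+* ℂ with InfinitePlace.mk φ = w, φ x = (r : ℂ) := by
    intro w
    have hf : (Finset.univ.filter fun φ : K →+* ℂ ↦ InfinitePlace.mk φ = w) =
        {w.embedding, ComplexEmbedding.conjugate w.embedding} := by
      ext φ
      rw [Finset.mem_filter, Finset.mem_insert, Finset.mem_singleton]
      conv_lhs => rw [← mk_embedding w, mk_eq_iff, ComplexEmbedding.conjugate,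
        star_involutive.eq_iff]
      simp [ComplexEmbedding.conjugate]
    rw [hf]
    by_cases hw : IsReal w
    · rw [ComplexEmbedding.isReal_iff.mp (isReal_iff.mp hw), Finset.pair_eq_singleton,
        Finset.prod_singleton]
      refine ⟨embedding_of_isReal hw x, ?_, (embedding_of_isReal_apply hw x).symm⟩
      simpa using hx ⟨w, hw⟩
    · refine ⟨Complex.normSq (w.embedding x), ?_, ?_⟩
      · rw [Complex.normSq_pos]
        simpa using hx0
      · rw [Finset.prod_pair, ComplexEmbedding.conjugate_coe_eq, Complex.mul_conj]
        rwa [Ne, eq_comm, ← ComplexEmbedding.isReal_iff, ← isReal_iff]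
  choose r hr hr' using hfib
  have h : (Algebra.norm ℚ x : ℂ) = ((∏ w, r w : ℝ) : ℂ) := by
    have h1 := Algebra.norm_eq_prod_embeddings ℚ ℂ x
    rw [← Fintype.prod_equiv (RingHom.equivRatAlgHom K ℂ) (fun f => f x)
      (fun φ => φ x) fun _ => by simp [RingHom.equivRatAlgHom_apply],
      ← Finset.prod_fiberwise Finset.univ InfinitePlace.mk (fun φ : K →+* ℂ => φ x),
      Finset.prod_congr rfl fun w _ ↦ hr' w] at h1
    rw [Complex.ofReal_prod, ← h1, eq_ratCast]
  have h2 : ((Algebra.norm ℚ x : ℝ)) = ∏ w, r w := by exact_mod_cast h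
  have h3 : (0 : ℝ) < (Algebra.norm ℚ x : ℝ) := by
    rw [h2]; exact Finset.prod_pos fun w _ ↦ hr w
  exact_mod_cast h3

theorem norm_add_mul_cast (Q : ℕ) (β γ : 𝓞 K) :
    ((Algebra.norm ℤ (β + Q * γ) : ℤ) : ZMod Q) = (Algebra.norm ℤ β : ℤ) := by
  rw [Algebra.norm_eq_matrix_det (RingOfIntegers.basis K),
    Algebra.norm_eq_matrix_det (RingOfIntegers.basis K)]
  change Int.castRingHom (ZMod Q) _ = Int.castRingHom (ZMod Q) _
  rw [RingHom.map_det, RingHom.map_det]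
  congr 1
  rw [map_add, map_mul, map_natCast]
  ext i j
  rw [← nsmul_eq_mul]
  simp only [RingHom.mapMatrix_apply, Matrix.map_apply, Matrix.add_apply, Matrix.smul_apply,
    map_add, map_nsmul]
  simp

/-- The norm of an algebraic integer in absolute value, modulo `Q`, depends only on its class
modulo `Q` and its signs at the real places. -/
theorem natAbs_norm_cast_eq {Q : ℕ} {α α' : 𝓞 K} (hα : α ≠ 0) (hα' : α' ≠ 0)
    (hs : ∀ w, 0 < (mixedEmbedding K α).1 w * (mixedEmbedding K α').1 w)
    (h : ∃ γ, α' = α + Q * γ) :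
    ((Algebra.norm ℤ α).natAbs : ZMod Q) = ((Algebra.norm ℤ α').natAbs : ZMod Q) := by
  obtain ⟨γ, rfl⟩ := h
  have hm := norm_add_mul_cast K Q α γ
  set α' := α + Q * γ
  have h1 : 0 < Algebra.norm ℤ α * Algebra.norm ℤ α' := by
    rw [← map_mul]
    have := norm_pos_of_real_pos K (x := ((α * α' : 𝓞 K) : K)) (by
      simpa using ⟨hα, hα'⟩) (by
      intro w
      simpa using hs w)
    rw [← Algebra.coe_norm_int] at this
    exact_mod_cast this
  have h2 : ∀ z : ℤ, 0 ≤ z → ((z.natAbs : ℕ) : ZMod Q) = (z : ZMod Q) := by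
    intro z hz
    conv_rhs => rw [← Int.natAbs_of_nonneg hz]
    simp
  have h3 : ∀ z : ℤ, z ≤ 0 → ((z.natAbs : ℕ) : ZMod Q) = -(z : ZMod Q) := by
    intro z hz
    rw [← Int.natAbs_neg, h2 _ (by omega)]; simp
  rcases pos_and_pos_or_neg_and_neg_of_mul_pos h1 with ⟨h4, h5⟩ | ⟨h4, h5⟩
  · rw [h2 _ h4.le, h2 _ h5.le, hm]
  · rw [h3 _ h4.le, h3 _ h5.le, hm]

end Norm

open Set NumberField.InfinitePlace NumberField.mixedEmbedding
  NumberField.mixedEmbedding.fundamentalCone NumberField.Units.dirichletUnitTheorem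
open Filter Asymptotics NumberField.Units
open scoped nonZeroDivisors

section IdealCount

variable (K : Type*) [Field K] [NumberField K]

/-- The number of ideals of norm `k`. -/
noncomputable def idealCount (k : ℕ) : ℕ := Nat.card {I : Ideal (𝓞 K) // absNorm I = k}

theorem norm_mixedEmbedding_eq_natAbs (α : 𝓞 K) :
    mixedEmbedding.norm (mixedEmbedding K α) = ((Algebra.norm ℤ α).natAbs : ℝ) := by
  rw [mixedEmbedding.norm_eq_norm, ← Algebra.coe_norm_int]
  simp [Nat.cast_natAbs]

/-- The elements of `J` in the fundamental cone of norm `k * N J`. -/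
def coneElements (J : (Ideal (𝓞 K))⁰) (k : ℕ) : Set (𝓞 K) :=
  {α | mixedEmbedding K α ∈ fundamentalCone K ∧ α ∈ J.1 ∧
    (Algebra.norm ℤ α).natAbs = k * absNorm J.1}

theorem card_class_mul_torsionOrder {C : ClassGroup (𝓞 K)} {J : (Ideal (𝓞 K))⁰}
    (hJ : ClassGroup.mk0 J = C⁻¹) (k : ℕ) :
    Nat.card {I : (Ideal (𝓞 K))⁰ // absNorm I.1 = k ∧ ClassGroup.mk0 I = C} * torsionOrder K =
      (coneElements K J k).ncard := by
  have h1 : Nat.card {I : (Ideal (𝓞 K))⁰ // absNorm I.1 = k ∧ ClassGroup.mk0 I = C} =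
      Nat.card {I : (Ideal (𝓞 K))⁰ // (J : Ideal (𝓞 K)) ∣ I ∧ Submodule.IsPrincipal (I : Ideal (𝓞 K)) ∧
        absNorm (I : Ideal (𝓞 K)) = k * absNorm J.1} := by
    simp_rw [← nonZeroDivisors_dvd_iff_dvd_coe]
    refine Nat.card_congr ?_
    refine ((Equiv.dvd J).subtypeEquiv fun I ↦ ?_).trans
      (Equiv.subtypeSubtypeEquivSubtypeInter (fun I : (Ideal (𝓞 K))⁰ ↦ J ∣ I) _)
    rw [← ClassGroup.mk0_eq_one_iff (SetLike.coe_mem _)]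
    simp_rw [Equiv.dvd_apply, Submonoid.coe_mul, ← Submonoid.mul_def, _root_.map_mul, hJ,
      inv_mul_eq_one, mul_comm k, eq_comm, and_comm, and_congr_left_iff]
    exact fun _ ↦ ⟨fun h ↦ by rw [h], fun h ↦
      Nat.eq_of_mul_eq_mul_left (absNorm_pos_of_nonZeroDivisors J) h⟩
  rw [h1, torsionOrder, ← Nat.card_prod, ← Nat.card_congr (idealSetEquivNorm K J _),
    ← Nat.card_coe_set_eq]
  refine Nat.card_congr (Equiv.symm (Equiv.ofBijective (fun α : coneElements K J k ↦
    (⟨⟨mixedEmbedding K α.1, mem_idealSet.mpr ⟨α.2.1, α.1, α.2.2.1, rfl⟩⟩, by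
      rw [norm_mixedEmbedding_eq_natAbs, α.2.2.2]⟩ :
      {a : idealSet K J // mixedEmbedding.norm (a : mixedSpace K) = (k * absNorm J.1 : ℕ)}))
    ⟨?_, ?_⟩))
  · intro α β h
    have h' := congrArg (fun a ↦ (a.1 : mixedSpace K)) h
    exact Subtype.ext (RingOfIntegers.ext ((mixedEmbedding_injective K) h'))
  · rintro ⟨⟨x, hx⟩, hx'⟩
    obtain ⟨h1, α, h2, rfl⟩ := mem_idealSet.mp hx
    refine ⟨⟨α, h1, h2, ?_⟩, rfl⟩
    have : mixedEmbedding.norm (mixedEmbedding K α) = (k * absNorm J.1 : ℕ) := hx'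
    rw [norm_mixedEmbedding_eq_natAbs] at this
    exact_mod_cast this

/-- The sign attached to a boolean. -/
def boolSign (b : Bool) : ℝ := if b then 1 else -1

/-- The class of an algebraic integer modulo `Q` and its signs at the real places. -/
noncomputable def rayClass (Q : ℕ) (α : 𝓞 K) :
    (𝓞 K ⧸ span {(Q : 𝓞 K)}) × ({w : InfinitePlace K // IsReal w} → Bool) :=
  (Ideal.Quotient.mk _ α, fun w ↦ decide (0 < (mixedEmbedding K α).1 w))

theorem real_ne_zero_of_mem_cone {x : mixedSpace K} (hx : x ∈ fundamentalCone K)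
    (w : {w : InfinitePlace K // IsReal w}) : x.1 w ≠ 0 := by
  have := normAtPlace_pos_of_mem hx w.1
  rw [normAtPlace_apply_of_isReal w.2] at this
  exact norm_pos_iff.mp this

theorem cosetSet_eq (Q : ℕ) (b : 𝓞 K ⧸ span {(Q : 𝓞 K)})
    (s : {w : InfinitePlace K // IsReal w} → Bool) (X : ℝ) :
    cosetSet K Q b.out (fun w ↦ boolSign (s w)) X =
      {α : 𝓞 K | mixedEmbedding K α ∈ fundamentalCone K ∧
        mixedEmbedding.norm (mixedEmbedding K α) ≤ X ∧ rayClass K Q α = (b, s)} := by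
  ext α
  simp only [cosetSet, mem_ofPred_eq]
  refine and_congr_right fun hα ↦ ?_
  have h1 : mixedEmbedding K α ∈ signSet K (fun w ↦ boolSign (s w)) ↔
      (fun w ↦ decide (0 < (mixedEmbedding K α).1 w)) = s := by
    rw [funext_iff]
    refine forall_congr' fun w ↦ ?_
    have := real_ne_zero_of_mem_cone K hα w
    rcases h : s w with _ | _
    · simp only [boolSign, h, decide_eq_false_iff_not, not_lt, Bool.false_eq_true, if_false,
        neg_mul, one_mul, neg_pos]
      exact ⟨le_of_lt, fun h ↦ lt_of_le_of_ne h this⟩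
    · simp [boolSign, h]
  have h2 : (∃ γ, α = b.out + Q * γ) ↔ Ideal.Quotient.mk (span {(Q : 𝓞 K)}) α = b := by
    conv_rhs => rw [← Quotient.out_eq' b]
    change _ ↔ Ideal.Quotient.mk (span {(Q : 𝓞 K)}) α = Ideal.Quotient.mk _ b.out
    rw [Ideal.Quotient.eq, mem_span_singleton']
    constructor
    · rintro ⟨γ, h⟩; exact ⟨γ, by rw [eq_sub_iff_add_eq, eq_comm]; rw [h]; ring⟩
    · rintro ⟨γ, h⟩; exact ⟨γ, by rw [mul_comm, h]; ring⟩
  rw [h1, h2, rayClass, Prod.mk.injEq]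
  tauto

theorem dvd_natAbs_norm {J : (Ideal (𝓞 K))⁰} {α : 𝓞 K} (h : α ∈ J.1) :
    absNorm J.1 ∣ (Algebra.norm ℤ α).natAbs := by
  rw [← absNorm_span_singleton]
  exact absNorm_dvd_absNorm_of_le ((span_singleton_le_iff_mem _).mpr h)

theorem exists_coneElements_asymp (J : (Ideal (𝓞 K))⁰) (q : ℕ) [NeZero q] (a : ZMod q) :
    ∃ c : ℝ, (fun X : ℝ ↦ ∑ k ∈ Finset.Icc 1 ⌊X⌋₊ with ((k : ℕ) : ZMod q) = a,
        ((coneElements K J k).ncard : ℝ) - c * X) =O[atTop]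
      fun X : ℝ ↦ X ^ (1 - 1 / (Module.finrank ℚ K : ℝ)) := by
  set N := absNorm J.1
  have hN : 0 < N := absNorm_pos_of_nonZeroDivisors J
  have hNr : (0 : ℝ) < N := by exact_mod_cast hN
  set Q := q * N
  have hQ : 0 < Q := Nat.mul_pos (NeZero.pos q) hN
  have hfinQ : Finite (𝓞 K ⧸ span {(Q : 𝓞 K)}) := by
    refine Ideal.finiteQuotientOfFreeOfNeBot _ ?_
    rw [Ne, span_singleton_eq_bot]
    exact_mod_cast hQ.ne'
  have := Fintype.ofFinite (𝓞 K ⧸ span {(Q : 𝓞 K)})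
  have hs : ∀ s : {w : InfinitePlace K // IsReal w} → Bool, ∀ w, boolSign (s w) ≠ 0 := by
    intro s w; unfold boolSign; split_ifs <;> norm_num
  have hcos := fun p : (𝓞 K ⧸ span {(Q : 𝓞 K)}) × ({w : InfinitePlace K // IsReal w} → Bool) ↦
    exists_cosetSet_asymp K hQ p.1.out (hs p.2)
  choose hfin c hc using hcos
  let P : 𝓞 K → Prop := fun α ↦ α ∈ J.1 ∧
    ((Algebra.norm ℤ α).natAbs : ZMod Q) = ((a.val * N : ℕ) : ZMod Q)
  let W : (𝓞 K ⧸ span {(Q : 𝓞 K)}) × ({w : InfinitePlace K // IsReal w} → Bool) → Prop := fun p ↦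
    ∃ α : 𝓞 K, mixedEmbedding K α ∈ fundamentalCone K ∧ rayClass K Q α = p ∧ P α
  have hne : ∀ α : 𝓞 K, mixedEmbedding K α ∈ fundamentalCone K → α ≠ 0 := by
    rintro _ h rfl
    have := norm_pos_of_mem h
    simp at this
  have hP : ∀ α α' : 𝓞 K, mixedEmbedding K α ∈ fundamentalCone K →
      mixedEmbedding K α' ∈ fundamentalCone K → rayClass K Q α = rayClass K Q α' → P α → P α' := by
    rintro α α' hα hα' hcl ⟨hJ, h⟩
    rw [rayClass, rayClass, Prod.mk.injEq, eq_comm, Ideal.Quotient.eq, mem_span_singleton'] at hcl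
    obtain ⟨⟨γ, hγ⟩, hsg⟩ := hcl
    have hα'' : α' = α + Q * γ := by rw [mul_comm, hγ]; ring
    refine ⟨?_, ?_⟩
    · rw [hα'']
      refine J.1.add_mem hJ (J.1.mul_mem_right _ ?_)
      have : (N : 𝓞 K) ∈ J.1 := absNorm_mem J.1
      simp only [Q]
      rw [Nat.cast_mul]
      exact J.1.mul_mem_left _ this
    · rw [← h]
      refine (natAbs_norm_cast_eq K (hne _ hα) (hne _ hα') (fun w ↦ ?_) ⟨γ, hα''⟩).symm
      have h1 := congrFun hsg w
      have h2 := real_ne_zero_of_mem_cone K hα w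
      have h3 := real_ne_zero_of_mem_cone K hα' w
      simp only [decide_eq_decide] at h1
      rcases lt_or_gt_of_ne h2 with h4 | h4
      · refine mul_pos_of_neg_of_neg h4 ?_
        exact lt_of_le_of_ne (not_lt.mp (fun h5 ↦ by linarith [h1.mpr h5])) h3
      · exact mul_pos h4 (h1.mp h4)
  have hmain : ∀ X : ℝ, 0 ≤ X → ∑ k ∈ Finset.Icc 1 ⌊X⌋₊ with ((k : ℕ) : ZMod q) = a,
        (coneElements K J k).ncard =
      ∑ p, if W p then (cosetSet K Q p.1.out (fun w ↦ boolSign (p.2 w)) (X * N)).ncard else 0 := by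
    intro X hX
    have hTfin : {α : 𝓞 K | mixedEmbedding K α ∈ fundamentalCone K ∧
        mixedEmbedding.norm (mixedEmbedding K α) ≤ X * N}.Finite := by
      refine (Set.finite_iUnion fun p ↦ hfin p (X * N)).subset ?_
      rintro α ⟨h1, h2⟩
      refine mem_iUnion.mpr ⟨rayClass K Q α, ?_⟩
      rw [cosetSet_eq]
      exact ⟨h1, h2, rfl⟩
    set F := hTfin.toFinset
    have hF : ∀ α : 𝓞 K, α ∈ F ↔ mixedEmbedding K α ∈ fundamentalCone K ∧
        mixedEmbedding.norm (mixedEmbedding K α) ≤ X * N := fun α ↦ hTfin.mem_toFinset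
    have hpos : ∀ α ∈ F, 0 < (Algebra.norm ℤ α).natAbs := by
      intro α hα
      rw [Int.natAbs_pos, Ne, Algebra.norm_eq_zero_iff]
      exact hne α ((hF α).mp hα).1
    have hk : ∀ α ∈ F, α ∈ J.1 → ∃ k, 1 ≤ k ∧ k ≤ ⌊X⌋₊ ∧ (Algebra.norm ℤ α).natAbs = k * N := by
      intro α hα hJ
      obtain ⟨k, hk⟩ := dvd_natAbs_norm K hJ
      refine ⟨k, ?_, ?_, by rw [hk, mul_comm]⟩
      · have := hpos α hα
        rw [hk] at this
        exact Nat.pos_of_mul_pos_left this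
      · have h1 := ((hF α).mp hα).2
        rw [norm_mixedEmbedding_eq_natAbs, hk] at h1
        refine Nat.le_floor ?_
        push_cast at h1
        rw [mul_comm] at h1
        exact le_of_mul_le_mul_right h1 hNr
    have hcong : ∀ k : ℕ, ((k * N : ℕ) : ZMod Q) = ((a.val * N : ℕ) : ZMod Q) ↔
        (k : ZMod q) = a := by
      intro k
      conv_rhs => rw [← ZMod.natCast_zmod_val a]
      rw [ZMod.natCast_eq_natCast_iff, ZMod.natCast_eq_natCast_iff]
      exact ⟨fun h ↦ Nat.ModEq.mul_right_cancel' hN.ne' h, fun h ↦ Nat.ModEq.mul_right' N h⟩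
    have hleft : ∑ k ∈ Finset.Icc 1 ⌊X⌋₊ with ((k : ℕ) : ZMod q) = a,
        (coneElements K J k).ncard = (F.filter P).card := by
      rw [Finset.card_eq_sum_card_fiberwise (f := fun α ↦ (Algebra.norm ℤ α).natAbs / N)
        (t := (Finset.Icc 1 ⌊X⌋₊).filter fun k : ℕ ↦ (k : ZMod q) = a)]
      · refine Finset.sum_congr rfl fun k hk' ↦ ?_
        rw [← ncard_coe_finset]
        congr 1
        ext α
        simp only [Finset.mem_filter, Finset.mem_Icc] at hk'
        simp only [coneElements, mem_ofPred_eq, Finset.coe_filter, Finset.mem_filter, hF]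
        constructor
        · rintro ⟨h1, h2, h3⟩
          refine ⟨⟨⟨h1, ?_⟩, h2, ?_⟩, ?_⟩
          · rw [norm_mixedEmbedding_eq_natAbs, h3]
            push_cast
            gcongr
            exact (Nat.le_floor_iff hX).mp hk'.1.2
          · rw [h3, hcong]; exact hk'.2
          · rw [h3]; exact Nat.mul_div_cancel _ hN
        · rintro ⟨⟨⟨h1, h1'⟩, h2, h3⟩, h4⟩
          refine ⟨h1, h2, ?_⟩
          rw [← h4, Nat.div_mul_cancel (dvd_natAbs_norm K h2)]
      · intro α hα
        rw [Finset.mem_coe, Finset.mem_filter] at hα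
        obtain ⟨k, h1, h2, h3⟩ := hk α hα.1 hα.2.1
        rw [Finset.mem_coe, Finset.mem_filter, Finset.mem_Icc]
        beta_reduce
        rw [h3, Nat.mul_div_cancel _ hN]
        refine ⟨⟨h1, h2⟩, ?_⟩
        rw [← hcong, ← h3]
        exact hα.2.2
    rw [hleft, Finset.card_eq_sum_card_fiberwise (f := rayClass K Q) (t := Finset.univ)
      (fun _ _ ↦ Finset.mem_coe.mpr (Finset.mem_univ _))]
    refine Finset.sum_congr rfl fun p _ ↦ ?_
    split_ifs with hW
    · obtain ⟨α₀, h0, h0', h0''⟩ := hW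
      rw [← ncard_coe_finset, cosetSet_eq]
      congr 1
      ext α
      simp only [Finset.coe_filter, Finset.mem_filter, hF, mem_ofPred_eq]
      constructor
      · rintro ⟨⟨⟨h1, h2⟩, -⟩, h3⟩; exact ⟨h1, h2, h3⟩
      · rintro ⟨h1, h2, h3⟩; exact ⟨⟨⟨h1, h2⟩, hP α₀ α h0 h1 (by rw [h0', h3]) h0''⟩, h3⟩
    · rw [Finset.card_eq_zero, Finset.filter_eq_empty_iff]
      intro α hα hα'
      rw [Finset.mem_filter, hF] at hα
      exact hW ⟨α, hα.1.1, hα', hα.2⟩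
  refine ⟨∑ p, if W p then c p * N else 0, ?_⟩
  have hO : ∀ p, (fun X : ℝ ↦
      ((if W p then (cosetSet K Q p.1.out (fun w ↦ boolSign (p.2 w)) (X * N)).ncard else 0 : ℕ) : ℝ) -
      (if W p then c p * N else 0) * X) =O[atTop]
      fun X : ℝ ↦ X ^ (1 - 1 / (Module.finrank ℚ K : ℝ)) := by
    intro p
    split_ifs with hW
    · have h1 := (hc p).comp_tendsto (k := fun X : ℝ ↦ X * N) (tendsto_id.atTop_mul_const hNr)
      refine (h1.congr_left fun X ↦ ?_).trans ?_
      · simp only [Function.comp_apply]; ring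
      · refine IsBigO.of_bound ((N : ℝ) ^ (1 - 1 / (Module.finrank ℚ K : ℝ))) ?_
        filter_upwards [eventually_ge_atTop 0] with X hX
        rw [Function.comp_apply, Real.mul_rpow hX hNr.le, norm_mul, mul_comm]
        gcongr
        rw [Real.norm_of_nonneg (by positivity)]
    · simpa using isBigO_zero _ _
  refine (IsBigO.fun_sum (s := Finset.univ) fun p _ ↦ hO p).congr' ?_ EventuallyEq.rfl
  filter_upwards [eventually_ge_atTop 0] with X hX
  rw [Finset.sum_sub_distrib, ← Finset.sum_mul, ← Nat.cast_sum, ← Nat.cast_sum, hmain X hX]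

end IdealCount

open Filter Asymptotics NumberField.Units
open scoped nonZeroDivisors

section IdealCount

variable (K : Type*) [Field K] [NumberField K]

instance finite_ideals_of_norm (k : ℕ) [NeZero k] :
    Finite {I : Ideal (𝓞 K) // absNorm I = k} :=
  (finite_setOfPred_absNorm_eq k).to_subtype

theorem idealCount_eq_sum_class (k : ℕ) (hk : 1 ≤ k) :
    idealCount K k = ∑ C : ClassGroup (𝓞 K),
      Nat.card {I : (Ideal (𝓞 K))⁰ // absNorm I.1 = k ∧ ClassGroup.mk0 I = C} := by
  have : NeZero k := ⟨by omega⟩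
  have hfin : Finite {I : (Ideal (𝓞 K))⁰ // absNorm I.1 = k} :=
    Finite.of_injective (β := {I : Ideal (𝓞 K) // absNorm I = k})
      (fun I ↦ ⟨I.1.1, I.2⟩) fun I J h ↦ by
        apply Subtype.ext; apply Subtype.ext
        exact congrArg (fun x ↦ x.1) h
  have h1 : idealCount K k = Nat.card {I : (Ideal (𝓞 K))⁰ // absNorm I.1 = k} := by
    refine Nat.card_congr (Equiv.ofBijective (fun I ↦ ⟨⟨I.1, ?_⟩, I.2⟩) ⟨?_, ?_⟩)
    · rw [mem_nonZeroDivisors_iff_ne_zero]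
      intro h
      have := I.2
      rw [h, Ideal.zero_eq_bot, absNorm_bot] at this
      omega
    · intro I J h
      exact Subtype.ext (congrArg (fun x ↦ x.1.1) h)
    · rintro ⟨⟨I, h⟩, h'⟩
      exact ⟨⟨I, h'⟩, rfl⟩
  have : ∀ C : ClassGroup (𝓞 K), Finite
      {I : {I : (Ideal (𝓞 K))⁰ // absNorm I.1 = k} // ClassGroup.mk0 I.1 = C} :=
    fun C ↦ Subtype.finite
  rw [h1, ← Nat.card_congr (Equiv.sigmaFiberEquiv
    fun I : {I : (Ideal (𝓞 K))⁰ // absNorm I.1 = k} ↦ ClassGroup.mk0 I.1), Nat.card_sigma]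
  refine Finset.sum_congr rfl fun C _ ↦ Nat.card_congr ?_
  exact Equiv.subtypeSubtypeEquivSubtypeInter (fun I : (Ideal (𝓞 K))⁰ ↦ absNorm I.1 = k)
    (fun I ↦ ClassGroup.mk0 I = C)

theorem exists_idealCount_asymp (q : ℕ) [NeZero q] (a : ZMod q) :
    ∃ κ : ℝ, (fun X : ℝ ↦ ∑ k ∈ Finset.Icc 1 ⌊X⌋₊ with ((k : ℕ) : ZMod q) = a,
        (idealCount K k : ℝ) - κ * X) =O[atTop]
      fun X : ℝ ↦ X ^ (1 - 1 / (Module.finrank ℚ K : ℝ)) := by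
  choose J hJ using fun C : ClassGroup (𝓞 K) ↦ ClassGroup.mk0_surjective C⁻¹
  choose c hc using fun C ↦ exists_coneElements_asymp K (J C) q a
  have ht : (torsionOrder K : ℝ) ≠ 0 := by exact_mod_cast torsionOrder_ne_zero K
  refine ⟨∑ C, c C / torsionOrder K, ?_⟩
  refine (IsBigO.fun_sum (s := Finset.univ)
    fun C _ ↦ (hc C).const_mul_left (torsionOrder K : ℝ)⁻¹).congr_left fun X ↦ ?_
  simp_rw [mul_sub]
  rw [Finset.sum_sub_distrib, Finset.sum_mul]
  congr 1
  · simp_rw [Finset.mul_sum]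
    rw [Finset.sum_comm]
    refine Finset.sum_congr rfl fun k hk ↦ ?_
    rw [Finset.mem_filter, Finset.mem_Icc] at hk
    rw [idealCount_eq_sum_class K k hk.1.1, Nat.cast_sum]
    refine Finset.sum_congr rfl fun C _ ↦ ?_
    rw [← card_class_mul_torsionOrder K (hJ C) k]
    push_cast
    field_simp
  · refine Finset.sum_congr rfl fun C _ ↦ by ring

end IdealCount

section Mangoldt

variable (K : Type*) [Field K] [NumberField K]

/-- The finite set of ideals of norm `k`. -/
noncomputable def idealsOfNorm (k : ℕ) : Finset (Ideal (𝓞 K)) :=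
  (finite_setOfPred_absNorm_eq (S := 𝓞 K) k).toFinset

theorem mem_idealsOfNorm {k : ℕ} {I : Ideal (𝓞 K)} : I ∈ idealsOfNorm K k ↔ absNorm I = k := by
  simp [idealsOfNorm]

theorem idealCount_eq_card (k : ℕ) : idealCount K k = (idealsOfNorm K k).card := by
  rw [idealCount, idealsOfNorm,
    ← Set.ncard_eq_toFinset_card _ (finite_setOfPred_absNorm_eq (S := 𝓞 K) k)]
  rfl

/-- The sum of the von Mangoldt function over the ideals of norm `k`. -/
noncomputable def normLambda (k : ℕ) : ℝ := ∑ I ∈ idealsOfNorm K k, LambdaK K I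

variable {K}

theorem LambdaK_prime_pow {p : Ideal (𝓞 K)} (hp : Prime p) (m : ℕ) :
    LambdaK K (p ^ (m + 1)) = Real.log (absNorm p) := by
  have hp' : p.IsPrime := isPrime_of_prime hp
  rw [LambdaK, if_pos ⟨p, m + 1, hp', hp.ne_zero, by omega, rfl⟩,
    Ideal.radical_pow _ (by omega), hp'.radical]

theorem isPrimeIdealPower_iff {I : Ideal (𝓞 K)} :
    IsPrimeIdealPower I ↔ ∃ p m, Prime p ∧ I = p ^ (m + 1) := by
  constructor
  · rintro ⟨p, m, h1, h2, h3, rfl⟩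
    obtain ⟨k, rfl⟩ := Nat.exists_eq_add_of_le' h3
    exact ⟨p, k, prime_of_isPrime h2 h1, rfl⟩
  · rintro ⟨p, m, h1, rfl⟩
    exact ⟨p, m + 1, isPrime_of_prime h1, h1.ne_zero, by omega, rfl⟩

theorem LambdaK_nonneg (I : Ideal (𝓞 K)) : 0 ≤ LambdaK K I := by
  rw [LambdaK]
  split_ifs
  · exact Real.log_natCast_nonneg _
  · rfl

theorem LambdaK_bot : LambdaK K ⊥ = 0 := by
  rw [LambdaK, if_neg]
  rw [isPrimeIdealPower_iff]
  rintro ⟨p, m, h1, h2⟩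
  exact pow_ne_zero (m + 1) h1.ne_zero h2.symm

theorem normLambda_nonneg (k : ℕ) : 0 ≤ normLambda K k :=
  Finset.sum_nonneg fun I _ ↦ LambdaK_nonneg I

/-- The divisors of a nonzero ideal. -/
noncomputable def idealDivisors (I : Ideal (𝓞 K)) (hI : I ≠ 0) : Finset (Ideal (𝓞 K)) :=
  letI := UniqueFactorizationMonoid.fintypeSubtypeDvd I hI
  Finset.univ.map (Function.Embedding.subtype fun J ↦ J ∣ I)

theorem mem_idealDivisors {I J : Ideal (𝓞 K)} (hI : I ≠ 0) : J ∈ idealDivisors I hI ↔ J ∣ I := by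
  simp [idealDivisors]

theorem sum_LambdaK_divisors (I : Ideal (𝓞 K)) (hI : I ≠ 0) :
    ∑ J ∈ idealDivisors I hI, LambdaK K J = Real.log (absNorm I) := by
  have key : ∀ I : Ideal (𝓞 K), ∀ hI : I ≠ 0,
      ∑ J ∈ idealDivisors I hI with IsPrimeIdealPower J, LambdaK K J = Real.log (absNorm I) := by
    intro I
    induction I using UniqueFactorizationMonoid.induction_on_prime with
    | h₁ => intro h; exact absurd rfl h
    | h₂ I hu =>
      intro hI
      rw [absNorm_eq_one_iff.mpr (isUnit_iff.mp hu), Nat.cast_one, Real.log_one,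
        Finset.sum_eq_zero]
      intro J hJ
      rw [Finset.mem_filter, mem_idealDivisors, isPrimeIdealPower_iff] at hJ
      obtain ⟨h1, p, m, hp, rfl⟩ := hJ
      exact absurd (isUnit_of_dvd_unit ((dvd_pow_self p (by omega)).trans h1) hu) hp.not_isUnit
    | h₃ I p hI hp ih =>
      intro hpI
      have hfin : FiniteMultiplicity p I := FiniteMultiplicity.of_prime_left hp hI
      set v := multiplicity p I with hv
      have hset : (idealDivisors (p * I) hpI).filter IsPrimeIdealPower =
          insert (p ^ (v + 1)) ((idealDivisors I hI).filter IsPrimeIdealPower) := by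
        ext J
        rw [Finset.mem_insert, Finset.mem_filter, Finset.mem_filter, mem_idealDivisors,
          mem_idealDivisors]
        constructor
        · rintro ⟨h1, h2⟩
          obtain ⟨p', m, hp', rfl⟩ := isPrimeIdealPower_iff.mp h2
          by_cases hpp : p' = p
          · subst hpp
            rw [pow_succ', mul_dvd_mul_iff_left hp.ne_zero, hfin.pow_dvd_iff_le_multiplicity] at h1
            rcases h1.lt_or_eq with h3 | h3
            · right
              exact ⟨hfin.pow_dvd_iff_le_multiplicity.mpr h3, h2⟩
            · left; rw [h3]
          · right
            refine ⟨hp'.pow_dvd_of_dvd_mul_left _ (fun h ↦ hpp ?_) h1, h2⟩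
            exact ((hp'.dvd_prime_iff_associated hp).mp h).eq_of_normalized (by simp) (by simp)
        · rintro (rfl | ⟨h1, h2⟩)
          · refine ⟨?_, isPrimeIdealPower_iff.mpr ⟨p, v, hp, rfl⟩⟩
            rw [pow_succ']
            exact mul_dvd_mul_left _ (pow_multiplicity_dvd p I)
          · exact ⟨h1.mul_left p, h2⟩
      rw [hset, Finset.sum_insert, ih hI, LambdaK_prime_pow hp, _root_.map_mul, Nat.cast_mul,
        Real.log_mul]
      · exact_mod_cast absNorm_eq_zero_iff.not.mpr hp.ne_zero
      · exact_mod_cast absNorm_eq_zero_iff.not.mpr hI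
      · rw [Finset.mem_filter, mem_idealDivisors, hfin.pow_dvd_iff_le_multiplicity]
        omega
  rw [← key I hI, Finset.sum_filter]
  refine Finset.sum_congr rfl fun J _ ↦ ?_
  split_ifs with h
  · rfl
  · rw [LambdaK, if_neg h]

theorem sum_divisorsAntidiagonal_normLambda (n : ℕ) (hn : n ≠ 0) :
    ∑ p ∈ n.divisorsAntidiagonal, normLambda K p.1 * (idealCount K p.2 : ℝ) =
      idealCount K n * Real.log n := by
  have hne : ∀ I ∈ idealsOfNorm K n, I ≠ 0 := by
    rintro I hI rfl
    rw [mem_idealsOfNorm, Ideal.zero_eq_bot, absNorm_bot] at hI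
    exact hn hI.symm
  have h1 : (idealCount K n : ℝ) * Real.log n =
      ∑ I ∈ (idealsOfNorm K n).attach, ∑ J ∈ idealDivisors I.1 (hne I.1 I.2), LambdaK K J := by
    simp_rw [sum_LambdaK_divisors]
    rw [Finset.sum_attach (idealsOfNorm K n) fun I ↦ Real.log (absNorm I),
      Finset.sum_congr rfl (g := fun _ ↦ Real.log n) fun I hI ↦ by rw [(mem_idealsOfNorm K).mp hI],
      Finset.sum_const, nsmul_eq_mul, idealCount_eq_card]
  have h2 : ∀ p : ℕ × ℕ, normLambda K p.1 * (idealCount K p.2 : ℝ) =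
      ∑ x ∈ idealsOfNorm K p.1 ×ˢ idealsOfNorm K p.2, LambdaK K x.1 := by
    intro p
    rw [Finset.sum_product, normLambda, idealCount_eq_card, Finset.sum_mul]
    refine Finset.sum_congr rfl fun I _ ↦ ?_
    simp [mul_comm]
  rw [h1, Finset.sum_congr rfl fun p _ ↦ h2 p, Finset.sum_sigma', Finset.sum_sigma']
  refine Finset.sum_bij (fun x hx ↦ ⟨⟨x.2.1 * x.2.2, ?_⟩, x.2.1⟩) ?_ ?_ ?_ ?_
  · rw [Finset.mem_sigma, Finset.mem_product, Nat.mem_divisorsAntidiagonal, mem_idealsOfNorm,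
      mem_idealsOfNorm] at hx
    rw [mem_idealsOfNorm, _root_.map_mul, hx.2.1, hx.2.2, hx.1.1]
  · intro x hx
    rw [Finset.mem_sigma, mem_idealDivisors]
    exact ⟨Finset.mem_attach _ _, dvd_mul_right _ _⟩
  · rintro ⟨⟨d, e⟩, I, J⟩ hx ⟨⟨d', e'⟩, I', J'⟩ hx' h
    simp only [Finset.mem_sigma, Finset.mem_product, Nat.mem_divisorsAntidiagonal,
      mem_idealsOfNorm] at hx hx'
    simp only [Sigma.mk.injEq, Subtype.mk.injEq, heq_eq_eq] at h
    obtain ⟨h3, rfl⟩ := h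
    have hI : I ≠ 0 := by
      rintro rfl
      rw [Ideal.zero_eq_bot, absNorm_bot] at hx
      have := hx.1.1
      rw [← hx.2.1, zero_mul] at this
      exact hn this.symm
    obtain rfl := mul_left_cancel₀ hI h3
    obtain ⟨-, h4, h5⟩ := hx
    obtain ⟨-, h6, h7⟩ := hx'
    subst h4 h5 h6 h7
    rfl
  · rintro ⟨⟨I, hI⟩, J⟩ hx
    rw [Finset.mem_sigma, mem_idealDivisors] at hx
    obtain ⟨L, hL⟩ := hx.2
    simp only at hL
    subst hL
    refine ⟨⟨(absNorm J, absNorm L), (J, L)⟩, ?_, rfl⟩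
    rw [Finset.mem_sigma, Finset.mem_product, Nat.mem_divisorsAntidiagonal, mem_idealsOfNorm,
      mem_idealsOfNorm]
    rw [mem_idealsOfNorm, _root_.map_mul] at hI
    exact ⟨⟨hI, hn⟩, rfl, rfl⟩
  · intro x hx
    rfl

theorem psiK_eq_sum (x : ℝ) (q : ℕ) (a : ZMod q) :
    psiK K x q a = ∑ k ∈ Finset.Icc 1 ⌊x⌋₊ with ((k : ℕ) : ZMod q) = a, normLambda K k := by
  simp_rw [normLambda]
  rw [psiK, ← tsum_subtype_eq_of_support_subset (f := fun I ↦
      if (absNorm I : ℝ) ≤ x ∧ ((absNorm I : ZMod q) = a) then LambdaK K I else 0)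
    (s := ((((Finset.Icc 1 ⌊x⌋₊).filter fun k : ℕ ↦ (k : ZMod q) = a).biUnion (idealsOfNorm K) :
      Finset (Ideal (𝓞 K))) : Set (Ideal (𝓞 K)))), Finset.tsum_subtype' (f := fun I ↦
      if (absNorm I : ℝ) ≤ x ∧ ((absNorm I : ZMod q) = a) then LambdaK K I else 0), Finset.sum_biUnion,
      Finset.sum_sigma', Finset.sum_sigma']
  · refine Finset.sum_congr rfl fun p hp ↦ if_pos ?_
    rw [Finset.mem_sigma, Finset.mem_filter, Finset.mem_Icc, mem_idealsOfNorm] at hp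
    rw [hp.2]
    exact ⟨(Nat.le_floor_iff' (by omega)).mp hp.1.1.2, hp.1.2⟩
  · intro k _ l _ hkl
    rw [Function.onFun, Finset.disjoint_left]
    intro I hI hI'
    rw [mem_idealsOfNorm] at hI hI'
    exact hkl (hI.symm.trans hI')
  · intro I hI
    rw [Function.mem_support, ite_ne_right_iff] at hI
    obtain ⟨⟨h1, h2⟩, h3⟩ := hI
    have h4 : absNorm I ≠ 0 := by
      rw [Ne, absNorm_eq_zero_iff]
      rintro rfl
      exact h3 LambdaK_bot
    rw [Finset.mem_coe, Finset.mem_biUnion]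
    refine ⟨absNorm I, ?_, (mem_idealsOfNorm K).mpr rfl⟩
    rw [Finset.mem_filter, Finset.mem_Icc]
    exact ⟨⟨by omega, Nat.le_floor h1⟩, h2⟩

theorem idealCount_one : idealCount K 1 = 1 := by
  rw [idealCount_eq_card, Finset.card_eq_one]
  refine ⟨⊤, ?_⟩
  ext I
  rw [mem_idealsOfNorm, Finset.mem_singleton, absNorm_eq_one_iff]

theorem normLambda_prime (p : ℕ) (hp : p.Prime) :
    normLambda K p = idealCount K p * Real.log p := by
  have := sum_divisorsAntidiagonal_normLambda (K := K) p hp.ne_zero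
  have h1 := sum_divisorsAntidiagonal_normLambda (K := K) 1 one_ne_zero
  simp only [Nat.divisorsAntidiagonal_one, Finset.sum_singleton, idealCount_one] at h1
  rw [Nat.sum_divisorsAntidiagonal (f := fun x y ↦ normLambda K x * (idealCount K y : ℝ)),
    hp.sum_divisors, Nat.div_self hp.pos, idealCount_one] at this
  simp_all

end Mangoldt

section Continuation
open Filter Asymptotics MeasureTheory Set
open scoped Topology

/-- If the partial sums of `f` are `ρ X + O(X ^ θ)`, then `(s - 1) L(f, s)` extends analytically to
`θ < re s`. -/
theorem exists_LSeries_extension (f : ℕ → ℂ) (ρ : ℂ) {θ : ℝ} (hθ : θ < 1)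
    (h : (fun X : ℝ ↦ ∑ k ∈ Finset.Icc 1 ⌊X⌋₊, f k - ρ * X) =O[atTop] fun X : ℝ ↦ X ^ θ)
    (hn : (fun n : ℕ ↦ ∑ k ∈ Finset.Icc 1 n, ‖f k‖) =O[atTop] fun n ↦ (n : ℝ) ^ (1 : ℝ)) :
    ∃ F : ℂ → ℂ, DifferentiableOn ℂ F {s | θ < s.re} ∧ F 1 = ρ ∧
      ∀ s : ℂ, 1 < s.re → F s = (s - 1) * LSeries f s := by
  set g : ℝ → ℂ := (Ioi 1).indicator fun X : ℝ ↦ ∑ k ∈ Finset.Icc 1 ⌊X⌋₊, f k - ρ * X with hg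
  have hgloc : LocallyIntegrableOn g (Ioi 0) := by
    refine LocallyIntegrable.locallyIntegrableOn ?_ _
    have h1 : LocallyIntegrableOn (fun X : ℝ ↦ ∑ k ∈ Finset.Icc 1 ⌊X⌋₊, f k - ρ * X) (Ici 0) := by
      have h2 := locallyIntegrableOn_mul_sum_Icc (𝕜 := ℂ) (m := 1) (c := f) (le_refl (0 : ℝ))
        (g := fun _ ↦ 1) ((locallyIntegrable_const 1).locallyIntegrableOn _)
      simp only [one_mul] at h2
      refine h2.sub ?_
      refine ContinuousOn.locallyIntegrableOn ?_ measurableSet_Ici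
      fun_prop
    intro x
    rcases lt_or_ge x 1 with hx | hx
    · refine ⟨Iio 1, Iio_mem_nhds hx, ?_⟩
      refine (integrableOn_zero (μ := volume)).congr_fun (fun y hy ↦ ?_) measurableSet_Iio
      rw [hg, indicator_of_notMem]
      exact fun h ↦ lt_asymm (mem_Iio.mp hy) (mem_Ioi.mp h)
    · obtain ⟨u, hu, hu'⟩ := h1 x (by simp; linarith)
      rw [nhdsWithin_eq_nhds.mpr (Ici_mem_nhds (by linarith))] at hu
      exact ⟨u, hu, hu'.indicator measurableSet_Ioi⟩
  have hgtop : g =O[atTop] fun X : ℝ ↦ X ^ (-(-θ)) := by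
    rw [neg_neg]
    refine h.congr' ?_ EventuallyEq.rfl
    filter_upwards [eventually_gt_atTop 1] with X hX
    rw [hg, indicator_of_mem (mem_Ioi.mpr hX)]
  have hgbot : ∀ b : ℝ, g =O[𝓝[>] 0] fun X : ℝ ↦ X ^ (-b) := by
    intro b
    refine (isBigO_zero _ _).congr' ?_ EventuallyEq.rfl
    filter_upwards [nhdsWithin_le_nhds (Iio_mem_nhds (zero_lt_one (α := ℝ)))] with X hX
    rw [hg, indicator_of_notMem]
    exact fun h ↦ lt_asymm (mem_Iio.mp hX) (mem_Ioi.mp h)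
  refine ⟨fun s ↦ (s - 1) * s * mellin g (-s) + ρ * s, ?_, by simp, ?_⟩
  · intro s hs
    have h1 : DifferentiableAt ℂ (mellin g) (-s) :=
      mellin_differentiableAt_of_isBigO_rpow hgloc hgtop (by simpa using hs)
        (hgbot (-s.re - 1)) (by simp)
    have h2 : DifferentiableAt ℂ (fun s ↦ mellin g (-s)) s :=
      h1.comp (f := fun s : ℂ ↦ -s) s differentiableAt_id.neg
    exact (((differentiableAt_id.sub_const 1).mul differentiableAt_id).mul h2 |>.add
      (differentiableAt_id.const_mul ρ)).differentiableWithinAt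
  · intro s hs
    have hc : MellinConvergent g (-s) :=
      mellinConvergent_of_isBigO_rpow hgloc hgtop (by simp; linarith) (hgbot (-s.re - 1)) (by simp)
    have hs1 : s - 1 ≠ 0 := by
      intro h
      have := congrArg Complex.re h
      simp at this
      linarith
    have hfun : (fun t : ℝ ↦ (t : ℂ) ^ (-s - 1) • g t) = (Ioi (1 : ℝ)).indicator fun t : ℝ ↦
        (∑ k ∈ Finset.Icc 1 ⌊t⌋₊, f k - ρ * t) * (t : ℂ) ^ (-(s + 1)) := by
      ext t
      by_cases ht : t ∈ Ioi (1 : ℝ)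
      · rw [hg, indicator_of_mem ht, indicator_of_mem ht, smul_eq_mul, mul_comm, neg_add']
      · rw [hg, indicator_of_notMem ht, indicator_of_notMem ht, smul_zero]
    have hinter : Ioi (1 : ℝ) ∩ Ioi 0 = Ioi 1 := by
      rw [Ioi_inter_Ioi]; simp
    have hint1 : IntegrableOn (fun t : ℝ ↦
        (∑ k ∈ Finset.Icc 1 ⌊t⌋₊, f k - ρ * t) * (t : ℂ) ^ (-(s + 1))) (Ioi 1) := by
      rw [MellinConvergent, hfun, IntegrableOn, integrable_indicator_iff measurableSet_Ioi,
        IntegrableOn, Measure.restrict_restrict measurableSet_Ioi, hinter] at hc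
      exact hc
    have hmel : mellin g (-s) = ∫ t in Ioi (1 : ℝ),
        (∑ k ∈ Finset.Icc 1 ⌊t⌋₊, f k - ρ * t) * (t : ℂ) ^ (-(s + 1)) := by
      rw [mellin, hfun, integral_indicator measurableSet_Ioi,
        Measure.restrict_restrict measurableSet_Ioi, hinter]
    have hre : (-s).re < -1 := by simp; linarith
    have hint2 : IntegrableOn (fun t : ℝ ↦ ρ * (t : ℂ) ^ (-s)) (Ioi 1) :=
      (integrableOn_Ioi_cpow_of_lt hre one_pos).const_mul ρ
    have hval : ∫ t in Ioi (1 : ℝ), ρ * (t : ℂ) ^ (-s) = ρ / (s - 1) := by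
      rw [integral_const_mul, integral_Ioi_cpow_of_lt hre one_pos]
      simp only [Complex.ofReal_one, Complex.one_cpow]
      rw [show -s + 1 = -(s - 1) by ring]
      field_simp
    rw [LSeries_eq_mul_integral' f zero_le_one hs hn]
    have hsplit : ∫ t in Ioi (1 : ℝ), (∑ k ∈ Finset.Icc 1 ⌊t⌋₊, f k) * (t : ℂ) ^ (-(s + 1)) =
        mellin g (-s) + ρ / (s - 1) := by
      rw [hmel, ← hval, ← integral_add hint1 hint2]
      refine setIntegral_congr_fun measurableSet_Ioi fun t ht ↦ ?_
      have ht0 : (t : ℂ) ≠ 0 := by exact_mod_cast (zero_lt_one.trans (mem_Ioi.mp ht)).ne'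
      rw [neg_add, Complex.cpow_add _ _ ht0, Complex.cpow_neg_one]
      field_simp
      ring
    rw [hsplit]
    field_simp
end Continuation

section Tauberian
open Filter Asymptotics MeasureTheory Set
open scoped Topology

/-- The Fejér kernel `2 (1 - cos v) / v ^ 2`. -/
noncomputable def fejer (v : ℝ) : ℝ := 2 * ∫ t in (0 : ℝ)..1, (1 - t) * Real.cos (t * v)

theorem continuous_fejer : Continuous fejer := by
  refine continuous_const.mul ?_
  refine intervalIntegral.continuous_parametric_intervalIntegral_of_continuous' ?_ 0 1
  fun_prop

theorem fejer_eq {v : ℝ} (hv : v ≠ 0) : fejer v = 2 * (1 - Real.cos v) / v ^ 2 := by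
  have h : ∀ t ∈ uIcc (0 : ℝ) 1, HasDerivAt
      (fun t ↦ (1 - t) * (Real.sin (t * v) / v) - Real.cos (t * v) / v ^ 2)
      ((1 - t) * Real.cos (t * v)) t := by
    intro t _
    have h1 : HasDerivAt (fun t : ℝ ↦ t * v) v t := by simpa using (hasDerivAt_id t).mul_const v
    have h2 := ((hasDerivAt_id t).const_sub 1).mul (h1.sin.div_const v)
    have h3 := h2.sub (h1.cos.div_const (v ^ 2))
    refine h3.congr_deriv ?_
    simp only [id_eq]
    field_simp
    ring
  rw [fejer, intervalIntegral.integral_eq_sub_of_hasDerivAt h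
    (by apply Continuous.intervalIntegrable; fun_prop)]
  simp
  field_simp
  ring

theorem fejer_zero : fejer 0 = 1 := by
  simp only [fejer, mul_zero, Real.cos_zero, mul_one]
  rw [intervalIntegral.integral_sub (by simp) (by simp)]
  norm_num

theorem fejer_nonneg (v : ℝ) : 0 ≤ fejer v := by
  by_cases hv : v = 0
  · rw [hv, fejer_zero]; exact zero_le_one
  · rw [fejer_eq hv]
    have := Real.cos_le_one v
    positivity [sub_nonneg.mpr this]

theorem fejer_le (v : ℝ) : fejer v ≤ 5 * (1 + v ^ 2)⁻¹ := by
  rw [← div_eq_mul_inv, le_div_iff₀ (by positivity)]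
  by_cases hv : v = 0
  · rw [hv, fejer_zero]; norm_num
  · have h1 : fejer v * v ^ 2 ≤ 4 := by
      rw [fejer_eq hv, div_mul_cancel₀ _ (by positivity)]
      linarith [Real.neg_one_le_cos v]
    have h2 : fejer v ≤ 1 := by
      rw [fejer_eq hv, div_le_one (by positivity)]
      linarith [Real.one_sub_sq_div_two_le_cos (x := v)]
    linarith

theorem integrable_fejer : Integrable fejer := by
  refine (integrable_inv_one_add_sq.const_mul 5).mono' continuous_fejer.aestronglyMeasurable ?_
  refine Eventually.of_forall fun v ↦ ?_
  rw [Real.norm_of_nonneg (fejer_nonneg v)]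
  exact fejer_le v

theorem integral_fejer_pos : 0 < ∫ v, fejer v :=
  integral_pos_of_integrable_nonneg_nonzero (x := 0) continuous_fejer integrable_fejer fejer_nonneg
    (by rw [fejer_zero]; exact one_ne_zero)

/-- A bounded function `H ≥ 0` with `H(u) e ^ u` monotone converges to `A` if its Fejér means do. -/
theorem tendsto_of_fejer_means {H : ℝ → ℝ} {A B : ℝ} (hH0 : ∀ u, 0 ≤ H u) (hHB : ∀ u, H u ≤ B)
    (hHm : Measurable H) (hmono : ∀ u v, u ≤ v → H u ≤ H v * Real.exp (v - u))
    (hlim : ∀ l : ℝ, 0 < l → Tendsto (fun y ↦ ∫ v, H (y + v / l) * fejer v) atTop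
      (𝓝 (A * ∫ v, fejer v))) :
    Tendsto H atTop (𝓝 A) := by
  set c := ∫ v, fejer v with hc
  have hc0 : 0 < c := integral_fejer_pos
  have hB : 0 ≤ B := (hH0 0).trans (hHB 0)
  have hint : ∀ (g : ℝ → ℝ), Measurable g → Integrable fun v ↦ H (g v) * fejer v := by
    intro g hg
    refine (integrable_fejer.const_mul B).mono'
      ((hHm.comp hg).aestronglyMeasurable.mul continuous_fejer.aestronglyMeasurable) ?_
    refine Eventually.of_forall fun v ↦ ?_
    rw [Real.norm_of_nonneg (mul_nonneg (hH0 _) (fejer_nonneg v))]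
    exact mul_le_mul_of_nonneg_right (hHB _) (fejer_nonneg v)
  have key : ∀ η : ℝ, 0 < η → η < c → ∀ᶠ y in atTop,
      H y ≤ Real.exp (2 * η) * (A * c + η) / (c - η) ∧
      Real.exp (-(2 * η)) * (A * c - η - B * η) / c ≤ H y := by
    intro η hη hηc
    obtain ⟨R, hR0, hR⟩ : ∃ R : ℝ, 0 < R ∧ c - η < ∫ v in Ioc (-R) R, fejer v := by
      have h1 : Tendsto (fun R : ℝ ↦ ∫ v in (-R)..R, fejer v) atTop (𝓝 c) :=
        intervalIntegral_tendsto_integral integrable_fejer tendsto_neg_atTop_atBot tendsto_id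
      obtain ⟨R, h2, h3⟩ := ((h1.eventually (lt_mem_nhds (by linarith : c - η < c))).and
        (eventually_gt_atTop 0)).exists
      rw [intervalIntegral.integral_of_le (by linarith)] at h2
      exact ⟨R, h3, h2⟩
    set l := R / η with hl
    have hl0 : 0 < l := by positivity
    have hvl : ∀ v ∈ Ioc (-R) R, |v / l| ≤ η := by
      intro v hv
      rw [hl, div_div_eq_mul_div, abs_div, abs_mul, abs_of_pos hη, abs_of_pos hR0,
        div_le_iff₀ hR0, mul_comm]
      exact mul_le_mul_of_nonneg_left (abs_le.mpr ⟨hv.1.le, hv.2⟩) hη.le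
    have e1 := (hlim l hl0).comp (tendsto_atTop_add_const_right atTop η tendsto_id)
    have e2 := (hlim l hl0).comp (tendsto_atTop_add_const_right atTop (-η) tendsto_id)
    filter_upwards [e1.eventually (gt_mem_nhds (by linarith : A * c < A * c + η)),
      e2.eventually (lt_mem_nhds (by linarith : A * c - η < A * c))] with y hy1 hy2
    simp only [Function.comp_apply, id_eq] at hy1 hy2
    constructor
    · have h1 : H y * Real.exp (-(2 * η)) * ∫ v in Ioc (-R) R, fejer v ≤
          ∫ v, H (y + η + v / l) * fejer v := by
        rw [← integral_const_mul]
        refine (setIntegral_mono_on (integrable_fejer.integrableOn.const_mul _)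
          (hint _ (by fun_prop)).integrableOn measurableSet_Ioc fun v hv ↦ ?_).trans
          (setIntegral_le_integral (hint _ (by fun_prop))
            (Eventually.of_forall fun v ↦ mul_nonneg (hH0 _) (fejer_nonneg v)))
        refine mul_le_mul_of_nonneg_right ?_ (fejer_nonneg v)
        have h2 := abs_le.mp (hvl v hv)
        rw [Real.exp_neg, ← div_eq_mul_inv, div_le_iff₀ (Real.exp_pos _)]
        refine (hmono y (y + η + v / l) (by linarith)).trans ?_
        gcongr
        · exact hH0 _
        · linarith
      have h2 : H y * Real.exp (-(2 * η)) * (c - η) ≤ A * c + η := by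
        refine le_trans ?_ (h1.trans hy1.le)
        have := hH0 y
        gcongr
      rw [le_div_iff₀ (by linarith)]
      rw [Real.exp_neg] at h2
      have h3 := Real.exp_pos (2 * η)
      calc H y * (c - η) = Real.exp (2 * η) * (H y * (Real.exp (2 * η))⁻¹ * (c - η)) := by
            field_simp
        _ ≤ _ := by gcongr
    · have h1 : ∫ v, H (y + -η + v / l) * fejer v ≤
          H y * Real.exp (2 * η) * c + B * η := by
        rw [← integral_add_compl (s := Ioc (-R) R) measurableSet_Ioc (hint _ (by fun_prop))]
        have h2 : ∫ v in Ioc (-R) R, H (y + -η + v / l) * fejer v ≤ H y * Real.exp (2 * η) * c := by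
          rw [hc, ← integral_const_mul]
          refine (setIntegral_mono_on (hint _ (by fun_prop)).integrableOn
            (integrable_fejer.integrableOn.const_mul (H y * Real.exp (2 * η)))
             measurableSet_Ioc fun v hv ↦ ?_).trans
            (setIntegral_le_integral (integrable_fejer.const_mul _)
            (Eventually.of_forall fun v ↦ mul_nonneg (mul_nonneg (hH0 _) (Real.exp_pos _).le)
              (fejer_nonneg v)))
          refine mul_le_mul_of_nonneg_right ?_ (fejer_nonneg v)
          have h2 := abs_le.mp (hvl v hv)
          refine (hmono (y + -η + v / l) y (by linarith)).trans ?_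
          gcongr
          · exact hH0 _
          · linarith
        have h3 : ∫ v in (Ioc (-R) R)ᶜ, H (y + -η + v / l) * fejer v ≤ B * η := by
          have h4 : ∫ v in (Ioc (-R) R)ᶜ, fejer v ≤ η := by
            have := integral_add_compl (s := Ioc (-R) R) measurableSet_Ioc integrable_fejer
            linarith
          refine le_trans ?_ (mul_le_mul_of_nonneg_left h4 hB)
          rw [← integral_const_mul]
          refine setIntegral_mono_on (hint _ (by fun_prop)).integrableOn
            (integrable_fejer.integrableOn.const_mul B) measurableSet_Ioc.compl fun v hv ↦ ?_
          exact mul_le_mul_of_nonneg_right (hHB _) (fejer_nonneg v)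
        linarith
      rw [div_le_iff₀ hc0, Real.exp_neg, inv_mul_le_iff₀ (Real.exp_pos _)]
      nlinarith
  have t1 : Tendsto (fun η : ℝ ↦ Real.exp (2 * η) * (A * c + η) / (c - η)) (𝓝[>] 0) (𝓝 A) := by
    have h1 : ContinuousAt (fun η : ℝ ↦ Real.exp (2 * η) * (A * c + η) / (c - η)) 0 := by
      refine ContinuousAt.div (by fun_prop) (by fun_prop) (by simpa using hc0.ne')
    have h2 := h1.tendsto.mono_left (nhdsWithin_le_nhds (s := Ioi 0))
    simpa [hc0.ne'] using h2
  have t2 : Tendsto (fun η : ℝ ↦ Real.exp (-(2 * η)) * (A * c - η - B * η) / c)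
      (𝓝[>] 0) (𝓝 A) := by
    have h1 : Continuous (fun η : ℝ ↦ Real.exp (-(2 * η)) * (A * c - η - B * η) / c) := by
      fun_prop
    have h2 := (h1.tendsto 0).mono_left (nhdsWithin_le_nhds (s := Ioi 0))
    simpa [hc0.ne'] using h2
  have hev : ∀ᶠ η : ℝ in 𝓝[>] 0, 0 < η ∧ η < c := by
    filter_upwards [self_mem_nhdsWithin, nhdsWithin_le_nhds (Iio_mem_nhds hc0)] with η h1 h2
    exact ⟨h1, h2⟩
  refine tendsto_order.mpr ⟨fun b hb ↦ ?_, fun b hb ↦ ?_⟩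
  · obtain ⟨η, ⟨h1, h2⟩, h3⟩ := (hev.and (t2.eventually (lt_mem_nhds hb))).exists
    filter_upwards [key η h1 h2] with y hy
    exact h3.trans_le hy.2
  · obtain ⟨η, ⟨h1, h2⟩, h3⟩ := (hev.and (t1.eventually (gt_mem_nhds hb))).exists
    filter_upwards [key η h1 h2] with y hy
    exact hy.1.trans_lt h3
end Tauberian

section Tauberian
open Filter Asymptotics MeasureTheory Set
open scoped Topology

variable {h : ℝ → ℝ} {B : ℝ} {g : ℂ → ℂ}

theorem fejer_eq_re (v : ℝ) :
    fejer v = (2 * ∫ t in Ioc (0 : ℝ) 1, (1 - t : ℂ) * Complex.exp (-(Complex.I * t * v))).re := by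
  have h1 : IntegrableOn
      (fun t : ℝ ↦ (1 - t : ℂ) * Complex.exp (-(Complex.I * t * v))) (Ioc 0 1) := by
    refine Continuous.integrableOn_Ioc ?_
    fun_prop
  have h2 : (2 : ℂ) = ((2 : ℝ) : ℂ) := by norm_num
  rw [h2, Complex.re_ofReal_mul, ← Complex.reCLM_apply, ← ContinuousLinearMap.integral_comp_comm _ h1,
    fejer, intervalIntegral.integral_of_le zero_le_one]
  congr 1
  refine setIntegral_congr_fun measurableSet_Ioc fun t _ ↦ ?_
  have h3 : (1 - t : ℂ) = ((1 - t : ℝ) : ℂ) := by push_cast; rfl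
  have h4 : -(Complex.I * t * v) = ((-(t * v) : ℝ) : ℂ) * Complex.I := by push_cast; ring
  simp only [Complex.reCLM_apply]
  rw [h3, Complex.re_ofReal_mul, h4, Complex.exp_ofReal_mul_I_re, Real.cos_neg]

theorem integral_damped_fejer (hm : Measurable h) (hB : ∀ u, |h u| ≤ B)
    (hg : ∀ s : ℂ, 0 < s.re → ∫ u in Ioi (0 : ℝ), (h u : ℂ) * Complex.exp (-(s * u)) = g s)
    {l : ℝ} (y : ℝ) {ε : ℝ} (hε : 0 < ε) :
    ∫ u in Ioi (0 : ℝ), h u * Real.exp (-(ε * u)) * fejer (l * (u - y)) =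
      (2 * ∫ t in Ioc (0 : ℝ) 1, (1 - t : ℂ) * Complex.exp (Complex.I * (l * t * y)) *
        g (ε + Complex.I * (l * t))).re := by
  have hB0 : 0 ≤ B := (abs_nonneg _).trans (hB 0)
  set Ψ : ℝ → ℝ → ℂ := fun u t ↦ (h u : ℂ) * Complex.exp (-((ε + Complex.I * (l * t)) * u)) *
    ((1 - t : ℂ) * Complex.exp (Complex.I * (l * t * y))) with hΨ
  have hint : Integrable (Function.uncurry Ψ)
      ((volume.restrict (Ioi (0 : ℝ))).prod (volume.restrict (Ioc (0 : ℝ) 1))) := by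
    have h1 : Integrable (fun p : ℝ × ℝ ↦ (B * Real.exp (-ε * p.1)) * (1 : ℝ))
        ((volume.restrict (Ioi (0 : ℝ))).prod (volume.restrict (Ioc (0 : ℝ) 1))) := by
      refine Integrable.mul_prod (f := fun u ↦ B * Real.exp (-ε * u)) (g := fun _ ↦ (1 : ℝ)) ?_ ?_
      · exact (integrableOn_exp_mul_Ioi (by linarith) 0).const_mul B
      · exact integrableOn_const (by simp)
    refine h1.mono' ?_ ?_
    · apply Measurable.aestronglyMeasurable
      simp only [hΨ, Function.uncurry_def]
      fun_prop
    · rw [Measure.prod_restrict]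
      filter_upwards [ae_restrict_mem (measurableSet_Ioi.prod measurableSet_Ioc)] with p hp
      obtain ⟨hp1, hp2⟩ := hp
      simp only [mem_Ioi, mem_Ioc] at hp1 hp2
      simp only [hΨ, Function.uncurry_def, norm_mul, Complex.norm_exp, Complex.norm_real,
        Real.norm_eq_abs]
      have e1 : (-((ε + Complex.I * (l * p.2)) * p.1) : ℂ).re = -ε * p.1 := by simp
      have e2 : (Complex.I * (l * p.2 * y) : ℂ).re = 0 := by simp
      have e3 : ‖(1 - p.2 : ℂ)‖ ≤ 1 := by
        rw [← Complex.ofReal_one, ← Complex.ofReal_sub, Complex.norm_real, Real.norm_eq_abs,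
          abs_le]
        constructor <;> linarith
      rw [e1, e2, Real.exp_zero, mul_one]
      gcongr
      exact hB _
  have hswap := integral_integral_swap hint
  have hL : ∀ u : ℝ, ∫ t in Ioc (0 : ℝ) 1, Ψ u t = (h u * Real.exp (-(ε * u)) : ℝ) *
      ∫ t in Ioc (0 : ℝ) 1, (1 - t : ℂ) * Complex.exp (-(Complex.I * t * (l * (u - y) : ℝ))) := by
    intro u
    rw [← integral_const_mul]
    congr 1
    ext t
    simp only [hΨ]
    push_cast
    rw [show (h u : ℂ) * Complex.exp (-((ε + Complex.I * (l * t)) * u)) *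
      ((1 - t) * Complex.exp (Complex.I * (l * t * y))) = h u * (1 - t) *
      (Complex.exp (-((ε + Complex.I * (l * t)) * u)) * Complex.exp (Complex.I * (l * t * y))) by
        ring, ← Complex.exp_add, show (h u : ℂ) * Complex.exp (-(ε * u)) * ((1 - t) *
        Complex.exp (-(Complex.I * t * (l * (u - y))))) = h u * (1 - t) *
        (Complex.exp (-(ε * u)) * Complex.exp (-(Complex.I * t * (l * (u - y))))) by ring,
        ← Complex.exp_add]
    congr 2
    ring
  have hR : ∀ t : ℝ, ∫ u in Ioi (0 : ℝ), Ψ u t =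
      (1 - t : ℂ) * Complex.exp (Complex.I * (l * t * y)) * g (ε + Complex.I * (l * t)) := by
    intro t
    simp only [hΨ]
    rw [integral_mul_const, hg _ (by simpa using hε), mul_comm]
  have hintL : Integrable (fun u ↦ ∫ t in Ioc (0 : ℝ) 1, Ψ u t) (volume.restrict (Ioi (0 : ℝ))) :=
    hint.integral_prod_left
  have h2 : (2 : ℂ) = ((2 : ℝ) : ℂ) := by norm_num
  rw [← integral_congr_ae (Eventually.of_forall hR), ← hswap, h2, Complex.re_ofReal_mul,
    ← Complex.reCLM_apply, ← ContinuousLinearMap.integral_comp_comm _ hintL, ← integral_const_mul]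
  congr 1
  ext u
  rw [hL, Complex.reCLM_apply, Complex.re_ofReal_mul, fejer_eq_re, h2, Complex.re_ofReal_mul]
  ring

theorem integrable_fejer_affine {l : ℝ} (hl : 0 < l) (y : ℝ) :
    Integrable fun u ↦ fejer (l * (u - y)) :=
  (integrable_fejer.comp_mul_left' hl.ne').comp_sub_right y

theorem integral_fejer_eq_fourier (hm : Measurable h) (hB : ∀ u, |h u| ≤ B)
    (hgc : ContinuousOn g {s | 0 ≤ s.re})
    (hg : ∀ s : ℂ, 0 < s.re → ∫ u in Ioi (0 : ℝ), (h u : ℂ) * Complex.exp (-(s * u)) = g s)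
    {l : ℝ} (hl : 0 < l) (y : ℝ) :
    ∫ u in Ioi (0 : ℝ), h u * fejer (l * (u - y)) =
      (2 * ∫ t in Ioc (0 : ℝ) 1, (1 - t : ℂ) * Complex.exp (Complex.I * (l * t * y)) *
        g (Complex.I * (l * t))).re := by
  have hB0 : 0 ≤ B := (abs_nonneg _).trans (hB 0)
  have hleft : Tendsto (fun ε : ℝ ↦ ∫ u in Ioi (0 : ℝ), h u * Real.exp (-(ε * u)) *
      fejer (l * (u - y))) (𝓝[>] 0) (𝓝 (∫ u in Ioi (0 : ℝ), h u * fejer (l * (u - y)))) := by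
    refine tendsto_integral_filter_of_dominated_convergence (fun u ↦ B * fejer (l * (u - y))) ?_ ?_
      ((integrable_fejer_affine hl y).integrableOn.const_mul B) ?_
    · refine Eventually.of_forall fun ε ↦ Measurable.aestronglyMeasurable ?_
      have := continuous_fejer.measurable
      fun_prop
    · filter_upwards [self_mem_nhdsWithin] with ε hε
      filter_upwards [ae_restrict_mem measurableSet_Ioi] with u hu
      rw [norm_mul, norm_mul, Real.norm_of_nonneg (fejer_nonneg _)]
      refine mul_le_mul_of_nonneg_right ?_ (fejer_nonneg _)
      rw [Real.norm_eq_abs, Real.norm_of_nonneg (Real.exp_pos _).le]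
      have : Real.exp (-(ε * u)) ≤ 1 := by
        rw [Real.exp_le_one_iff, neg_nonpos]
        exact mul_nonneg (mem_Ioi.mp hε).le (mem_Ioi.mp hu).le
      calc |h u| * Real.exp (-(ε * u)) ≤ B * 1 := by
            gcongr
            exact hB u
        _ = B := mul_one B
    · refine Eventually.of_forall fun u ↦ ?_
      have : Continuous fun ε : ℝ ↦ h u * Real.exp (-(ε * u)) * fejer (l * (u - y)) := by fun_prop
      have h1 := (this.tendsto 0).mono_left (nhdsWithin_le_nhds (s := Ioi 0))
      simpa using h1
  have hcomp : IsCompact ((fun p : ℝ × ℝ ↦ (p.1 + Complex.I * (l * p.2) : ℂ)) ''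
      (Icc (0 : ℝ) 1 ×ˢ Icc (0 : ℝ) 1)) :=
    (isCompact_Icc.prod isCompact_Icc).image (by fun_prop)
  obtain ⟨C, hC⟩ := hcomp.exists_bound_of_continuousOn (f := g) (hgc.mono (by
    rintro _ ⟨p, hp, rfl⟩
    simpa using hp.1.1))
  have hgt : ∀ ε : ℝ, 0 ≤ ε → Continuous fun t : ℝ ↦ g (ε + Complex.I * (l * t)) := by
    intro ε hε
    refine hgc.comp_continuous (by fun_prop) fun t ↦ by simpa using hε
  have hright : Tendsto (fun ε : ℝ ↦ ∫ t in Ioc (0 : ℝ) 1, (1 - t : ℂ) *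
      Complex.exp (Complex.I * (l * t * y)) * g (ε + Complex.I * (l * t))) (𝓝[>] 0)
      (𝓝 (∫ t in Ioc (0 : ℝ) 1, (1 - t : ℂ) * Complex.exp (Complex.I * (l * t * y)) *
        g (Complex.I * (l * t)))) := by
    refine tendsto_integral_filter_of_dominated_convergence (fun _ ↦ C) ?_ ?_
      (integrableOn_const (by simp)) ?_
    · filter_upwards [self_mem_nhdsWithin] with ε hε
      refine Continuous.aestronglyMeasurable ?_
      exact (by fun_prop : Continuous fun t : ℝ ↦ (1 - t : ℂ) *
        Complex.exp (Complex.I * (l * t * y))).mul (hgt ε (mem_Ioi.mp hε).le)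
    · filter_upwards [self_mem_nhdsWithin, nhdsWithin_le_nhds (Iio_mem_nhds (zero_lt_one (α := ℝ)))]
        with ε hε hε1
      filter_upwards [ae_restrict_mem measurableSet_Ioc] with t ht
      have e2 : (Complex.I * (l * t * y) : ℂ).re = 0 := by simp
      have e3 : ‖(1 - t : ℂ)‖ ≤ 1 := by
        rw [← Complex.ofReal_one, ← Complex.ofReal_sub, Complex.norm_real, Real.norm_eq_abs,
          abs_le]
        constructor <;> linarith [ht.1, ht.2]
      rw [norm_mul, norm_mul, Complex.norm_exp, e2, Real.exp_zero, mul_one]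
      have h1 := hC (ε + Complex.I * (l * t)) ⟨(ε, t), ⟨⟨(mem_Ioi.mp hε).le, (mem_Iio.mp hε1).le⟩,
        ht.1.le, ht.2⟩, rfl⟩
      calc _ ≤ 1 * C := by gcongr
        _ = C := one_mul C
    · refine Eventually.of_forall fun t ↦ Tendsto.const_mul _ ?_
      have h1 := (hgc (Complex.I * (l * t)) (by simp)).tendsto
      refine h1.comp (tendsto_nhdsWithin_iff.mpr ⟨?_, ?_⟩)
      · have : Continuous fun ε : ℝ ↦ (ε + Complex.I * (l * t) : ℂ) := by fun_prop
        have h2 := (this.tendsto 0).mono_left (nhdsWithin_le_nhds (s := Ioi 0))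
        simpa using h2
      · filter_upwards [self_mem_nhdsWithin] with ε hε
        simpa using (mem_Ioi.mp hε).le
  refine tendsto_nhds_unique hleft (Tendsto.congr' ?_
    (Complex.continuous_re.continuousAt.tendsto.comp (hright.const_mul 2)))
  filter_upwards [self_mem_nhdsWithin] with ε hε
  rw [integral_damped_fejer hm hB hg y (mem_Ioi.mp hε)]
  rfl

theorem tendsto_integral_fejer (hm : Measurable h) (hB : ∀ u, |h u| ≤ B)
    (hgc : ContinuousOn g {s | 0 ≤ s.re})
    (hg : ∀ s : ℂ, 0 < s.re → ∫ u in Ioi (0 : ℝ), (h u : ℂ) * Complex.exp (-(s * u)) = g s)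
    {l : ℝ} (hl : 0 < l) :
    Tendsto (fun y ↦ ∫ u in Ioi (0 : ℝ), h u * fejer (l * (u - y))) atTop (𝓝 0) := by
  simp_rw [integral_fejer_eq_fourier hm hB hgc hg hl]
  have h1 := Real.tendsto_integral_exp_smul_cocompact ((Ioc (0 : ℝ) 1).indicator
    fun t : ℝ ↦ (1 - t : ℂ) * g (Complex.I * (l * t)))
  have h2 : Tendsto (fun y : ℝ ↦ -(l / (2 * Real.pi)) * y) atTop (cocompact ℝ) := by
    refine Tendsto.mono_right ?_ atBot_le_cocompact
    refine tendsto_id.const_mul_atTop_of_neg ?_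
    have := Real.pi_pos
    rw [neg_lt_zero]
    positivity
  have h3 := (h1.comp h2).const_mul 2
  rw [mul_zero] at h3
  have h4 := Complex.continuous_re.continuousAt.tendsto.comp h3
  rw [Complex.zero_re] at h4
  refine h4.congr fun y ↦ ?_
  simp only [Function.comp_apply]
  congr 2
  rw [← integral_indicator measurableSet_Ioc]
  congr 1
  ext t
  by_cases ht : t ∈ Ioc (0 : ℝ) 1
  · rw [indicator_of_mem ht, indicator_of_mem ht, Circle.smul_def, Real.fourierChar_apply, smul_eq_mul]
    have : (2 * Real.pi * -(t * (-(l / (2 * Real.pi)) * y)) : ℝ) = l * t * y := by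
      have := Real.pi_pos.ne'
      field_simp
    rw [this]
    push_cast
    rw [mul_comm _ Complex.I]
    ring
  · rw [indicator_of_notMem ht, indicator_of_notMem ht, smul_zero]

end Tauberian

section WienerIkehara
open Filter Asymptotics MeasureTheory Set
open scoped Topology

theorem integral_comp_exp_Ioi {f : ℝ → ℂ} :
    ∫ t in Ioi (1 : ℝ), f t = ∫ u in Ioi (0 : ℝ), (Real.exp u : ℂ) * f (Real.exp u) := by
  have h := integral_image_eq_integral_abs_deriv_smul (s := Ioi (0 : ℝ)) measurableSet_Ioi
    (fun x _ ↦ (Real.hasDerivAt_exp x).hasDerivWithinAt) (Real.exp_injective.injOn) f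
  have himg : Real.exp '' Ioi 0 = Ioi 1 := by
    ext t
    constructor
    · rintro ⟨u, hu, rfl⟩
      exact mem_Ioi.mpr (Real.one_lt_exp_iff.mpr (mem_Ioi.mp hu))
    · intro ht
      have ht := mem_Ioi.mp ht
      exact ⟨Real.log t, mem_Ioi.mpr (Real.log_pos ht), Real.exp_log (by linarith)⟩
  rw [himg] at h
  rw [h]
  simp [Real.abs_exp]

theorem tendsto_integral_fejer_one {l : ℝ} (hl : 0 < l) :
    Tendsto (fun y : ℝ ↦ l * ∫ u in Ioi (0 : ℝ), fejer (l * (u - y))) atTop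
      (𝓝 (∫ v, fejer v)) := by
  have hc : AECover volume atTop fun y : ℝ ↦ Ioi (-(l * y)) :=
    aecover_Ioi (tendsto_neg_atTop_atBot.comp (tendsto_id.const_mul_atTop hl))
  refine (hc.integral_tendsto_of_countably_generated integrable_fejer).congr fun y ↦ ?_
  rw [← integral_indicator measurableSet_Ioi, ← integral_indicator measurableSet_Ioi]
  have h1 : ((Ioi (0 : ℝ)).indicator fun u ↦ fejer (l * (u - y))) =
      fun u ↦ (fun w ↦ (Ioi (-(l * y))).indicator fejer (l * w)) (u - y) := by
    ext u
    have : u ∈ Ioi (0 : ℝ) ↔ l * (u - y) ∈ Ioi (-(l * y)) := by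
      rw [mem_Ioi, mem_Ioi]
      constructor
      · intro h
        nlinarith [mul_pos hl h]
      · intro h
        by_contra h'
        nlinarith [mul_nonneg hl.le (neg_nonneg.mpr (not_lt.mp h'))]
    beta_reduce
    by_cases hu : u ∈ Ioi (0 : ℝ)
    · rw [indicator_of_mem hu, indicator_of_mem (this.mp hu)]
    · rw [indicator_of_notMem hu, indicator_of_notMem (fun h ↦ hu (this.mpr h))]
  rw [h1, integral_sub_right_eq_self, Measure.integral_comp_mul_left, abs_of_pos (inv_pos.mpr hl),
    smul_eq_mul, ← mul_assoc, mul_inv_cancel₀ hl.ne', one_mul]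

/-- The Wiener–Ikehara theorem, for coefficients satisfying a Chebyshev bound. -/
theorem wienerIkehara {a : ℕ → ℝ} {A B : ℝ} {G : ℂ → ℂ} (ha : ∀ n, 0 ≤ a n)
    (hB : ∀ x : ℝ, 0 ≤ x → ∑ k ∈ Finset.Icc 1 ⌊x⌋₊, a k ≤ B * x)
    (hGc : ContinuousOn G {s | 1 ≤ s.re})
    (hG : ∀ s : ℂ, 1 < s.re → G s = LSeries (fun n ↦ (a n : ℂ)) s - A / (s - 1)) :
    Tendsto (fun x : ℝ ↦ (∑ k ∈ Finset.Icc 1 ⌊x⌋₊, a k) / x) atTop (𝓝 A) := by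
  set S : ℝ → ℝ := fun x ↦ ∑ k ∈ Finset.Icc 1 ⌊x⌋₊, a k with hS
  have hSmono : Monotone S := by
    intro x y hxy
    refine Finset.sum_le_sum_of_subset_of_nonneg ?_ fun k _ _ ↦ ha k
    exact Finset.Icc_subset_Icc_right (Nat.floor_mono hxy)
  have hS0 : ∀ x, 0 ≤ S x := fun x ↦ Finset.sum_nonneg fun k _ ↦ ha k
  set H : ℝ → ℝ := fun u ↦ S (Real.exp u) * Real.exp (-u) with hH
  have hHm : Measurable H := (hSmono.measurable.comp Real.measurable_exp).mul (by fun_prop)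
  have hH0 : ∀ u, 0 ≤ H u := fun u ↦ mul_nonneg (hS0 _) (Real.exp_pos _).le
  have hHB : ∀ u, H u ≤ B := by
    intro u
    have h1 := mul_le_mul_of_nonneg_right (hB (Real.exp u) (Real.exp_pos u).le)
      (Real.exp_pos (-u)).le
    rwa [mul_assoc, ← Real.exp_add, add_neg_cancel, Real.exp_zero, mul_one] at h1
  have hHneg : ∀ u < 0, H u = 0 := by
    intro u hu
    have : ⌊Real.exp u⌋₊ = 0 := Nat.floor_eq_zero.mpr (Real.exp_lt_one_iff.mpr hu)
    simp [hH, hS, this]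
  have hmono : ∀ u v, u ≤ v → H u ≤ H v * Real.exp (v - u) := by
    intro u v huv
    have e : H v * Real.exp (v - u) = S (Real.exp v) * Real.exp (-u) := by
      simp only [hH]
      rw [mul_assoc, ← Real.exp_add]
      ring_nf
    rw [e]
    exact mul_le_mul_of_nonneg_right (hSmono (Real.exp_le_exp.mpr huv)) (Real.exp_pos _).le
  set h : ℝ → ℝ := fun u ↦ H u - A with hh
  have hhm : Measurable h := hHm.sub_const A
  have hhB : ∀ u, |h u| ≤ B + |A| := by
    intro u
    calc |h u| ≤ |H u| + |A| := abs_sub _ _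
      _ ≤ B + |A| := by
        rw [abs_of_nonneg (hH0 u)]
        gcongr
        exact hHB u
  set g : ℂ → ℂ := fun s ↦ (G (1 + s) - A) / (1 + s) with hg
  have hgc : ContinuousOn g {s | 0 ≤ s.re} := by
    refine ContinuousOn.div (ContinuousOn.sub (hGc.comp (by fun_prop) ?_) continuousOn_const)
      (by fun_prop) ?_
    · intro s hs
      simpa using hs
    · intro s hs h0
      have h1 := congrArg Complex.re h0
      simp only [mem_ofPred_eq, Complex.add_re, Complex.one_re, Complex.zero_re] at hs h1
      linarith
  have hbigO : (fun n : ℕ ↦ ∑ k ∈ Finset.Icc 1 n, a k) =O[atTop] fun n ↦ (n : ℝ) ^ (1 : ℝ) := by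
    refine IsBigO.of_bound B (Eventually.of_forall fun n ↦ ?_)
    have := hB n n.cast_nonneg
    rw [Nat.floor_natCast] at this
    rw [Real.norm_of_nonneg (Finset.sum_nonneg fun k _ ↦ ha k), Real.rpow_one,
      Real.norm_of_nonneg n.cast_nonneg]
    exact this
  have hlap : ∀ s : ℂ, 0 < s.re →
      ∫ u in Ioi (0 : ℝ), (h u : ℂ) * Complex.exp (-(s * u)) = g s := by
    intro s hs
    have hs0 : s ≠ 0 := by
      rintro rfl
      simp at hs
    have hs1 : 1 + s ≠ 0 := by
      intro h0
      have h1 := congrArg Complex.re h0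
      simp only [Complex.add_re, Complex.one_re, Complex.zero_re] at h1
      linarith
    have hexp : IntegrableOn (fun u : ℝ ↦ Complex.exp (-(s * u))) (Ioi 0) := by
      have := integrableOn_exp_mul_complex_Ioi (a := -s) (by simpa using hs) 0
      simpa only [neg_mul] using this
    have hexpi : ∫ u in Ioi (0 : ℝ), Complex.exp (-(s * u)) = 1 / s := by
      have := integral_exp_mul_complex_Ioi (a := -s) (by simpa using hs) 0
      simpa only [neg_mul, Complex.ofReal_zero, mul_zero, neg_zero, Complex.exp_zero,
        neg_div_neg_eq] using this
    have hHe : IntegrableOn (fun u : ℝ ↦ (H u : ℂ) * Complex.exp (-(s * u))) (Ioi 0) := by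
      refine Integrable.bdd_mul (c := B) hexp
        (Complex.measurable_ofReal.comp hHm).aestronglyMeasurable (Eventually.of_forall fun u ↦ ?_)
      rw [Complex.norm_real, Real.norm_of_nonneg (hH0 u)]
      exact hHB u
    have e1 : ∫ u in Ioi (0 : ℝ), (h u : ℂ) * Complex.exp (-(s * u)) =
        (∫ u in Ioi (0 : ℝ), (H u : ℂ) * Complex.exp (-(s * u))) - A * (1 / s) := by
      rw [← hexpi, ← integral_const_mul, ← integral_sub hHe (hexp.const_mul _)]
      congr 1
      ext u
      simp only [hh, Complex.ofReal_sub]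
      ring
    have e2 := LSeries_eq_mul_integral_of_nonneg a zero_le_one (s := 1 + s) (by simpa using hs)
      hbigO ha
    have e3 : ∫ t in Ioi (1 : ℝ), (∑ k ∈ Finset.Icc 1 ⌊t⌋₊, (a k : ℂ)) *
        (t : ℂ) ^ (-(1 + s + 1)) = ∫ u in Ioi (0 : ℝ), (H u : ℂ) * Complex.exp (-(s * u)) := by
      rw [integral_comp_exp_Ioi]
      congr 1
      ext u
      have h1 : ((Real.exp u : ℝ) : ℂ) ^ (-(1 + s + 1)) = Complex.exp (u * (-(1 + s + 1))) := by
        rw [Complex.cpow_def_of_ne_zero (by exact_mod_cast (Real.exp_pos u).ne'),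
          ← Complex.ofReal_log (Real.exp_pos u).le, Real.log_exp]
      have h2 : (H u : ℂ) = (∑ k ∈ Finset.Icc 1 ⌊Real.exp u⌋₊, (a k : ℂ)) * Complex.exp (-u) := by
        simp [hH, hS]
      rw [h1, h2, Complex.ofReal_exp, mul_left_comm, ← Complex.exp_add, mul_assoc,
        ← Complex.exp_add]
      ring_nf
    rw [e1, ← e3]
    simp only [hg]
    rw [hG (1 + s) (by simpa using hs), e2, add_sub_cancel_left]
    field_simp
    ring
  have hlim : ∀ l > 0, Tendsto (fun y ↦ ∫ v, H (y + v / l) * fejer v) atTop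
      (𝓝 (A * ∫ v, fejer v)) := by
    intro l hl
    have h1 := ((tendsto_integral_fejer hhm hhB hgc hlap hl).const_mul l).add
      ((tendsto_integral_fejer_one hl).const_mul A)
    rw [mul_zero, zero_add] at h1
    refine h1.congr fun y ↦ ?_
    have e1 : ∫ v, H (y + v / l) * fejer v = l * ∫ u, H u * fejer (l * (u - y)) := by
      have h2 := Measure.integral_comp_div (fun w ↦ H (y + w) * fejer (l * w)) l
      have h3 : ∀ v : ℝ, l * (v / l) = v := fun v ↦ by field_simp
      simp only [h3] at h2
      rw [h2, abs_of_pos hl, smul_eq_mul]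
      congr 1
      rw [← integral_add_left_eq_self (fun u ↦ H u * fejer (l * (u - y))) y]
      simp only [add_sub_cancel_left]
    have e2 : ∫ u, H u * fejer (l * (u - y)) = ∫ u in Ioi (0 : ℝ), H u * fejer (l * (u - y)) := by
      rw [← integral_Ici_eq_integral_Ioi, setIntegral_eq_integral_of_forall_compl_eq_zero]
      intro u hu
      rw [hHneg u (by simpa using hu), zero_mul]
    have hfi := (integrable_fejer_affine hl y).integrableOn (s := Ioi (0 : ℝ))
    have e3 : ∫ u in Ioi (0 : ℝ), H u * fejer (l * (u - y)) =
        (∫ u in Ioi (0 : ℝ), h u * fejer (l * (u - y))) +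
          A * ∫ u in Ioi (0 : ℝ), fejer (l * (u - y)) := by
      rw [← integral_const_mul, ← integral_add _ (hfi.const_mul A)]
      · congr 1
        ext u
        simp only [hh]
        ring
      · exact Integrable.bdd_mul (c := B + |A|) hfi hhm.aestronglyMeasurable
          (Eventually.of_forall hhB)
    rw [e1, e2, e3]
    ring
  have hfin := (tendsto_of_fejer_means hH0 hHB hHm hmono hlim).comp Real.tendsto_log_atTop
  refine hfin.congr' ?_
  filter_upwards [eventually_gt_atTop 0] with x hx
  simp only [Function.comp_apply, hH]
  rw [Real.exp_log hx, Real.exp_neg, Real.exp_log hx, div_eq_mul_inv]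

end WienerIkehara

section MangoldtBound
variable {K : Type*} [Field K] [NumberField K]

theorem exists_prime_pow_absNorm {P : Ideal (𝓞 K)} (hP : Prime P) :
    ∃ p f : ℕ, p.Prime ∧ f ≠ 0 ∧ absNorm P = p ^ f := by
  have hP' := isPrime_of_prime hP
  have h1 : absNorm P ≠ 0 := absNorm_eq_zero_iff.not.mpr hP.ne_zero
  have h2 : absNorm P ≠ 1 := fun h ↦ hP'.ne_top (absNorm_eq_one_iff.mp h)
  have h3 : ∀ n : ℕ, n ≠ 0 → (n : 𝓞 K) ∈ P → ∃ p : ℕ, p.Prime ∧ (p : 𝓞 K) ∈ P := by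
    intro n
    induction n using Nat.recOnMul with
    | zero => simp
    | one =>
      intro _ h
      rw [Nat.cast_one] at h
      exact absurd ((eq_top_iff_one P).mpr h) hP'.ne_top
    | prime p hp => exact fun _ h ↦ ⟨p, hp, h⟩
    | mul a b iha ihb =>
      intro h0 h
      rw [Nat.cast_mul] at h
      rcases hP'.mem_or_mem h with h | h
      · exact iha (by rintro rfl; simp at h0) h
      · exact ihb (by rintro rfl; simp at h0) h
  obtain ⟨p, hp, hpP⟩ := h3 _ h1 (absNorm_mem P)
  have h4 : absNorm P ∣ p ^ Module.finrank ℤ (𝓞 K) := by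
    rw [← absNorm_span_natCast]
    exact absNorm_dvd_absNorm_of_le (by rwa [span_singleton_le_iff_mem])
  obtain ⟨f, -, hf⟩ := (Nat.dvd_prime_pow hp).mp h4
  refine ⟨p, f, hp, ?_, hf⟩
  rintro rfl
  exact h2 (by simpa using hf)

theorem normLambda_le (k : ℕ) :
    normLambda K k ≤ Module.finrank ℚ K * ArithmeticFunction.vonMangoldt k := by
  set T := (idealsOfNorm K k).filter fun I ↦ IsPrimeIdealPower I with hT
  have hsum : normLambda K k = ∑ I ∈ T, Real.log (absNorm I.radical) := by
    rw [normLambda, hT, Finset.sum_filter]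
    exact Finset.sum_congr rfl fun I _ ↦ by rw [LambdaK]
  have hmem : ∀ I ∈ T, absNorm I = k ∧ Prime I.radical ∧ ∃ m, I = I.radical ^ (m + 1) := by
    intro I hI
    rw [hT, Finset.mem_filter, mem_idealsOfNorm, isPrimeIdealPower_iff] at hI
    obtain ⟨hk, P, m, hP, rfl⟩ := hI
    have : (P ^ (m + 1)).radical = P := by
      rw [Ideal.radical_pow _ (by omega), (isPrime_of_prime hP).radical]
    rw [this]
    exact ⟨hk, hP, m, rfl⟩
  rcases T.eq_empty_or_nonempty with hE | ⟨I₀, hI₀⟩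
  · rw [hsum, hE, Finset.sum_empty]
    exact mul_nonneg (Nat.cast_nonneg _) ArithmeticFunction.vonMangoldt_nonneg
  obtain ⟨h1, h2, m₀, h3⟩ := hmem I₀ hI₀
  obtain ⟨p, f, hp, hf, hpf⟩ := exists_prime_pow_absNorm h2
  have hk : k = p ^ (f * (m₀ + 1)) := by
    rw [← h1, h3, map_pow, hpf, pow_mul]
  have hL : ArithmeticFunction.vonMangoldt k = Real.log p := by
    rw [hk, ArithmeticFunction.vonMangoldt_apply_pow (by positivity),
      ArithmeticFunction.vonMangoldt_apply_prime hp]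
  have hinj : Set.InjOn Ideal.radical (T : Set (Ideal (𝓞 K))) := by
    intro I hI J hJ hIJ
    obtain ⟨hi1, hi2, mi, hi3⟩ := hmem I hI
    obtain ⟨hj1, hj2, mj, hj3⟩ := hmem J hJ
    have h4 : 1 < absNorm I.radical := by
      have := absNorm_eq_zero_iff.not.mpr hi2.ne_zero
      have := absNorm_eq_one_iff.not.mpr (isPrime_of_prime hi2).ne_top
      omega
    have h5 : absNorm I.radical ^ (mi + 1) = absNorm I.radical ^ (mj + 1) := by
      rw [← map_pow, ← map_pow, ← hi3, hIJ, ← hj3, hi1, hj1]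
    have h6 := Nat.pow_right_injective h4 h5
    rw [hi3, hj3, hIJ, h6]
  have hdvd : ∏ P ∈ T.image Ideal.radical, P ∣ span {(p : 𝓞 K)} := by
    refine Finset.prod_primes_dvd _ ?_ ?_
    · intro P hP
      obtain ⟨I, hI, rfl⟩ := Finset.mem_image.mp hP
      exact (hmem I hI).2.1
    · intro P hP
      obtain ⟨I, hI, rfl⟩ := Finset.mem_image.mp hP
      obtain ⟨hi1, hi2, mi, hi3⟩ := hmem I hI
      rw [dvd_iff_le, span_singleton_le_iff_mem]
      have h4 : (k : 𝓞 K) ∈ I := hi1 ▸ absNorm_mem I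
      rw [hk, Nat.cast_pow] at h4
      exact mem_radical_iff.mpr ⟨_, h4⟩
  have hnorm := map_dvd absNorm hdvd
  rw [absNorm_span_natCast, map_prod] at hnorm
  have hle := Nat.le_of_dvd (pow_pos hp.pos _) hnorm
  rw [hsum, hL, ← Finset.sum_image (f := fun P ↦ Real.log (absNorm P)) hinj]
  rw [← Real.log_prod, ← RingOfIntegers.rank K, ← Real.log_pow]
  · refine Real.log_le_log ?_ (by exact_mod_cast hle)
    refine Finset.prod_pos fun P hP ↦ ?_
    obtain ⟨I, hI, rfl⟩ := Finset.mem_image.mp hP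
    exact_mod_cast Nat.pos_of_ne_zero (absNorm_eq_zero_iff.not.mpr (hmem I hI).2.1.ne_zero)
  · intro P hP
    obtain ⟨I, hI, rfl⟩ := Finset.mem_image.mp hP
    exact_mod_cast absNorm_eq_zero_iff.not.mpr (hmem I hI).2.1.ne_zero

variable (K) in
theorem sum_normLambda_le {x : ℝ} (hx : 0 ≤ x) :
    ∑ k ∈ Finset.Icc 1 ⌊x⌋₊, normLambda K k ≤ Module.finrank ℚ K * (Real.log 4 + 4) * x := by
  calc ∑ k ∈ Finset.Icc 1 ⌊x⌋₊, normLambda K k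
      ≤ ∑ k ∈ Finset.Icc 1 ⌊x⌋₊, Module.finrank ℚ K * ArithmeticFunction.vonMangoldt k :=
        Finset.sum_le_sum fun k _ ↦ normLambda_le k
    _ = Module.finrank ℚ K * Chebyshev.psi x := by
        rw [← Finset.mul_sum]
        rfl
    _ ≤ Module.finrank ℚ K * ((Real.log 4 + 4) * x) := by
        gcongr
        exact Chebyshev.psi_le_const_mul_self hx
    _ = _ := by ring

theorem summable_normLambda_non_primes :
    Summable fun n : ℕ ↦ (if n.Prime then 0 else normLambda K n) / n := by
  have h := (ArithmeticFunction.vonMangoldt.summable_residueClass_non_primes_div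
    (0 : ZMod 1)).mul_left (Module.finrank ℚ K : ℝ)
  refine Summable.of_nonneg_of_le (fun n ↦ ?_) (fun n ↦ ?_) h
  · have := normLambda_nonneg (K := K) n
    positivity
  · rw [← mul_div_assoc]
    gcongr
    split_ifs
    · simp
    · rw [ArithmeticFunction.vonMangoldt.residueClass, Set.indicator_of_mem]
      · exact normLambda_le n
      · exact Subsingleton.elim _ _

end MangoldtBound

section TwistedSeries
open Filter Asymptotics Set
open scoped Topology

variable (K : Type*) [Field K] [NumberField K] {q : ℕ}

/-- The number of ideals of norm `k`, twisted by a Dirichlet character. -/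
noncomputable def twistCount (χ : DirichletCharacter ℂ q) (k : ℕ) : ℂ := χ k * idealCount K k

/-- The von Mangoldt sum over the ideals of norm `k`, twisted by a Dirichlet character. -/
noncomputable def twistLambda (χ : DirichletCharacter ℂ q) (k : ℕ) : ℂ := χ k * normLambda K k

variable {K}

theorem exponent_lt_one : 1 - 1 / (Module.finrank ℚ K : ℝ) < 1 := by
  have : (0 : ℝ) < Module.finrank ℚ K := by exact_mod_cast Module.finrank_pos
  simp only [sub_lt_self_iff]
  positivity

theorem norm_twistCount_le (χ : DirichletCharacter ℂ q) (k : ℕ) :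
    ‖twistCount K χ k‖ ≤ idealCount K k := by
  rw [twistCount, norm_mul, Complex.norm_natCast]
  exact mul_le_of_le_one_left (Nat.cast_nonneg _) (χ.norm_le_one _)

theorem norm_twistLambda_le (χ : DirichletCharacter ℂ q) (k : ℕ) :
    ‖twistLambda K χ k‖ ≤ normLambda K k := by
  rw [twistLambda, norm_mul, Complex.norm_real, Real.norm_of_nonneg (normLambda_nonneg k)]
  exact mul_le_of_le_one_left (normLambda_nonneg k) (χ.norm_le_one _)

theorem isBigO_sum_idealCount : (fun n : ℕ ↦ ∑ k ∈ Finset.Icc 1 n, (idealCount K k : ℝ)) =O[atTop]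
    fun n ↦ (n : ℝ) ^ (1 : ℝ) := by
  obtain ⟨κ, hκ⟩ := exists_idealCount_asymp K 1 (0 : ZMod 1)
  have h1 : (fun X : ℝ ↦ ∑ k ∈ Finset.Icc 1 ⌊X⌋₊ with ((k : ℕ) : ZMod 1) = 0,
      (idealCount K k : ℝ)) =O[atTop] fun X : ℝ ↦ X ^ (1 : ℝ) := by
    have h2 : (fun X : ℝ ↦ X ^ (1 - 1 / (Module.finrank ℚ K : ℝ))) =O[atTop]
        fun X : ℝ ↦ X ^ (1 : ℝ) := by
      refine IsBigO.of_bound 1 ?_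
      filter_upwards [eventually_ge_atTop 1] with X hX
      rw [Real.norm_of_nonneg (by positivity), Real.norm_of_nonneg (by positivity), one_mul]
      exact Real.rpow_le_rpow_of_exponent_le hX exponent_lt_one.le
    have h3 : (fun X : ℝ ↦ κ * X) =O[atTop] fun X : ℝ ↦ X ^ (1 : ℝ) := by
      simp only [Real.rpow_one]
      exact isBigO_const_mul_self κ _ _
    simpa using (hκ.trans h2).add h3
  have h4 := h1.comp_tendsto tendsto_natCast_atTop_atTop
  refine h4.congr_left fun n ↦ ?_
  simp only [Function.comp_apply, Nat.floor_natCast]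
  rw [Finset.filter_true_of_mem fun _ _ ↦ Subsingleton.elim _ _]

theorem isBigO_sum_norm_twistCount (χ : DirichletCharacter ℂ q) :
    (fun n : ℕ ↦ ∑ k ∈ Finset.Icc 1 n, ‖twistCount K χ k‖) =O[atTop]
      fun n ↦ (n : ℝ) ^ (1 : ℝ) := by
  refine IsBigO.trans (IsBigO.of_bound 1 (Eventually.of_forall fun n ↦ ?_))
    (isBigO_sum_idealCount (K := K))
  rw [one_mul, Real.norm_of_nonneg (Finset.sum_nonneg fun k _ ↦ norm_nonneg _),
    Real.norm_of_nonneg (Finset.sum_nonneg fun k _ ↦ Nat.cast_nonneg _)]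
  exact Finset.sum_le_sum fun k _ ↦ norm_twistCount_le χ k

theorem isBigO_sum_norm_twistLambda (χ : DirichletCharacter ℂ q) :
    (fun n : ℕ ↦ ∑ k ∈ Finset.Icc 1 n, ‖twistLambda K χ k‖) =O[atTop]
      fun n ↦ (n : ℝ) ^ (1 : ℝ) := by
  refine IsBigO.of_bound (Module.finrank ℚ K * (Real.log 4 + 4)) (Eventually.of_forall fun n ↦ ?_)
  rw [Real.norm_of_nonneg (Finset.sum_nonneg fun k _ ↦ norm_nonneg _), Real.rpow_one,
    Real.norm_of_nonneg n.cast_nonneg]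
  refine (Finset.sum_le_sum fun k _ ↦ norm_twistLambda_le χ k).trans ?_
  simpa using sum_normLambda_le K n.cast_nonneg

theorem LSeriesSummable_twistCount (χ : DirichletCharacter ℂ q) {s : ℂ} (hs : 1 < s.re) :
    LSeriesSummable (twistCount K χ) s :=
  LSeriesSummable_of_sum_norm_bigO (isBigO_sum_norm_twistCount χ) zero_le_one hs

theorem LSeriesSummable_twistLambda (χ : DirichletCharacter ℂ q) {s : ℂ} (hs : 1 < s.re) :
    LSeriesSummable (twistLambda K χ) s :=
  LSeriesSummable_of_sum_norm_bigO (isBigO_sum_norm_twistLambda χ) zero_le_one hs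

theorem abscissa_twistCount_le (χ : DirichletCharacter ℂ q) :
    LSeries.abscissaOfAbsConv (twistCount K χ) ≤ 1 :=
  LSeries.abscissaOfAbsConv_le_of_forall_lt_LSeriesSummable fun y hy ↦
    LSeriesSummable_twistCount χ (by simpa using hy)

theorem abscissa_twistLambda_le (χ : DirichletCharacter ℂ q) :
    LSeries.abscissaOfAbsConv (twistLambda K χ) ≤ 1 :=
  LSeries.abscissaOfAbsConv_le_of_forall_lt_LSeriesSummable fun y hy ↦
    LSeriesSummable_twistLambda χ (by simpa using hy)

theorem LSeries_twistLambda_mul (χ : DirichletCharacter ℂ q) {s : ℂ} (hs : 1 < s.re) :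
    LSeries (twistLambda K χ) s * LSeries (twistCount K χ) s =
      -deriv (LSeries (twistCount K χ)) s := by
  have h1 : LSeries.abscissaOfAbsConv (twistCount K χ) < s.re :=
    (abscissa_twistCount_le χ).trans_lt (by exact_mod_cast hs)
  rw [LSeries_deriv h1, neg_neg, ← LSeries_convolution' (LSeriesSummable_twistLambda χ hs)
    (LSeriesSummable_twistCount χ hs)]
  refine LSeries_congr (fun {n} hn ↦ ?_) s
  rw [LSeries.convolution_def]
  have h2 := congrArg (fun x : ℝ ↦ χ n * (x : ℂ)) (sum_divisorsAntidiagonal_normLambda (K := K) n hn)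
  simp only [Complex.ofReal_sum, Complex.ofReal_mul, Complex.ofReal_natCast, Finset.mul_sum] at h2
  rw [LSeries.logMul, twistCount]
  rw [Complex.natCast_log] at h2
  calc _ = ∑ p ∈ n.divisorsAntidiagonal, χ n * (normLambda K p.1 * idealCount K p.2) := by
        refine Finset.sum_congr rfl fun p hp ↦ ?_
        rw [← (Nat.mem_divisorsAntidiagonal.mp hp).1, twistLambda, twistCount, Nat.cast_mul,
          map_mul]
        ring
    _ = _ := by
        rw [h2]
        ring

theorem twistLambda_mul_extension (χ : DirichletCharacter ℂ q) {F : ℂ → ℂ}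
    (hF : ∀ s : ℂ, 1 < s.re → F s = (s - 1) * LSeries (twistCount K χ) s) {s : ℂ}
    (hs : 1 < s.re) :
    LSeries (twistLambda K χ) s * F s = F s / (s - 1) - deriv F s := by
  have hs1 : s - 1 ≠ 0 := by
    intro h
    have := congrArg Complex.re h
    simp at this
    linarith
  have hL : HasDerivAt (LSeries (twistCount K χ)) (deriv (LSeries (twistCount K χ)) s) s :=
    (LSeries_hasDerivAt ((abscissa_twistCount_le χ).trans_lt
      (by exact_mod_cast hs))).differentiableAt.hasDerivAt
  have hev : F =ᶠ[𝓝 s] fun s ↦ (s - 1) * LSeries (twistCount K χ) s := by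
    filter_upwards [(isOpen_lt continuous_const Complex.continuous_re).mem_nhds hs] with z hz
    exact hF z hz
  have hd := ((((hasDerivAt_id s).sub_const 1).mul hL).congr_of_eventuallyEq hev).deriv
  simp only [id_eq, one_mul] at hd
  have h2 := LSeries_twistLambda_mul (K := K) χ hs
  rw [hd, hF s hs, mul_div_cancel_left₀ _ hs1]
  linear_combination (s - 1) * h2

variable [NeZero q]

theorem exists_twistCount_sum_asymp (χ : DirichletCharacter ℂ q) :
    ∃ ρ : ℂ, (fun X : ℝ ↦ ∑ k ∈ Finset.Icc 1 ⌊X⌋₊, twistCount K χ k - ρ * X) =O[atTop]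
      fun X : ℝ ↦ X ^ (1 - 1 / (Module.finrank ℚ K : ℝ)) := by
  choose κ hκ using fun a : ZMod q ↦ exists_idealCount_asymp K q a
  refine ⟨∑ a, χ a * κ a, ?_⟩
  have h1 : ∀ a : ZMod q, (fun X : ℝ ↦ χ a * ((∑ k ∈ Finset.Icc 1 ⌊X⌋₊ with ((k : ℕ) : ZMod q) = a,
      (idealCount K k : ℝ) - κ a * X : ℝ) : ℂ)) =O[atTop]
      fun X : ℝ ↦ X ^ (1 - 1 / (Module.finrank ℚ K : ℝ)) := by
    intro a
    refine IsBigO.const_mul_left ?_ _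
    exact (Complex.isBigO_ofReal_left).mpr (hκ a)
  refine (IsBigO.fun_sum (s := Finset.univ) fun a _ ↦ h1 a).congr_left fun X ↦ ?_
  rw [Finset.sum_mul, ← Finset.sum_fiberwise (Finset.Icc 1 ⌊X⌋₊) (fun k : ℕ ↦ (k : ZMod q)),
    ← Finset.sum_sub_distrib]
  refine Finset.sum_congr rfl fun a _ ↦ ?_
  push_cast
  rw [mul_sub, Finset.mul_sum, mul_assoc]
  congr 1
  refine Finset.sum_congr rfl fun k hk ↦ ?_
  rw [twistCount, (Finset.mem_filter.mp hk).2]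

theorem exists_twistCount_extension (χ : DirichletCharacter ℂ q) :
    ∃ F : ℂ → ℂ, (∀ s : ℂ, 1 ≤ s.re → AnalyticAt ℂ F s) ∧
      (∀ s : ℂ, 1 ≤ s.re → ¬ ∀ᶠ z in 𝓝 s, F z = 0) ∧
      ∀ s : ℂ, 1 < s.re → F s = (s - 1) * LSeries (twistCount K χ) s := by
  obtain ⟨ρ, hρ⟩ := exists_twistCount_sum_asymp (K := K) χ
  obtain ⟨F, hF, -, hFs⟩ := exists_LSeries_extension (twistCount K χ) ρ exponent_lt_one hρ
    (isBigO_sum_norm_twistCount χ)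
  set U : Set ℂ := {s | 1 - 1 / (Module.finrank ℚ K : ℝ) < s.re} with hU
  have hUo : IsOpen U := isOpen_lt continuous_const Complex.continuous_re
  have hmem : ∀ s : ℂ, 1 ≤ s.re → s ∈ U := fun s hs ↦ exponent_lt_one.trans_le hs
  have hA : AnalyticOnNhd ℂ F U := hF.analyticOnNhd hUo
  refine ⟨F, fun s hs ↦ hA s (hmem s hs), fun s hs h0 ↦ ?_, hFs⟩
  have hconv : IsPreconnected U := (convex_halfSpace_re_gt _).isPreconnected
  have hz := hA.eqOn_zero_of_preconnected_of_eventuallyEq_zero hconv (hmem s hs) h0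
  have hlim : Tendsto (fun x : ℝ ↦ LSeries (twistCount K χ) x) atTop (𝓝 (twistCount K χ 1)) :=
    LSeries.tendsto_atTop ((abscissa_twistCount_le χ).trans_lt (EReal.coe_lt_top 1))
  have hlim0 : Tendsto (fun x : ℝ ↦ LSeries (twistCount K χ) x) atTop (𝓝 0) := by
    refine tendsto_const_nhds.congr' ?_
    filter_upwards [eventually_gt_atTop 1] with x hx
    have h1 : F x = 0 := hz (hmem x (by simpa using hx.le))
    rw [hFs x (by simpa using hx)] at h1
    rcases mul_eq_zero.mp h1 with h2 | h2
    · have : (x : ℂ) = 1 := sub_eq_zero.mp h2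
      have : x = 1 := by exact_mod_cast this
      linarith
    · exact h2.symm
  have h1 := tendsto_nhds_unique hlim hlim0
  simp [twistCount, idealCount_one] at h1

end TwistedSeries

section PoleOrders
open Filter Asymptotics Set
open scoped Topology

/-- The logarithmic derivative of an analytic function that is not locally zero. -/
theorem exists_order_logDeriv {F : ℂ → ℂ} {z₀ : ℂ} (hF : AnalyticAt ℂ F z₀)
    (h0 : ¬ ∀ᶠ z in 𝓝 z₀, F z = 0) :
    ∃ k : ℕ, Tendsto (fun z ↦ (z - z₀) * (deriv F z / F z)) (𝓝[≠] z₀) (𝓝 k) ∧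
      (k = 0 → F z₀ ≠ 0) ∧ (k = 1 → F z₀ = 0 ∧ deriv F z₀ ≠ 0) := by
  have hord : analyticOrderAt F z₀ ≠ ⊤ := by rwa [Ne, analyticOrderAt_eq_top]
  obtain ⟨g, hg, hg0, hFg⟩ := hF.analyticOrderAt_ne_top.mp hord
  set k := analyticOrderNatAt F z₀
  simp only [smul_eq_mul] at hFg
  have hd : ∀ᶠ z in 𝓝 z₀, deriv F z = k * (z - z₀) ^ (k - 1) * g z + (z - z₀) ^ k * deriv g z := by
    filter_upwards [hFg.eventually_nhds, hg.eventually_analyticAt] with z hz hgz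
    have h1 : HasDerivAt (fun z ↦ (z - z₀) ^ k * g z)
        (k * (z - z₀) ^ (k - 1) * g z + (z - z₀) ^ k * deriv g z) z := by
      have h2 := (((hasDerivAt_id z).sub_const z₀).pow k).mul hgz.differentiableAt.hasDerivAt
      refine h2.congr_deriv ?_
      simp
    exact (h1.congr_of_eventuallyEq hz).deriv
  refine ⟨k, ?_, ?_, ?_⟩
  · have h1 : Tendsto (fun z ↦ (k : ℂ) + (z - z₀) * (deriv g z / g z)) (𝓝[≠] z₀) (𝓝 k) := by
      have h2 : ContinuousAt (fun z ↦ (k : ℂ) + (z - z₀) * (deriv g z / g z)) z₀ :=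
        continuousAt_const.add ((continuousAt_id.sub continuousAt_const).mul
          (hg.deriv.continuousAt.div hg.continuousAt hg0))
      have h3 := h2.tendsto.mono_left (nhdsWithin_le_nhds (s := {z₀}ᶜ))
      simpa using h3
    refine h1.congr' ?_
    filter_upwards [nhdsWithin_le_nhds hd, nhdsWithin_le_nhds hFg,
      nhdsWithin_le_nhds (hg.continuousAt.eventually_ne hg0), self_mem_nhdsWithin] with z h1 h2 h3 h4
    have h5 : z - z₀ ≠ 0 := sub_ne_zero.mpr h4
    rw [h1, h2]
    rcases Nat.eq_zero_or_pos k with hk | hk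
    · simp [hk]
    · obtain ⟨j, hj⟩ : ∃ j, k = j + 1 := ⟨k - 1, by omega⟩
      rw [hj]
      simp only [Nat.add_sub_cancel]
      field_simp
      ring
  · intro hk
    rw [hFg.self_of_nhds, hk]
    simpa using hg0
  · intro hk
    refine ⟨?_, ?_⟩
    · rw [hFg.self_of_nhds, hk]
      simp
    · rw [hd.self_of_nhds, hk]
      simpa using hg0

variable {K : Type*} [Field K] [NumberField K] {q : ℕ}

theorem exists_order_twistLambda (χ : DirichletCharacter ℂ q) {F : ℂ → ℂ}
    (hFa : ∀ s : ℂ, 1 ≤ s.re → AnalyticAt ℂ F s)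
    (hF0 : ∀ s : ℂ, 1 ≤ s.re → ¬ ∀ᶠ z in 𝓝 s, F z = 0)
    (hF : ∀ s : ℂ, 1 < s.re → F s = (s - 1) * LSeries (twistCount K χ) s) (t : ℝ) :
    ∃ k : ℕ, Tendsto (fun ε : ℝ ↦ ε * LSeries (twistLambda K χ) (1 + ε + Complex.I * t)) (𝓝[>] 0)
        (𝓝 ((if t = 0 then 1 else 0) - k)) ∧
      (k = 0 → F (1 + Complex.I * t) ≠ 0) ∧
      (k = 1 → F (1 + Complex.I * t) = 0 ∧ deriv F (1 + Complex.I * t) ≠ 0) := by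
  set z₀ : ℂ := 1 + Complex.I * t with hz₀
  have hre : (1 : ℝ) ≤ z₀.re := by simp [hz₀]
  obtain ⟨k, hk, hk0, hk1⟩ := exists_order_logDeriv (hFa z₀ hre) (hF0 z₀ hre)
  refine ⟨k, ?_, hk0, hk1⟩
  have hpath : Tendsto (fun ε : ℝ ↦ (1 + ε + Complex.I * t : ℂ)) (𝓝[>] 0) (𝓝[≠] z₀) := by
    refine tendsto_nhdsWithin_iff.mpr ⟨?_, ?_⟩
    · have : Continuous fun ε : ℝ ↦ (1 + ε + Complex.I * t : ℂ) := by fun_prop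
      have h1 := (this.tendsto 0).mono_left (nhdsWithin_le_nhds (s := Ioi 0))
      simpa [hz₀] using h1
    · filter_upwards [self_mem_nhdsWithin] with ε hε h
      have := congrArg Complex.re h
      simp [hz₀] at this
      exact (mem_Ioi.mp hε).ne' this
  have hne : ∀ᶠ z in 𝓝[≠] z₀, F z ≠ 0 :=
    ((hFa z₀ hre).eventually_eq_zero_or_eventually_ne_zero).resolve_left (hF0 z₀ hre)
  have hpole : Tendsto (fun ε : ℝ ↦ (ε : ℂ) / (ε + Complex.I * t)) (𝓝[>] 0)
      (𝓝 (if t = 0 then 1 else 0)) := by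
    split_ifs with ht
    · refine tendsto_const_nhds.congr' ?_
      filter_upwards [self_mem_nhdsWithin] with ε hε
      have : (ε : ℂ) ≠ 0 := by exact_mod_cast (mem_Ioi.mp hε).ne'
      simp [ht, this]
    · have h1 : ContinuousAt (fun ε : ℝ ↦ (ε : ℂ) / (ε + Complex.I * t)) 0 := by
        refine ContinuousAt.div (by fun_prop) (by fun_prop) ?_
        simpa using ht
      have h2 := h1.tendsto.mono_left (nhdsWithin_le_nhds (s := Ioi 0))
      simpa using h2
  refine (hpole.sub (hk.comp hpath)).congr' ?_
  filter_upwards [self_mem_nhdsWithin, hpath.eventually hne] with ε hε h1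
  have hs : 1 < (1 + ε + Complex.I * t : ℂ).re := by simpa using mem_Ioi.mp hε
  have h2 := twistLambda_mul_extension χ hF hs
  have h3 : LSeries (twistLambda K χ) (1 + ε + Complex.I * t) =
      1 / (1 + ε + Complex.I * t - 1) - deriv F (1 + ε + Complex.I * t) /
        F (1 + ε + Complex.I * t) := by
    rw [eq_sub_iff_add_eq, ← mul_left_inj' h1, add_mul, h2, div_mul_cancel₀ _ h1]
    ring
  rw [h3]
  simp only [Function.comp_apply, hz₀]
  rw [show (1 + ε + Complex.I * t - 1 : ℂ) = ε + Complex.I * t by ring,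
    show (1 + ε + Complex.I * t - (1 + Complex.I * t) : ℂ) = ε by ring]
  ring

theorem twistLambda_comb_nonneg (χ : DirichletCharacter ℂ q) {ε : ℝ} (hε : 0 < ε) (t : ℝ) :
    0 ≤ (3 * LSeries (twistLambda K (1 : DirichletCharacter ℂ q)) (1 + ε + Complex.I * (0 : ℝ)) +
      4 * LSeries (twistLambda K χ) (1 + ε + Complex.I * t) +
      LSeries (twistLambda K (χ ^ 2)) (1 + ε + Complex.I * (2 * t : ℝ))).re := by
  have hre : ∀ t : ℝ, 1 < (1 + ε + Complex.I * t : ℂ).re := fun t ↦ by simpa using hε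
  have h1 := (LSeriesSummable_twistLambda (K := K) (1 : DirichletCharacter ℂ q) (hre 0)).hasSum
  have h2 := (LSeriesSummable_twistLambda (K := K) χ (hre t)).hasSum
  have h3 := (LSeriesSummable_twistLambda (K := K) (χ ^ 2) (hre (2 * t))).hasSum
  have h4 := ((h1.mul_left 3).add (h2.mul_left 4)).add h3
  refine (Complex.hasSum_re h4).nonneg fun n ↦ ?_
  rcases eq_or_ne n 0 with rfl | hn
  · simp
  have hn' : (n : ℂ) ≠ 0 := by exact_mod_cast hn
  rw [LSeries.term_of_ne_zero hn, LSeries.term_of_ne_zero hn, LSeries.term_of_ne_zero hn]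
  set w : ℂ := (n : ℂ) ^ (-(Complex.I * t)) with hw
  have hpow : ∀ u : ℂ, ((n : ℂ) ^ (1 + ε + u))⁻¹ = ((n : ℝ) ^ (-(1 + ε)) : ℝ) * (n : ℂ) ^ (-u) := by
    intro u
    rw [← Complex.cpow_neg, neg_add, Complex.cpow_add _ _ hn',
      Complex.ofReal_cpow (Nat.cast_nonneg n)]
    push_cast
    rfl
  have hw1 : ‖w‖ = 1 := by
    rw [hw, Complex.norm_natCast_cpow_of_pos (Nat.pos_of_ne_zero hn)]
    simp
  have hw2 : (n : ℂ) ^ (-(Complex.I * (2 * t : ℝ))) = w ^ 2 := by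
    rw [hw, ← Complex.cpow_nat_mul]
    congr 1
    push_cast
    ring
  have hw0 : (n : ℂ) ^ (-(Complex.I * (0 : ℝ))) = 1 := by simp
  rw [div_eq_mul_inv, div_eq_mul_inv, div_eq_mul_inv, hpow, hpow, hpow, hw2, ← hw, hw0]
  simp only [twistLambda]
  set r : ℝ := (n : ℝ) ^ (-(1 + ε)) with hr
  have hr0 : 0 ≤ r := by positivity
  have hL := normLambda_nonneg (K := K) n
  by_cases hu : IsUnit (n : ZMod q)
  · have hχ : ‖χ n * w‖ = 1 := by
      obtain ⟨u, hu⟩ := hu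
      rw [norm_mul, hw1, mul_one, ← hu, χ.unit_norm_eq_one]
    have e : 3 * ((1 : DirichletCharacter ℂ q) n * (normLambda K n : ℂ) * (r * 1)) +
        4 * (χ n * (normLambda K n : ℂ) * (r * w)) +
          (χ ^ 2) n * (normLambda K n : ℂ) * (r * w ^ 2) =
        ((normLambda K n * r : ℝ) : ℂ) * (3 + 4 * (χ n * w) + (χ n * w) ^ 2) := by
      rw [MulChar.one_apply hu, MulChar.pow_apply' _ two_ne_zero]
      push_cast
      ring
    rw [e, Complex.re_ofReal_mul]
    refine mul_nonneg (mul_nonneg hL hr0) ?_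
    set z := χ n * w
    have hz : z.re * z.re + z.im * z.im = 1 := by
      rw [← Complex.normSq_apply, Complex.normSq_eq_norm_sq, hχ, one_pow]
    have : (3 + 4 * z + z ^ 2).re = 2 * (1 + z.re) ^ 2 := by
      simp [pow_two]
      nlinarith
    rw [this]
    positivity
  · rw [MulChar.map_nonunit _ hu, MulChar.map_nonunit _ hu, MulChar.map_nonunit _ hu]
    simp

variable [NeZero q]

theorem twistLambda_order_eq_zero (χ : DirichletCharacter ℂ q) {t : ℝ} (ht : t ≠ 0) {k : ℕ}
    (hk : Tendsto (fun ε : ℝ ↦ ε * LSeries (twistLambda K χ) (1 + ε + Complex.I * t)) (𝓝[>] 0)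
        (𝓝 ((if t = 0 then 1 else 0) - k))) : k = 0 := by
  obtain ⟨F₀, ha₀, hn₀, hF₀⟩ := exists_twistCount_extension (K := K) (1 : DirichletCharacter ℂ q)
  obtain ⟨F₂, ha₂, hn₂, hF₂⟩ := exists_twistCount_extension (K := K) (χ ^ 2)
  obtain ⟨k₀, h₀, -⟩ := exists_order_twistLambda 1 ha₀ hn₀ hF₀ 0
  obtain ⟨k₂, h₂, -⟩ := exists_order_twistLambda (χ ^ 2) ha₂ hn₂ hF₂ (2 * t)
  rw [if_pos rfl] at h₀
  rw [if_neg ht] at hk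
  rw [if_neg (mul_ne_zero two_ne_zero ht)] at h₂
  have h1 := ((h₀.const_mul 3).add (hk.const_mul 4)).add h₂
  have h2 := (Complex.continuous_re.tendsto _).comp h1
  have h3 := ge_of_tendsto h2 (b := 0) (by
    filter_upwards [self_mem_nhdsWithin] with ε hε
    have hε := mem_Ioi.mp hε
    have h4 := mul_nonneg hε.le (twistLambda_comb_nonneg (K := K) χ hε t)
    rw [← Complex.re_ofReal_mul] at h4
    simp only [Function.comp_apply]
    convert h4 using 2
    ring)
  have h5 : (0 : ℝ) ≤ 3 * (1 - k₀) + 4 * (0 - k) + (0 - k₂) := by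
    simpa using h3
  by_contra h
  have h6 : (1 : ℝ) ≤ k := by exact_mod_cast Nat.one_le_iff_ne_zero.mpr h
  have h7 : (0 : ℝ) ≤ k₀ := Nat.cast_nonneg _
  have h8 : (0 : ℝ) ≤ k₂ := Nat.cast_nonneg _
  linarith

end PoleOrders

section BoundaryContinuity
open Filter Asymptotics Set
open scoped Topology

variable {K : Type*} [Field K] [NumberField K] {q : ℕ}

theorem exists_continuousOn_of_logDeriv (χ : DirichletCharacter ℂ q) (m : ℂ) {E : ℂ → ℂ}
    (hEa : ∀ s : ℂ, 1 ≤ s.re → AnalyticAt ℂ E s) (hE0 : ∀ s : ℂ, s.re = 1 → E s ≠ 0)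
    (hE : ∀ s : ℂ, 1 < s.re →
      LSeries (twistLambda K χ) s * E s = m * E s / (s - 1) - deriv E s) :
    ∃ G : ℂ → ℂ, ContinuousOn G {s | 1 ≤ s.re} ∧
      ∀ s : ℂ, 1 < s.re → G s = LSeries (twistLambda K χ) s - m / (s - 1) := by
  refine ⟨fun s ↦ if 1 < s.re then LSeries (twistLambda K χ) s - m / (s - 1) else
    -(deriv E s / E s), fun s hs ↦ ?_, fun s hs ↦ if_pos hs⟩
  rcases (show 1 ≤ s.re from hs).lt_or_eq with h | h
  · refine ContinuousAt.continuousWithinAt ?_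
    have h1 : DifferentiableAt ℂ (LSeries (twistLambda K χ)) s :=
      (LSeries_hasDerivAt ((abscissa_twistLambda_le χ).trans_lt
        (by exact_mod_cast h))).differentiableAt
    have hs1 : s - 1 ≠ 0 := by
      intro h'
      have := congrArg Complex.re h'
      simp at this
      linarith
    have h2 : ContinuousAt (fun s ↦ LSeries (twistLambda K χ) s - m / (s - 1)) s :=
      h1.continuousAt.sub (continuousAt_const.div (by fun_prop) hs1)
    refine h2.congr ?_
    filter_upwards [(isOpen_lt continuous_const Complex.continuous_re).mem_nhds h] with z hz
    exact (if_pos hz).symm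
  · have hEs := hE0 s h.symm
    have h2 : ContinuousWithinAt (fun s ↦ -(deriv E s / E s)) {s | 1 ≤ s.re} s :=
      ((hEa s hs).deriv.continuousAt.div (hEa s hs).continuousAt hEs).neg.continuousWithinAt
    refine h2.congr_of_eventuallyEq ?_ (if_neg (by rw [← h]; exact lt_irrefl 1))
    filter_upwards [nhdsWithin_le_nhds ((hEa s hs).continuousAt.eventually_ne hEs)] with z hz
    split_ifs with h3
    · have h4 := hE z h3
      rw [sub_eq_iff_eq_add, ← mul_left_inj' hz, h4, add_mul, neg_mul, div_mul_cancel₀ _ hz]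
      ring
    · rfl

variable [NeZero q]

theorem exists_continuousOn_twistLambda (χ : DirichletCharacter ℂ q) {m : ℕ} (hm : m = 0 ∨ m = 1)
    (hlim : Tendsto (fun ε : ℝ ↦ (ε : ℂ) * LSeries (twistLambda K χ) (1 + ε)) (𝓝[>] 0) (𝓝 m)) :
    ∃ G : ℂ → ℂ, ContinuousOn G {s | 1 ≤ s.re} ∧
      ∀ s : ℂ, 1 < s.re → G s = LSeries (twistLambda K χ) s - m / (s - 1) := by
  obtain ⟨F, hFa, hF0, hF⟩ := exists_twistCount_extension (K := K) χ
  obtain ⟨k, hk, hk0, hk1⟩ := exists_order_twistLambda χ hFa hF0 hF 0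
  simp only [Complex.ofReal_zero, mul_zero, add_zero, if_true] at hk hk0 hk1
  have hmk : m + k = 1 := by
    have h1 := tendsto_nhds_unique hlim hk
    have h2 : ((m + k : ℕ) : ℂ) = (1 : ℕ) := by
      push_cast
      rw [h1]
      ring
    exact_mod_cast h2
  have hline : ∀ s : ℂ, s.re = 1 → s ≠ 1 → F s ≠ 0 := by
    intro s hs hs1
    have e : s = 1 + Complex.I * s.im := by
      apply Complex.ext <;> simp [hs]
    have him : s.im ≠ 0 := by
      intro h
      rw [h] at e
      simp at e
      exact hs1 e
    obtain ⟨j, hj, hj0, -⟩ := exists_order_twistLambda χ hFa hF0 hF s.im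
    rw [e]
    exact hj0 (twistLambda_order_eq_zero χ him hj)
  rcases hm with rfl | rfl
  · obtain ⟨hF1, hF1'⟩ := hk1 (by omega)
    set V : Set ℂ := {z | AnalyticAt ℂ F z} with hV
    have hVo : IsOpen V := isOpen_analyticAt ℂ F
    have h1V : (1 : ℂ) ∈ V := hFa 1 (by simp)
    have hd : DifferentiableOn ℂ (dslope F 1) V :=
      (Complex.differentiableOn_dslope (hVo.mem_nhds h1V)).mpr fun z hz ↦
        (AnalyticAt.differentiableAt hz).differentiableWithinAt
    have hmul : ∀ z, F z = (z - 1) * dslope F 1 z := by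
      intro z
      have := sub_smul_dslope F 1 z
      rw [smul_eq_mul, hF1, sub_zero] at this
      exact this.symm
    refine exists_continuousOn_of_logDeriv χ _ (E := dslope F 1)
      (fun s hs ↦ hd.analyticOnNhd hVo s (hFa s hs)) ?_ ?_
    · intro s hs
      by_cases hs1 : s = 1
      · rw [hs1, dslope_same]
        exact hF1'
      · intro h0
        exact hline s hs hs1 (by rw [hmul, h0, mul_zero])
    · intro s hs
      have hs1 : s - 1 ≠ 0 := by
        intro h'
        have := congrArg Complex.re h'
        simp at this
        linarith
      have h1 : DifferentiableAt ℂ (dslope F 1) s :=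
        (hd.analyticOnNhd hVo s (hFa s hs.le)).differentiableAt
      have h2 : HasDerivAt F (1 * dslope F 1 s + (s - 1) * deriv (dslope F 1) s) s := by
        have h3 := ((hasDerivAt_id s).sub_const 1).mul h1.hasDerivAt
        exact h3.congr_of_eventuallyEq (Eventually.of_forall hmul)
      have h3 := twistLambda_mul_extension χ hF hs
      rw [h2.deriv, hmul s, mul_div_cancel_left₀ _ hs1] at h3
      rw [Nat.cast_zero, zero_mul, zero_div, zero_sub]
      refine mul_left_cancel₀ hs1 ?_
      linear_combination h3
  · refine exists_continuousOn_of_logDeriv χ _ hFa ?_ ?_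
    · intro s hs
      by_cases hs1 : s = 1
      · rw [hs1]
        exact hk0 (by omega)
      · exact hline s hs hs1
    · intro s hs
      rw [Nat.cast_one, one_mul]
      exact twistLambda_mul_extension χ hF hs

/-- The order of the pole of the twisted series at `1` is an integer, at most `1`. -/
theorem exists_tendsto_twistLambda (χ : DirichletCharacter ℂ q) :
    ∃ m : ℤ, m ≤ 1 ∧
      Tendsto (fun ε : ℝ ↦ (ε : ℂ) * LSeries (twistLambda K χ) (1 + ε)) (𝓝[>] 0) (𝓝 m) := by
  obtain ⟨F, hFa, hF0, hF⟩ := exists_twistCount_extension (K := K) χ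
  obtain ⟨k, hk, -⟩ := exists_order_twistLambda χ hFa hF0 hF 0
  simp only [Complex.ofReal_zero, mul_zero, add_zero, if_true] at hk
  refine ⟨1 - k, by omega, ?_⟩
  simpa using hk

end BoundaryContinuity

section PoleOrders

theorem card_dvd_sum_of_mul_right_eq {A : Type*} [CommGroup A] [Fintype A] (P : Subgroup A)
    (f : A → ℤ) (hf : ∀ a, ∀ p ∈ P, f (a * p) = f a) : (Nat.card P : ℤ) ∣ ∑ a, f a := by
  let e : (A ⧸ P) × P → A := fun c ↦ Quotient.out c.1 * c.2
  have he : Function.Bijective e := by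
    refine ⟨fun ⟨c, p⟩ ⟨c', p'⟩ h ↦ ?_, fun a ↦ ?_⟩
    · simp only [e] at h
      have h1 : c = c' := by
        have h2 := congrArg (QuotientGroup.mk (s := P)) h
        rw [QuotientGroup.mk_mul_of_mem _ p.2, QuotientGroup.mk_mul_of_mem _ p'.2] at h2
        simpa using h2
      subst h1
      rw [Subtype.ext (mul_left_cancel h)]
    · obtain ⟨p, hp⟩ := QuotientGroup.mk_out_eq_mul P a
      refine ⟨(QuotientGroup.mk a, p⁻¹), ?_⟩
      simp only [e]
      rw [hp]
      simp
  rw [← he.sum_comp f, Fintype.sum_prod_type]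
  refine Finset.dvd_sum fun c _ ↦ ?_
  simp only [e]
  rw [Finset.sum_congr rfl fun p _ ↦ hf _ _ p.2]
  simp [Nat.card_eq_fintype_card]

variable {q : ℕ} [NeZero q]

theorem eq_one_of_sum_mul_eq_one (χ : DirichletCharacter ℂ q) {d : (ZMod q)ˣ → ℝ}
    (hd : ∀ u, 0 ≤ d u) (hd1 : ∑ u, d u = 1)
    (h : ∑ u : (ZMod q)ˣ, χ u * (d u : ℂ) = 1) {u : (ZMod q)ˣ} (hu : d u ≠ 0) : χ u = 1 := by
  have h1 : ∑ u : (ZMod q)ˣ, (1 - (χ u).re) * d u = 0 := by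
    have h2 := congrArg Complex.re h
    simp only [Complex.re_sum, Complex.re_mul_ofReal, Complex.one_re] at h2
    simp only [sub_mul, one_mul, Finset.sum_sub_distrib, hd1, h2, sub_self]
  have hn : ∀ v : (ZMod q)ˣ, ‖χ v‖ = 1 := fun v ↦ χ.unit_norm_eq_one v
  have hre : ∀ v : (ZMod q)ˣ, (χ v).re ≤ 1 := fun v ↦ (Complex.re_le_norm _).trans (hn v).le
  have h3 := (Finset.sum_eq_zero_iff_of_nonneg fun v _ ↦
    mul_nonneg (sub_nonneg.mpr (hre v)) (hd v)).mp h1 u (Finset.mem_univ u)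
  have h4 : (χ u).re = 1 := by
    rcases mul_eq_zero.mp h3 with h | h
    · linarith
    · exact absurd h hu
  have h5 : (χ u).im = 0 := by
    have h6 := Complex.sq_norm (χ u)
    rw [hn u, Complex.normSq_apply, h4] at h6
    nlinarith
  exact Complex.ext h4 h5

/-- Fourier inversion for functions on the unit group. -/
theorem sum_char_inv_mul {m : DirichletCharacter ℂ q → ℂ} {d : (ZMod q)ˣ → ℂ}
    (hmd : ∀ χ, m χ = ∑ u : (ZMod q)ˣ, χ u * d u) (v : (ZMod q)ˣ) :
    ∑ χ : DirichletCharacter ℂ q, χ ((v⁻¹ : (ZMod q)ˣ) : ZMod q) * m χ = q.totient * d v := by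
  simp only [hmd, Finset.mul_sum]
  rw [Finset.sum_comm]
  simp only [← mul_assoc, ← Finset.sum_mul]
  have h : ∀ u : (ZMod q)ˣ, ∑ χ : DirichletCharacter ℂ q, χ ((v⁻¹ : (ZMod q)ˣ) : ZMod q) * χ u =
      if u = v then (q.totient : ℂ) else 0 := by
    intro u
    have h1 := DirichletCharacter.sum_char_inv_mul_char_eq ℂ v.isUnit (u : ZMod q)
    rw [ZMod.inv_coe_unit] at h1
    rw [h1]
    simp only [Units.val_inj, eq_comm]
  simp only [h, ite_mul, zero_mul, Finset.sum_ite_eq', Finset.mem_univ, if_true]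

/-- Integer pole orders `m χ ≤ 1` which are the Fourier coefficients of a probability measure `d` on
a subgroup `G` whose mass at `1` is positive and at most `1 / |G|` force `d` to be uniform. -/
theorem pole_orders_eq (G : Subgroup (ZMod q)ˣ) (m : DirichletCharacter ℂ q → ℤ)
    (d : (ZMod q)ˣ → ℝ) (hm1 : ∀ χ, m χ ≤ 1) (hd : ∀ u, 0 ≤ d u) (hsupp : ∀ u ∉ G, d u = 0)
    (hmd : ∀ χ, (m χ : ℂ) = ∑ u : (ZMod q)ˣ, χ u * (d u : ℂ)) (h1 : m 1 = 1) (hpos : 0 < d 1)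
    (hle : Nat.card G * d 1 ≤ 1) :
    (∀ χ, m χ = 0 ∨ m χ = 1) ∧ ∀ u ∈ G, d u = 1 / Nat.card G := by
  have hd1 : ∑ u, d u = 1 := by
    have h := hmd 1
    rw [h1] at h
    simp only [MulChar.one_apply_coe, one_mul] at h
    exact_mod_cast h.symm
  let perp : Subgroup (ZMod q)ˣ → Subgroup (DirichletCharacter ℂ q) := fun H ↦
    (MulChar.subgroupOrderIsoSubgroupMulChar (ZMod q) ℂ H).ofDual
  have hperp : ∀ H χ, χ ∈ perp H ↔ ∀ u ∈ H, χ (u : ZMod q) = 1 := fun H χ ↦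
    MulChar.mem_subgroupOrderIsoSubgroupMulChar_iff
  have hperpcard : Nat.card (perp G) * Nat.card G = q.totient := by
    rw [MulChar.card_subgroupOrderIsoSubgroupMulChar, ← Subgroup.card_eq_card_quotient_mul_card_subgroup,
      Nat.card_eq_fintype_card, ZMod.card_units_eq_totient]
  let P := perp (Subgroup.closure {u | d u ≠ 0})
  have hP : ∀ χ, χ ∈ P ↔ ∀ u : (ZMod q)ˣ, d u ≠ 0 → χ u = 1 := by
    intro χ
    rw [hperp]
    refine ⟨fun h u hu ↦ h u (Subgroup.subset_closure hu), fun h u hu ↦ ?_⟩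
    induction hu using Subgroup.closure_induction with
    | mem u hu => exact h u hu
    | one => simp
    | mul u v _ _ hu hv => simp [hu, hv]
    | inv u _ hu =>
      have h2 : χ (u : ZMod q) * χ ((u⁻¹ : (ZMod q)ˣ) : ZMod q) = 1 := by
        rw [← map_mul]
        simp
      rwa [hu, one_mul] at h2
  have hGP : perp G ≤ P := by
    intro χ hχ
    rw [hP]
    intro u hu
    refine (hperp G χ).mp hχ u ?_
    by_contra h
    exact hu (hsupp u h)
  have hmP : ∀ χ ∈ P, ∀ ψ, m (ψ * χ) = m ψ := by
    intro χ hχ ψ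
    have h : (m (ψ * χ) : ℂ) = m ψ := by
      rw [hmd, hmd]
      refine Finset.sum_congr rfl fun u _ ↦ ?_
      by_cases hu : d u = 0
      · simp [hu]
      · rw [MulChar.mul_apply, (hP χ).mp hχ u hu, mul_one]
    exact_mod_cast h
  have hP1 : ∀ χ, χ ∈ P ↔ m χ = 1 := by
    intro χ
    refine ⟨fun h ↦ ?_, fun h ↦ (hP χ).mpr fun u hu ↦ ?_⟩
    · rw [← h1, ← hmP χ h 1, one_mul]
    · refine eq_one_of_sum_mul_eq_one χ hd hd1 ?_ hu
      rw [← hmd, h, Int.cast_one]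
  have hinv := fun v ↦ sum_char_inv_mul (m := fun χ ↦ (m χ : ℂ)) (d := fun u ↦ (d u : ℂ)) hmd v
  have htot : ((∑ χ, m χ : ℤ) : ℝ) = q.totient * d 1 := by
    have h := hinv 1
    simp only [inv_one, Units.val_one, map_one, one_mul] at h
    exact_mod_cast h
  have hφ : (0 : ℝ) < q.totient := by exact_mod_cast Nat.totient_pos.mpr (NeZero.pos q)
  have hcG : 0 < Nat.card G := Nat.card_pos
  have hcP : 0 < Nat.card (perp G) := Nat.card_pos
  have hSpos : 0 < ∑ χ, m χ := by
    have : (0 : ℝ) < ((∑ χ, m χ : ℤ) : ℝ) := htot ▸ mul_pos hφ hpos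
    exact_mod_cast this
  have hSle : ∑ χ, m χ ≤ Nat.card (perp G) := by
    have : ((∑ χ, m χ : ℤ) : ℝ) ≤ Nat.card (perp G) := by
      rw [htot, ← hperpcard]
      push_cast
      rw [mul_assoc]
      exact mul_le_of_le_one_right (by positivity) hle
    exact_mod_cast this
  have hcard : Nat.card (perp G) ≤ Nat.card P := Nat.card_mono (Set.toFinite _) hGP
  have hSge : (Nat.card P : ℤ) ≤ ∑ χ, m χ :=
    Int.le_of_dvd hSpos (card_dvd_sum_of_mul_right_eq P m fun a p hp ↦ hmP p hp a)
  have hceq : Nat.card (perp G) = Nat.card P := by omega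
  have hSeq : ∑ χ, m χ = Nat.card P := by omega
  have hPG : P = perp G := by
    symm
    exact SetLike.coe_injective (Set.eq_of_subset_of_ncard_le hGP hceq.ge (Set.toFinite _))
  have hsplit : ∑ χ, m χ = Nat.card P + ∑ χ with χ ∉ P, m χ := by
    rw [← Finset.sum_filter_add_sum_filter_not Finset.univ (· ∈ P)]
    congr 1
    rw [Finset.sum_congr rfl fun χ hχ ↦ (hP1 χ).mp (Finset.mem_filter.mp hχ).2]
    simp [Nat.card_eq_fintype_card, Fintype.card_subtype]
  have hneg : ∀ χ, χ ∉ P → m χ ≤ 0 := by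
    intro χ hχ
    have := hm1 χ
    have h2 : m χ ≠ 1 := fun h ↦ hχ ((hP1 χ).mpr h)
    omega
  have hzero : ∀ χ, χ ∉ P → m χ = 0 := by
    intro χ hχ
    have h0 : ∑ χ with χ ∉ P, m χ = 0 := by omega
    exact (Finset.sum_eq_zero_iff_of_nonpos fun ψ hψ ↦ hneg ψ (Finset.mem_filter.mp hψ).2).mp h0 χ
      (by simp [hχ])
  refine ⟨fun χ ↦ (em (χ ∈ P)).elim (fun h ↦ .inr ((hP1 χ).mp h)) fun h ↦ .inl (hzero χ h), ?_⟩
  have hconst : ∀ u ∈ G, d u = d 1 := by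
    intro u hu
    have h : (q.totient : ℂ) * d u = q.totient * d 1 := by
      rw [← hinv u, ← hinv 1]
      refine Finset.sum_congr rfl fun χ _ ↦ ?_
      by_cases hχ : χ ∈ P
      · rw [hPG, hperp] at hχ
        rw [hχ _ (inv_mem hu), hχ _ (inv_mem (one_mem G))]
      · simp [hzero χ hχ]
    have h' : (q.totient : ℝ) * d u = q.totient * d 1 := by exact_mod_cast h
    exact mul_left_cancel₀ hφ.ne' h'
  intro u hu
  have hsum : Nat.card G * d 1 = 1 := by
    rw [← hd1, ← Finset.sum_filter_add_sum_filter_not Finset.univ (· ∈ G),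
      Finset.sum_congr rfl fun v hv ↦ hconst v (Finset.mem_filter.mp hv).2,
      Finset.sum_eq_zero fun v hv ↦ hsupp v (Finset.mem_filter.mp hv).2]
    simp [Nat.card_eq_fintype_card, Fintype.card_subtype]
  rw [hconst u hu, eq_div_iff (by positivity), mul_comm, hsum]

end PoleOrders

section Residues
open Filter Set
open scoped Topology

/-- The Dirichlet series of `f` behaves like `c / ε` at `1 + ε`, as `ε → 0+`. -/
def HasResidue (f : ℕ → ℝ) (c : ℝ) : Prop :=
  Tendsto (fun ε : ℝ ↦ ε * ∑' n : ℕ, f n / (n : ℝ) ^ (1 + ε)) (𝓝[>] 0) (𝓝 c)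

theorem LSeries_term_ofReal (f : ℕ → ℝ) {ε : ℝ} (hε : 0 < ε) (n : ℕ) :
    LSeries.term (fun n ↦ (f n : ℂ)) (1 + ε) n = ((f n / (n : ℝ) ^ (1 + ε) : ℝ) : ℂ) := by
  rcases eq_or_ne n 0 with rfl | hn
  · rw [LSeries.term_zero, Nat.cast_zero, Real.zero_rpow (by linarith)]
    simp
  · rw [LSeries.term_of_ne_zero hn, Complex.ofReal_div, Complex.ofReal_cpow (Nat.cast_nonneg n)]
    push_cast
    rfl

theorem LSeries_ofReal (f : ℕ → ℝ) {ε : ℝ} (hε : 0 < ε) :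
    LSeries (fun n ↦ (f n : ℂ)) (1 + ε) = ((∑' n : ℕ, f n / (n : ℝ) ^ (1 + ε) : ℝ) : ℂ) := by
  rw [LSeries, Complex.ofReal_tsum]
  exact tsum_congr fun n ↦ LSeries_term_ofReal f hε n

theorem hasResidue_of_tendsto {f : ℕ → ℝ} {z : ℂ}
    (h : Tendsto (fun ε : ℝ ↦ (ε : ℂ) * LSeries (fun n ↦ (f n : ℂ)) (1 + ε)) (𝓝[>] 0) (𝓝 z)) :
    HasResidue f z.re := by
  refine ((Complex.continuous_re.tendsto z).comp h).congr' ?_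
  filter_upwards [self_mem_nhdsWithin] with ε hε
  rw [Function.comp_apply, LSeries_ofReal f (mem_Ioi.mp hε), ← Complex.ofReal_mul,
    Complex.ofReal_re]

theorem HasResidue.tendsto {f : ℕ → ℝ} {c : ℝ} (h : HasResidue f c) :
    Tendsto (fun ε : ℝ ↦ (ε : ℂ) * LSeries (fun n ↦ (f n : ℂ)) (1 + ε)) (𝓝[>] 0) (𝓝 c) := by
  refine ((Complex.continuous_ofReal.tendsto c).comp h).congr' ?_
  filter_upwards [self_mem_nhdsWithin] with ε hε
  rw [Function.comp_apply, LSeries_ofReal f (mem_Ioi.mp hε), ← Complex.ofReal_mul]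

theorem HasResidue.nonneg {f : ℕ → ℝ} {c : ℝ} (h : HasResidue f c) (hf : ∀ n, 0 ≤ f n) : 0 ≤ c := by
  refine ge_of_tendsto h ?_
  filter_upwards [self_mem_nhdsWithin] with ε hε
  have := mem_Ioi.mp hε
  exact mul_nonneg this.le (tsum_nonneg fun n ↦ div_nonneg (hf n) (by positivity))

theorem HasResidue.const_mul {f : ℕ → ℝ} {c : ℝ} (h : HasResidue f c) (r : ℝ) :
    HasResidue (fun n ↦ r * f n) (r * c) := by
  refine (Tendsto.const_mul r h).congr fun ε ↦ ?_
  simp only [mul_div_assoc, tsum_mul_left]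
  ring

theorem HasResidue.le_of_le_add {f g e : ℕ → ℝ} {c c' : ℝ} (hf : HasResidue f c)
    (hg : HasResidue g c') (hf0 : ∀ n, 0 ≤ f n) (he0 : ∀ n, 0 ≤ e n) (hle : ∀ n, f n ≤ g n + e n)
    (hgs : ∀ ε : ℝ, 0 < ε → Summable fun n : ℕ ↦ g n / (n : ℝ) ^ (1 + ε))
    (he : Summable fun n : ℕ ↦ e n / n) : c ≤ c' := by
  have hlim : Tendsto (fun ε : ℝ ↦ ε * ∑' n : ℕ, g n / (n : ℝ) ^ (1 + ε) + ε * ∑' n : ℕ, e n / n)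
      (𝓝[>] 0) (𝓝 (c' + 0 * ∑' n : ℕ, e n / n)) :=
    Tendsto.add hg ((tendsto_id.mono_left nhdsWithin_le_nhds).mul_const _)
  rw [zero_mul, add_zero] at hlim
  refine le_of_tendsto_of_tendsto hf hlim ?_
  filter_upwards [self_mem_nhdsWithin] with ε hε
  have hε' := mem_Ioi.mp hε
  rw [← mul_add, ← (hgs ε hε').tsum_add he]
  have hterm : ∀ n : ℕ, f n / (n : ℝ) ^ (1 + ε) ≤ g n / (n : ℝ) ^ (1 + ε) + e n / n := by
    intro n
    rcases eq_or_ne n 0 with rfl | hn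
    · rw [Nat.cast_zero, Real.zero_rpow (by linarith)]
      simp
    have hn1 : (1 : ℝ) ≤ n := by exact_mod_cast Nat.one_le_iff_ne_zero.mpr hn
    have h1 : (n : ℝ) ≤ (n : ℝ) ^ (1 + ε) := by
      simpa using Real.rpow_le_rpow_of_exponent_le hn1 (show (1 : ℝ) ≤ 1 + ε by linarith)
    calc _ ≤ (g n + e n) / (n : ℝ) ^ (1 + ε) := by gcongr; exact hle n
      _ = g n / (n : ℝ) ^ (1 + ε) + e n / (n : ℝ) ^ (1 + ε) := add_div ..
      _ ≤ _ := by
        gcongr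
        exact he0 n
  refine mul_le_mul_of_nonneg_left ?_ hε'.le
  exact (Summable.of_nonneg_of_le (fun n ↦ div_nonneg (hf0 n) (by positivity)) hterm
    ((hgs ε hε').add he)).tsum_le_tsum hterm ((hgs ε hε').add he)

variable {K : Type*} [Field K] [NumberField K] {q : ℕ}

theorem summable_normLambda {ε : ℝ} (hε : 0 < ε) :
    Summable fun n : ℕ ↦ normLambda K n / (n : ℝ) ^ (1 + ε) := by
  have h := LSeriesSummable_twistLambda (K := K) (1 : DirichletCharacter ℂ 1) (s := 1 + ε)
    (by simpa using hε)
  rw [LSeriesSummable, ← Complex.summable_ofReal] at *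
  refine h.congr fun n ↦ ?_
  rw [← LSeries_term_ofReal _ hε]
  congr 1
  ext k
  rw [twistLambda, MulChar.one_apply (isUnit_of_subsingleton _), one_mul]

/-- The residue of a Dirichlet series dominated by that of `normLambda` is controlled by the
coefficients at the primes not dividing `q`. -/
theorem HasResidue.le_of_forall_prime [NeZero q] {L : Type*} [Field L] [NumberField L] {f g : ℕ → ℝ}
    {c c' C C' : ℝ} (hf : HasResidue f c) (hg : HasResidue g c') (hf0 : ∀ n, 0 ≤ f n)
    (hg0 : ∀ n, 0 ≤ g n) (hfK : ∀ n, f n ≤ C * normLambda K n) (hgL : ∀ n, g n ≤ C' * normLambda L n)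
    (h : ∀ p : ℕ, p.Prime → ¬ p ∣ q → f p ≤ g p) : c ≤ c' := by
  refine hf.le_of_le_add hg (e := fun n ↦ if n.Prime ∧ ¬ n ∣ q then 0 else f n) hf0
    (fun n ↦ ?_) (fun n ↦ ?_) (fun ε hε ↦ ?_) ?_
  · split_ifs
    exacts [le_rfl, hf0 n]
  · split_ifs with hn
    · simpa using h n hn.1 hn.2
    · linarith [hg0 n]
  · refine Summable.of_nonneg_of_le (fun n ↦ div_nonneg (hg0 n) (by positivity)) (fun n ↦ ?_)
      ((summable_normLambda (K := L) hε).mul_left C')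
    rw [← mul_div_assoc]
    gcongr
    exact hgL n
  · have h1 := (summable_normLambda_non_primes (K := K)).mul_left C
    have h2 : Summable fun n : ℕ ↦ if n ∈ q.divisors then f n / n else 0 :=
      summable_of_ne_finset_zero (s := q.divisors) fun n hn ↦ if_neg hn
    refine Summable.of_nonneg_of_le (fun n ↦ ?_) (fun n ↦ ?_) (h1.add h2)
    · split_ifs
      exacts [by simp, div_nonneg (hf0 n) (by positivity)]
    · have h0 : 0 ≤ C * normLambda K n / n :=
        div_nonneg ((hf0 n).trans (hfK n)) (by positivity)
      have hle : f n / n ≤ C * normLambda K n / n := by gcongr; exact hfK n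
      have hq : q ≠ 0 := NeZero.ne q
      rw [mul_div_assoc] at h0 hle
      by_cases hp : n.Prime <;> by_cases hd : n ∣ q <;>
        simp [hp, hd, hq, h0, hle]

theorem hasResidue_normLambda : HasResidue (normLambda K) 1 := by
  obtain ⟨F, hFa, -, hF⟩ := exists_twistCount_extension (K := K) (1 : DirichletCharacter ℂ 1)
  have hpath : Tendsto (fun ε : ℝ ↦ (1 + ε : ℂ)) (𝓝[>] 0) (𝓝 1) := by
    have : Continuous fun ε : ℝ ↦ (1 + ε : ℂ) := by fun_prop
    simpa using (this.tendsto 0).mono_left nhdsWithin_le_nhds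
  have hA := hFa 1 (by simp)
  have hF1 : Tendsto (fun ε : ℝ ↦ F (1 + ε)) (𝓝[>] 0) (𝓝 (F 1)) :=
    hA.continuousAt.tendsto.comp hpath
  have hre : ∀ ε : ℝ, 0 < ε → 1 < (1 + ε : ℂ).re := fun ε hε ↦ by simpa using hε
  have hone : ∀ k : ℕ, (1 : DirichletCharacter ℂ 1) (k : ZMod 1) = 1 := fun k ↦
    MulChar.one_apply (isUnit_of_subsingleton _)
  have hcount : twistCount K (1 : DirichletCharacter ℂ 1) =
      fun n ↦ ((Nat.card {I : Ideal (𝓞 K) // absNorm I = n} : ℕ) : ℂ) := by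
    ext k
    rw [twistCount, hone, one_mul, idealCount]
  have hres : F 1 = dedekindZeta_residue K := by
    refine tendsto_nhds_unique hF1 ?_
    have hp : Tendsto (fun ε : ℝ ↦ 1 + ε) (𝓝[>] 0) (𝓝[>] 1) := by
      refine tendsto_nhdsWithin_iff.mpr ⟨?_, ?_⟩
      · have : Continuous fun ε : ℝ ↦ 1 + ε := by fun_prop
        simpa using (this.tendsto 0).mono_left nhdsWithin_le_nhds
      · filter_upwards [self_mem_nhdsWithin] with ε hε
        have := mem_Ioi.mp hε
        exact mem_Ioi.mpr (by linarith)
    refine ((tendsto_sub_one_mul_dedekindZeta_nhdsGT K).comp hp).congr' ?_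
    filter_upwards [self_mem_nhdsWithin] with ε hε
    rw [hF _ (hre ε (mem_Ioi.mp hε)), hcount, Function.comp_apply, dedekindZeta]
    push_cast
    rfl
  have hF1ne : F 1 ≠ 0 := by
    rw [hres]
    exact_mod_cast dedekindZeta_residue_ne_zero K
  have hd : Tendsto (fun ε : ℝ ↦ deriv F (1 + ε)) (𝓝[>] 0) (𝓝 (deriv F 1)) :=
    hA.deriv.continuousAt.tendsto.comp hpath
  have hε0 : Tendsto (fun ε : ℝ ↦ (ε : ℂ)) (𝓝[>] 0) (𝓝 0) := by
    simpa using (Complex.continuous_ofReal.tendsto 0).mono_left nhdsWithin_le_nhds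
  have hlim := tendsto_const_nhds (x := (1 : ℂ)) |>.sub (hε0.mul (hd.div hF1 hF1ne))
  rw [zero_mul, sub_zero] at hlim
  have hmain : Tendsto (fun ε : ℝ ↦ (ε : ℂ) * LSeries (fun n ↦ (normLambda K n : ℂ)) (1 + ε))
      (𝓝[>] 0) (𝓝 1) := by
    refine hlim.congr' ?_
    filter_upwards [self_mem_nhdsWithin, hF1.eventually_ne hF1ne] with ε hε hFε
    have hε' : (ε : ℂ) ≠ 0 := by exact_mod_cast (mem_Ioi.mp hε).ne'
    have h1 := twistLambda_mul_extension (K := K) (1 : DirichletCharacter ℂ 1) hF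
      (hre ε (mem_Ioi.mp hε))
    have h2 : twistLambda K (1 : DirichletCharacter ℂ 1) = fun n ↦ (normLambda K n : ℂ) := by
      ext k
      rw [twistLambda, hone, one_mul]
    rw [h2, add_sub_cancel_left] at h1
    simp only [Pi.div_apply]
    field_simp
    field_simp at h1
    linear_combination -h1
  simpa using hasResidue_of_tendsto hmain

end Residues

section ResidueClasses
open Filter Set
open scoped Topology

variable (K : Type*) [Field K] [NumberField K] {q : ℕ}

/-- The restriction of `normLambda` to a residue class modulo `q`. -/
noncomputable def classLambda (u : ZMod q) (n : ℕ) : ℝ :=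
  if (n : ZMod q) = u then normLambda K n else 0

variable {K}

theorem classLambda_nonneg (u : ZMod q) (n : ℕ) : 0 ≤ classLambda K u n := by
  rw [classLambda]
  split_ifs
  exacts [normLambda_nonneg n, le_rfl]

theorem classLambda_le (u : ZMod q) (n : ℕ) : classLambda K u n ≤ normLambda K n := by
  rw [classLambda]
  split_ifs
  exacts [le_rfl, normLambda_nonneg n]

theorem LSeriesSummable_classLambda (u : ZMod q) {s : ℂ} (hs : 1 < s.re) :
    LSeriesSummable (fun n ↦ (classLambda K u n : ℂ)) s := by
  have h := LSeriesSummable_twistLambda (K := K) (1 : DirichletCharacter ℂ 1) hs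
  refine Summable.of_norm_bounded h.norm fun n ↦ LSeries.norm_term_le s ?_
  rw [twistLambda, MulChar.one_apply (isUnit_of_subsingleton _), one_mul, Complex.norm_real,
    Complex.norm_real, Real.norm_of_nonneg (classLambda_nonneg u n),
    Real.norm_of_nonneg (normLambda_nonneg n)]
  exact classLambda_le u n

variable [NeZero q]

theorem LSeries_classLambda (u : (ZMod q)ˣ) {s : ℂ} (hs : 1 < s.re) :
    LSeries (fun n ↦ (classLambda K (u : ZMod q) n : ℂ)) s = (q.totient : ℂ)⁻¹ *
      ∑ χ : DirichletCharacter ℂ q, χ ((u⁻¹ : (ZMod q)ˣ) : ZMod q) * LSeries (twistLambda K χ) s := by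
  have hφ : (q.totient : ℂ) ≠ 0 := by exact_mod_cast (Nat.totient_pos.mpr (NeZero.pos q)).ne'
  rw [eq_inv_mul_iff_mul_eq₀ hφ, LSeries, ← tsum_mul_left]
  simp only [LSeries, ← tsum_mul_left]
  rw [← Summable.tsum_finsetSum fun χ _ ↦ (LSeriesSummable_twistLambda χ hs).mul_left _]
  refine tsum_congr fun n ↦ ?_
  rcases eq_or_ne n 0 with rfl | hn
  · simp
  simp only [LSeries.term_of_ne_zero hn, twistLambda]
  have h1 := DirichletCharacter.sum_char_inv_mul_char_eq ℂ u.isUnit (n : ZMod q)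
  rw [ZMod.inv_coe_unit] at h1
  simp only [mul_div_assoc, ← mul_assoc, ← Finset.sum_mul]
  rw [h1, classLambda]
  by_cases h : (n : ZMod q) = u
  · simp [h]
  · simp [h, Ne.symm h]

theorem LSeries_twistLambda_eq_sum (χ : DirichletCharacter ℂ q) {s : ℂ} (hs : 1 < s.re) :
    LSeries (twistLambda K χ) s =
      ∑ u : (ZMod q)ˣ, χ u * LSeries (fun n ↦ (classLambda K (u : ZMod q) n : ℂ)) s := by
  simp only [LSeries, ← tsum_mul_left]
  rw [← Summable.tsum_finsetSum fun u _ ↦ (LSeriesSummable_classLambda _ hs).mul_left _]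
  refine tsum_congr fun n ↦ ?_
  rcases eq_or_ne n 0 with rfl | hn
  · simp
  simp only [LSeries.term_of_ne_zero hn, twistLambda, classLambda]
  by_cases h : IsUnit (n : ZMod q)
  · obtain ⟨v, hv⟩ := h
    rw [Finset.sum_eq_single v]
    · simp [hv, mul_div_assoc]
    · intro u _ huv
      rw [if_neg]
      · simp
      · rw [← hv, Units.val_inj]
        exact Ne.symm huv
    · simp
  · rw [χ.map_nonunit h, zero_mul, zero_div, Finset.sum_eq_zero]
    intro u _
    rw [if_neg]
    · simp
    · rintro h'
      exact h (h' ▸ u.isUnit)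

variable (K q)

theorem exists_residues : ∃ (m : DirichletCharacter ℂ q → ℤ) (d : (ZMod q)ˣ → ℝ),
    (∀ χ, m χ ≤ 1) ∧
    (∀ χ, Tendsto (fun ε : ℝ ↦ (ε : ℂ) * LSeries (twistLambda K χ) (1 + ε)) (𝓝[>] 0) (𝓝 (m χ))) ∧
    (∀ u : (ZMod q)ˣ, HasResidue (classLambda K (u : ZMod q)) (d u)) ∧
    ∀ χ, (m χ : ℂ) = ∑ u : (ZMod q)ˣ, χ u * (d u : ℂ) := by
  choose m hm1 hm using fun χ : DirichletCharacter ℂ q ↦ exists_tendsto_twistLambda (K := K) χ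
  have hre : ∀ ε : ℝ, 0 < ε → 1 < (1 + ε : ℂ).re := fun ε hε ↦ by simpa using hε
  have hres : ∀ u : (ZMod q)ˣ, ∃ d : ℝ, HasResidue (classLambda K (u : ZMod q)) d := by
    intro u
    have h1 := (tendsto_finsetSum Finset.univ fun (χ : DirichletCharacter ℂ q) _ ↦
      (hm χ).const_mul (χ ((u⁻¹ : (ZMod q)ˣ) : ZMod q))).const_mul (q.totient : ℂ)⁻¹
    refine ⟨_, hasResidue_of_tendsto (h1.congr' ?_)⟩
    filter_upwards [self_mem_nhdsWithin] with ε hε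
    rw [LSeries_classLambda u (hre ε (mem_Ioi.mp hε)), mul_left_comm, Finset.mul_sum _ _ (ε : ℂ)]
    congr 1
    exact Finset.sum_congr rfl fun χ _ ↦ mul_left_comm _ _ _
  choose d hd using hres
  refine ⟨m, d, hm1, hm, hd, fun χ ↦ tendsto_nhds_unique (hm χ) ?_⟩
  refine (tendsto_finsetSum Finset.univ fun (u : (ZMod q)ˣ) _ ↦
      (hd u).tendsto.const_mul (χ u)).congr' ?_
  filter_upwards [self_mem_nhdsWithin] with ε hε
  rw [LSeries_twistLambda_eq_sum χ (hre ε (mem_Ioi.mp hε)), Finset.mul_sum]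
  simp only [mul_left_comm]

end ResidueClasses

section Frobenius
open scoped Pointwise

theorem natCard_le_of_forall_pow_eq {R : Type*} [CommRing R] [IsDomain R] [Finite R] {p : ℕ}
    (hp : 1 < p) (h : ∀ x : R, x ^ p = x) : Nat.card R ≤ p := by
  have : Fintype R := Fintype.ofFinite R
  have hdeg : (Polynomial.X ^ p - Polynomial.X : Polynomial R).natDegree = p := by
    rw [Polynomial.natDegree_sub_eq_left_of_natDegree_lt] <;> simp [hp]
  have h0 : (Polynomial.X ^ p - Polynomial.X : Polynomial R) ≠ 0 := by
    intro h'
    rw [h', Polynomial.natDegree_zero] at hdeg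
    omega
  have h1 : (Finset.univ : Finset R).val ⊆
      (Polynomial.X ^ p - Polynomial.X : Polynomial R).roots := by
    intro x _
    rw [Polynomial.mem_roots h0, Polynomial.IsRoot.def]
    simp [h x]
  have h2 := Polynomial.card_le_degree_of_subset_roots h1
  rwa [hdeg, Finset.card_univ, ← Nat.card_eq_fintype_card] at h2

theorem natCast_notMem_of_absNorm_eq {L : Type*} [Field L] [NumberField L] {p q : ℕ} (hp : p.Prime)
    (hpq : ¬ p ∣ q) {Q : Ideal (𝓞 L)} [Q.IsPrime] (hQ : (p : 𝓞 L) ∈ Q) : (q : 𝓞 L) ∉ Q := by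
  intro h
  obtain ⟨a, b, hab⟩ := (Nat.isCoprime_iff_coprime.mpr ((Nat.Prime.coprime_iff_not_dvd hp).mpr hpq))
  refine (‹Q.IsPrime›.ne_top) ((Ideal.eq_top_iff_one Q).mpr ?_)
  have h1 := congrArg (Int.cast : ℤ → 𝓞 L) hab
  push_cast at h1
  rw [← h1]
  exact Q.add_mem (Q.mul_mem_left _ hQ) (Q.mul_mem_left _ h)

theorem autToPow_eq_iff {K M : Type*} [Field K] [Field M] [Algebra K M] {q : ℕ} [NeZero q] {ζ : M}
    (hζ : IsPrimitiveRoot ζ q) (σ : M ≃ₐ[K] M) (n : ℕ) :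
    (hζ.autToPow K σ : ZMod q) = n ↔ σ ζ = ζ ^ n := by
  rw [← hζ.autToPow_spec K σ, (hζ.isOfFinOrder (NeZero.ne q)).pow_eq_pow_iff_modEq,
    ← hζ.eq_orderOf, ← ZMod.natCast_eq_natCast_iff,
    ZMod.natCast_zmod_val]

variable {K M : Type*} [Field K] [NumberField K] [Field M] [Algebra K M] {p : ℕ}

theorem natCast_mem_of_liesOver {P : Ideal (𝓞 K)} (hP : absNorm P = p) (Q : Ideal (𝓞 M))
    [hQ : Q.LiesOver P] : (p : 𝓞 M) ∈ Q := by
  have h := absNorm_mem P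
  rw [hP, hQ.over, Ideal.mem_comap] at h
  simpa using h

theorem exists_isPrime_liesOver (hp : p.Prime) {P : Ideal (𝓞 K)} (hP : absNorm P = p) :
    ∃ Q : Ideal (𝓞 M), Q.IsPrime ∧ Q.LiesOver P := by
  have hP' : P.IsPrime := isPrime_of_irreducible_absNorm (hP ▸ hp)
  have hP0 : P ≠ ⊥ := by
    rintro rfl
    exact hp.ne_zero (by simpa using hP.symm)
  have : P.IsMaximal := hP'.isMaximal hP0
  obtain ⟨Q, hQ, hQP⟩ := Ideal.exists_maximal_ideal_liesOver_of_isIntegral (S := 𝓞 M) P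
  exact ⟨Q, hQ.isPrime, hQP⟩

variable [NumberField M] {q : ℕ} [NeZero q] {ζ : M}

theorem apply_eq_pow_of_isArithFrobAt [IsGalois K M] (hζ : IsPrimitiveRoot ζ q) (hp : p.Prime)
    (hpq : ¬ p ∣ q) {P : Ideal (𝓞 K)}
    (hP : absNorm P = p) {Q : Ideal (𝓞 M)} [Q.IsPrime] [hQ : Q.LiesOver P] {σ : M ≃ₐ[K] M}
    (hσ : IsArithFrobAt (𝓞 K) σ Q) : σ ζ = ζ ^ p := by
  have h2 := hσ.apply_of_pow_eq_one hζ.toInteger_isPrimitiveRoot.pow_eq_one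
    (natCast_notMem_of_absNorm_eq hp hpq (natCast_mem_of_liesOver hP Q))
  rw [← hQ.over] at h2
  have h3 : Nat.card (𝓞 K ⧸ P) = p := hP ▸ (absNorm_apply P).symm
  rw [h3] at h2
  exact congrArg (fun x : 𝓞 M ↦ (x : M)) h2

theorem exists_isArithFrobAt [IsGalois K M] (hp : p.Prime) {P : Ideal (𝓞 K)}
    (hP : absNorm P = p) (Q : Ideal (𝓞 M)) [Q.IsPrime] [hQ : Q.LiesOver P] :
    ∃ σ : M ≃ₐ[K] M, IsArithFrobAt (𝓞 K) σ Q := by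
  have hQ0 : Q ≠ ⊥ := by
    rintro rfl
    have h := natCast_mem_of_liesOver hP (⊥ : Ideal (𝓞 M))
    rw [Ideal.mem_bot] at h
    exact hp.ne_zero (by exact_mod_cast h)
  have : Finite (𝓞 M ⧸ Q) := Ideal.finiteQuotientOfFreeOfNeBot Q hQ0
  exact IsArithFrobAt.exists_of_isInvariant (𝓞 K) (M ≃ₐ[K] M) Q

theorem natCast_mem_range_autToPow [IsGalois K M] (hζ : IsPrimitiveRoot ζ q) (hp : p.Prime)
    (hpq : ¬ p ∣ q) {P : Ideal (𝓞 K)}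
    (hP : absNorm P = p) : ∃ σ : M ≃ₐ[K] M, (hζ.autToPow K σ : ZMod q) = p := by
  obtain ⟨Q, hQ, hQP⟩ := exists_isPrime_liesOver (M := M) hp hP
  obtain ⟨σ, hσ⟩ := exists_isArithFrobAt hp hP Q
  exact ⟨σ, (autToPow_eq_iff hζ σ p).mpr (apply_eq_pow_of_isArithFrobAt hζ hp hpq hP hσ)⟩

theorem isArithFrobAt_one [IsCyclotomicExtension {q} K M] [IsGalois K M]
    (hζ : IsPrimitiveRoot ζ q) (hp : p.Prime) (hpq : ¬ p ∣ q) (hp1 : (p : ZMod q) = 1)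
    {P : Ideal (𝓞 K)} (hP : absNorm P = p) (Q : Ideal (𝓞 M))
    [Q.IsPrime] [hQ : Q.LiesOver P] : IsArithFrobAt (𝓞 K) (1 : M ≃ₐ[K] M) Q := by
  obtain ⟨σ, hσ⟩ := exists_isArithFrobAt hp hP Q
  have h := (autToPow_eq_iff hζ σ p).mpr (apply_eq_pow_of_isArithFrobAt hζ hp hpq hP hσ)
  have h1 : σ = 1 := by
    refine hζ.autToPow_injective (K := K) (Units.ext ?_)
    rw [h, hp1, map_one, Units.val_one]
  exact h1 ▸ hσ

theorem pow_sub_mem_of_liesOver [IsCyclotomicExtension {q} K M] [IsGalois K M]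
    (hζ : IsPrimitiveRoot ζ q) (hp : p.Prime) (hpq : ¬ p ∣ q) (hp1 : (p : ZMod q) = 1)
    {P : Ideal (𝓞 K)} (hP : absNorm P = p) (Q : Ideal (𝓞 M))
    [Q.IsPrime] [hQ : Q.LiesOver P] (x : 𝓞 M) : x - x ^ p ∈ Q := by
  have h := isArithFrobAt_one hζ hp hpq hp1 hP Q x
  rw [← hQ.over, show Nat.card (𝓞 K ⧸ P) = p from hP ▸ (absNorm_apply P).symm] at h
  simpa using h

theorem absNorm_eq_of_liesOver [IsCyclotomicExtension {q} K M] [IsGalois K M]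
    (hζ : IsPrimitiveRoot ζ q) (hp : p.Prime) (hpq : ¬ p ∣ q) (hp1 : (p : ZMod q) = 1)
    {P : Ideal (𝓞 K)} (hP : absNorm P = p) (Q : Ideal (𝓞 M))
    [hQp : Q.IsPrime] [hQ : Q.LiesOver P] : absNorm Q = p := by
  have hpQ := natCast_mem_of_liesOver hP Q
  have hQ0 : Q ≠ ⊥ := by
    rintro rfl
    rw [Ideal.mem_bot] at hpQ
    exact hp.ne_zero (by exact_mod_cast hpQ)
  have hfin : Finite (𝓞 M ⧸ Q) := Ideal.finiteQuotientOfFreeOfNeBot Q hQ0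
  have hle : absNorm Q ≤ p := by
    rw [absNorm_apply]
    change Nat.card (𝓞 M ⧸ Q) ≤ p
    refine natCard_le_of_forall_pow_eq hp.one_lt fun x ↦ ?_
    obtain ⟨y, rfl⟩ := Ideal.Quotient.mk_surjective x
    have h2 := Ideal.Quotient.eq_zero_iff_mem.mpr (pow_sub_mem_of_liesOver hζ hp hpq hp1 hP Q y)
    rw [map_sub, map_pow] at h2
    exact (sub_eq_zero.mp h2).symm
  have hP' : P.IsPrime := isPrime_of_irreducible_absNorm (hP ▸ hp)
  have hP0 : P ≠ ⊥ := by
    rintro rfl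
    exact hp.ne_zero (by simpa using hP.symm)
  have hpow := absNorm_eq_pow_inertiaDeg'_of_liesOver Q P hP' hP0
  rw [hP] at hpow
  have h1 : absNorm Q ≠ 1 := fun h ↦ hQp.ne_top (absNorm_eq_one_iff.mp h)
  have h2 : P.inertiaDeg' Q ≠ 0 := fun h ↦ h1 (by rw [hpow, h, pow_zero])
  exact hle.antisymm (hpow ▸ Nat.le_self_pow h2 p)

theorem eq_one_of_smul_eq_self [IsCyclotomicExtension {q} K M] [IsGalois K M]
    (hζ : IsPrimitiveRoot ζ q) (hp : p.Prime) (hpq : ¬ p ∣ q) (hp1 : (p : ZMod q) = 1)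
    {P : Ideal (𝓞 K)} (hP : absNorm P = p) (Q : Ideal (𝓞 M))
    [hQp : Q.IsPrime] [hQ : Q.LiesOver P] {σ : M ≃ₐ[K] M} (hσ : σ • Q = Q) : σ = 1 := by
  have hcQ : Nat.card (𝓞 M ⧸ Q) = p := by
    rw [← absNorm_eq_of_liesOver hζ hp hpq hp1 hP Q, absNorm_apply]
    rfl
  have hcP : Nat.card (𝓞 K ⧸ P) = p := hP ▸ (absNorm_apply P).symm
  have hfinQ : Finite (𝓞 M ⧸ Q) := Nat.finite_of_card_ne_zero (hcQ ▸ hp.ne_zero)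
  have hinj : Function.Injective (algebraMap (𝓞 K ⧸ P) (𝓞 M ⧸ Q)) :=
    FaithfulSMul.algebraMap_injective _ _
  have hsurj := (hinj.bijective_of_nat_card_le (by rw [hcQ, hcP])).surjective
  have hinert : ∀ x : 𝓞 M, σ • x - x ∈ Q := by
    intro x
    obtain ⟨a, ha⟩ := hsurj (Ideal.Quotient.mk Q x)
    obtain ⟨b, rfl⟩ := Ideal.Quotient.mk_surjective a
    have hb : x - algebraMap (𝓞 K) (𝓞 M) b ∈ Q := by
      rw [← Ideal.Quotient.eq, ← ha]
      rfl
    have hb' : σ • (x - algebraMap (𝓞 K) (𝓞 M) b) ∈ Q := by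
      have := Ideal.smul_mem_pointwise_smul σ _ Q hb
      rwa [hσ] at this
    have h1 := Q.sub_mem hb' hb
    rw [smul_sub, smul_algebraMap] at h1
    simpa using h1
  have hfrob : IsArithFrobAt (𝓞 K) σ Q := by
    intro x
    rw [← hQ.over, hcP]
    have h1 := Q.add_mem (hinert x) (pow_sub_mem_of_liesOver hζ hp hpq hp1 hP Q x)
    simpa using h1
  have h := (autToPow_eq_iff hζ σ p).mpr (apply_eq_pow_of_isArithFrobAt hζ hp hpq hP hfrob)
  refine hζ.autToPow_injective (K := K) (Units.ext ?_)
  rw [h, hp1, map_one, Units.val_one]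

end Frobenius

section DegreeOnePrimes
open scoped Pointwise

theorem idealCount_ne_zero_iff {K : Type*} [Field K] [NumberField K] {k : ℕ} :
    idealCount K k ≠ 0 ↔ ∃ P : Ideal (𝓞 K), absNorm P = k := by
  rw [idealCount_eq_card, Finset.card_ne_zero]
  simp only [Finset.Nonempty, mem_idealsOfNorm]

variable {K M : Type*} [Field K] [NumberField K] [Field M] [NumberField M] [Algebra K M] {p : ℕ}

theorem idealCount_ne_zero_of_extension (hp : p.Prime) (h : idealCount M p ≠ 0) :
    idealCount K p ≠ 0 := by
  obtain ⟨Q, hQ⟩ := idealCount_ne_zero_iff.mp h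
  have hQ' : Q.IsPrime := isPrime_of_irreducible_absNorm (hQ ▸ hp)
  have hQ0 : Q ≠ ⊥ := by
    rintro rfl
    exact hp.ne_zero (by simpa using hQ.symm)
  have hP0 : Q.under (𝓞 K) ≠ ⊥ := mt Ideal.eq_bot_of_comap_eq_bot hQ0
  have hpow := absNorm_eq_pow_inertiaDeg'_of_liesOver Q (Q.under (𝓞 K)) inferInstance hP0
  rw [hQ] at hpow
  exact idealCount_ne_zero_iff.mpr ⟨_, (hp.pow_eq_iff.mp hpow.symm).1⟩

variable {q : ℕ} [NeZero q] {ζ : M}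

theorem natCast_eq_one_of_idealCount_ne_zero (hζ : IsPrimitiveRoot ζ q) (hp : p.Prime)
    (hpq : ¬ p ∣ q) (h : idealCount M p ≠ 0) : (p : ZMod q) = 1 := by
  obtain ⟨P, hP⟩ := idealCount_ne_zero_iff.mp h
  obtain ⟨σ, hσ⟩ := natCast_mem_range_autToPow (K := M) hζ hp hpq hP
  rw [← hσ, Subsingleton.elim σ 1, map_one, Units.val_one]

theorem card_mul_idealCount_le [IsCyclotomicExtension {q} K M] [IsGalois K M]
    (hζ : IsPrimitiveRoot ζ q) (hp : p.Prime) (hpq : ¬ p ∣ q) (hp1 : (p : ZMod q) = 1) :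
    Nat.card (M ≃ₐ[K] M) * idealCount K p ≤ idealCount M p := by
  have hex : ∀ P : {P : Ideal (𝓞 K) // absNorm P = p}, ∃ Q : Ideal (𝓞 M), Q.IsPrime ∧
      Q.LiesOver P.1 := fun P ↦ exists_isPrime_liesOver hp P.2
  choose Q hQ hQP using hex
  have hfin : Finite {Q : Ideal (𝓞 M) // absNorm Q = p} :=
    (finite_setOfPred_absNorm_eq p).to_subtype
  rw [idealCount, idealCount, ← Nat.card_prod]
  let f : (M ≃ₐ[K] M) × {P : Ideal (𝓞 K) // absNorm P = p} → {Q : Ideal (𝓞 M) // absNorm Q = p} :=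
    fun x ↦ ⟨x.1 • Q x.2, absNorm_eq_of_liesOver (P := x.2.1) hζ hp hpq hp1 x.2.2 _⟩
  refine Nat.card_le_card_of_injective f ?_
  rintro ⟨σ, P⟩ ⟨τ, P'⟩ h
  have h1 : σ • Q P = τ • Q P' := congrArg Subtype.val h
  have h2 : P = P' := by
    have h3 := congrArg (fun I : Ideal (𝓞 M) ↦ I.under (𝓞 K)) h1
    simp only [Ideal.under_smul] at h3
    exact Subtype.ext (((hQP P).over.trans h3).trans (hQP P').over.symm)
  subst h2
  have h3 : (τ⁻¹ * σ) • Q P = Q P := by rw [mul_smul, h1, inv_smul_smul]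
  have h4 := eq_one_of_smul_eq_self (P := P.1) hζ hp hpq hp1 P.2 (Q P) h3
  rw [inv_mul_eq_one.mp h4]

end DegreeOnePrimes

section ResidueValues
open Filter Set
open scoped Topology

variable {K M : Type*} [Field K] [NumberField K] [Field M] [NumberField M] [Algebra K M]
  {q : ℕ} [NeZero q] {ζ : M} {c : ℝ}

theorem hasResidue_zero : HasResidue (fun _ ↦ 0) 0 := by
  simp [HasResidue]

theorem residue_eq_zero_of_notMem_range [IsGalois K M] (hζ : IsPrimitiveRoot ζ q) {u : (ZMod q)ˣ}
    (hu : u ∉ (hζ.autToPow K).range) (h : HasResidue (classLambda K (u : ZMod q)) c) : c = 0 := by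
  refine le_antisymm ?_ (h.nonneg (classLambda_nonneg _))
  refine HasResidue.le_of_forall_prime (q := q) (K := K) (L := K) (C := 1) (C' := 0) h
    hasResidue_zero (classLambda_nonneg _) (fun _ ↦ le_rfl)
    (fun n ↦ (classLambda_le _ n).trans (one_mul _).ge) (fun n ↦ (zero_mul _).ge)
    fun p hp hpq ↦ ?_
  rw [classLambda]
  split_ifs with hpu
  · rw [normLambda_prime p hp]
    suffices idealCount K p = 0 by simp [this]
    by_contra h0
    obtain ⟨P, hP⟩ := idealCount_ne_zero_iff.mp h0
    obtain ⟨σ, hσ⟩ := natCast_mem_range_autToPow hζ hp hpq hP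
    exact hu ⟨σ, Units.ext (hσ.trans hpu)⟩
  · exact le_rfl

theorem one_le_residue_twistLambda_one {z : ℂ}
    (h : Tendsto (fun ε : ℝ ↦ (ε : ℂ) * LSeries (twistLambda K (1 : DirichletCharacter ℂ q)) (1 + ε))
      (𝓝[>] 0) (𝓝 z)) : 1 ≤ z.re := by
  let g : ℕ → ℝ := fun n ↦ if IsUnit (n : ZMod q) then normLambda K n else 0
  have hg : twistLambda K (1 : DirichletCharacter ℂ q) = fun n ↦ (g n : ℂ) := by
    ext n
    by_cases hn : IsUnit (n : ZMod q)
    · simp [twistLambda, g, hn, MulChar.one_apply hn]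
    · simp [twistLambda, g, hn, MulChar.map_nonunit _ hn]
  rw [hg] at h
  refine HasResidue.le_of_forall_prime (q := q) (K := K) (L := K) (C := 1) (C' := 1)
    hasResidue_normLambda (hasResidue_of_tendsto h) normLambda_nonneg (fun n ↦ ?_)
    (fun n ↦ (one_mul _).ge) (fun n ↦ ?_) fun p hp hpq ↦ ?_
  · simp only [g]
    split_ifs
    exacts [normLambda_nonneg n, le_rfl]
  · simp only [g, one_mul]
    split_ifs
    exacts [le_rfl, normLambda_nonneg n]
  · have : IsUnit (p : ZMod q) := (ZMod.isUnit_iff_coprime p q).mpr (hp.coprime_iff_not_dvd.mpr hpq)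
    simp [g, this]

theorem card_mul_residue_one_le [IsCyclotomicExtension {q} K M] [IsGalois K M]
    (hζ : IsPrimitiveRoot ζ q) (h : HasResidue (classLambda K (1 : ZMod q)) c) :
    Nat.card (hζ.autToPow K).range * c ≤ 1 := by
  have hcard : Nat.card (hζ.autToPow K).range = Nat.card (M ≃ₐ[K] M) :=
    Nat.card_congr (MonoidHom.ofInjective (hζ.autToPow_injective K)).toEquiv.symm
  rw [hcard]
  refine HasResidue.le_of_forall_prime (q := q) (K := K) (L := M) (C := Nat.card (M ≃ₐ[K] M))
    (C' := 1) (h.const_mul _) hasResidue_normLambda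
    (fun n ↦ mul_nonneg (Nat.cast_nonneg _) (classLambda_nonneg _ n)) normLambda_nonneg
    (fun n ↦ mul_le_mul_of_nonneg_left (classLambda_le _ n) (Nat.cast_nonneg _))
    (fun n ↦ (one_mul _).ge) fun p hp hpq ↦ ?_
  rw [classLambda]
  split_ifs with hp1
  · rw [normLambda_prime p hp, normLambda_prime p hp, ← mul_assoc]
    exact mul_le_mul_of_nonneg_right (by exact_mod_cast card_mul_idealCount_le hζ hp hpq hp1)
      (Real.log_natCast_nonneg p)
  · simpa using normLambda_nonneg (K := M) p

theorem residue_one_pos (hζ : IsPrimitiveRoot ζ q)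
    (h : HasResidue (classLambda K (1 : ZMod q)) c) : 0 < c := by
  suffices 1 ≤ (Module.finrank ℚ M : ℝ) * c by
    by_contra! hc
    nlinarith [mul_nonneg (Nat.cast_nonneg (α := ℝ) (Module.finrank ℚ M)) (neg_nonneg.mpr hc)]
  refine HasResidue.le_of_forall_prime (q := q) (K := M) (L := K) (C := 1)
    (C' := Module.finrank ℚ M) hasResidue_normLambda (h.const_mul _) normLambda_nonneg
    (fun n ↦ mul_nonneg (Nat.cast_nonneg _) (classLambda_nonneg _ n)) (fun n ↦ (one_mul _).ge)
    (fun n ↦ mul_le_mul_of_nonneg_left (classLambda_le _ n) (Nat.cast_nonneg _))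
    fun p hp hpq ↦ ?_
  by_cases h0 : idealCount M p = 0
  · rw [normLambda_prime p hp, h0, Nat.cast_zero, zero_mul]
    exact mul_nonneg (Nat.cast_nonneg _) (classLambda_nonneg _ p)
  have h1 : (1 : ℝ) ≤ idealCount K p := by
    exact_mod_cast Nat.one_le_iff_ne_zero.mpr (idealCount_ne_zero_of_extension (K := K) hp h0)
  rw [classLambda, if_pos (natCast_eq_one_of_idealCount_ne_zero hζ hp hpq h0)]
  refine (normLambda_le p).trans (mul_le_mul_of_nonneg_left ?_ (Nat.cast_nonneg _))
  rw [ArithmeticFunction.vonMangoldt_apply_prime hp, normLambda_prime p hp]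
  exact le_mul_of_one_le_left (Real.log_natCast_nonneg p) h1

variable (K) in
/-- Prime ideal powers whose norm lies in a residue class `a` in the image of the mod `q`
cyclotomic character of `K` have weighted density `1 / |image|`. -/
theorem tendsto_sum_classLambda_div [IsCyclotomicExtension {q} K M] [IsGalois K M]
    (hζ : IsPrimitiveRoot ζ q) {a : (ZMod q)ˣ} (ha : a ∈ (hζ.autToPow K).range) :
    Tendsto (fun x : ℝ ↦ (∑ k ∈ Finset.Icc 1 ⌊x⌋₊, classLambda K (a : ZMod q) k) / x) atTop
      (𝓝 (1 / Nat.card (hζ.autToPow K).range)) := by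
  obtain ⟨m, d, hm1, hlim, hd, hmd⟩ := exists_residues K q
  have hd1 : HasResidue (classLambda K (1 : ZMod q)) (d 1) := by simpa using hd 1
  have h1 : m 1 = 1 := by
    have := one_le_residue_twistLambda_one (hlim 1)
    rw [Complex.intCast_re] at this
    exact le_antisymm (hm1 1) (by exact_mod_cast this)
  obtain ⟨hm01, hdG⟩ := pole_orders_eq (hζ.autToPow K).range m d hm1
    (fun u ↦ (hd u).nonneg (classLambda_nonneg _))
    (fun u hu ↦ residue_eq_zero_of_notMem_range hζ hu (hd u)) hmd h1
    (residue_one_pos hζ hd1) (card_mul_residue_one_le hζ hd1)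
  have hG : ∀ χ : DirichletCharacter ℂ q, ∃ G : ℂ → ℂ, ContinuousOn G {s | 1 ≤ s.re} ∧
      ∀ s, 1 < s.re → G s = LSeries (twistLambda K χ) s - m χ / (s - 1) := fun χ ↦ by
    have h := hlim χ
    rcases hm01 χ with h0 | h0 <;> rw [h0] at h ⊢
    · simpa using exists_continuousOn_twistLambda χ (m := 0) (.inl rfl) (by simpa using h)
    · simpa using exists_continuousOn_twistLambda χ (m := 1) (.inr rfl) (by simpa using h)
  choose G hGc hG using hG
  rw [← hdG a ha]
  refine wienerIkehara (B := Module.finrank ℚ K * (Real.log 4 + 4))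
    (G := fun s ↦ (q.totient : ℂ)⁻¹ * ∑ χ, χ ((a⁻¹ : (ZMod q)ˣ) : ZMod q) * G χ s)
    (classLambda_nonneg _)
    (fun x hx ↦ (Finset.sum_le_sum fun k _ ↦ classLambda_le _ k).trans (sum_normLambda_le K hx))
    (continuousOn_const.mul (continuousOn_finsetSum _ fun χ _ ↦ continuousOn_const.mul (hGc χ)))
    fun s hs ↦ ?_
  have hφ : (q.totient : ℂ) ≠ 0 := by exact_mod_cast (Nat.totient_pos.mpr (NeZero.pos q)).ne'
  have hsum := sum_char_inv_mul hmd a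
  rw [LSeries_classLambda a hs]
  simp only [hG _ s hs, mul_sub, Finset.sum_sub_distrib, ← mul_div_assoc, ← Finset.sum_div]
  rw [hsum, mul_div_assoc, mul_div_assoc, inv_mul_cancel_left₀ hφ]

end ResidueValues

end PrimeIdealNorms

/-- **Chebotarëv density (asymptotic).** For every `q ≥ 1` and `a ∈ G_q`,
`ψ_K(x; q, a) ∼ x / φ_K(q)` as `x → ∞`, i.e. `ψ_K(x;q,a) φ_K(q) / x → 1`. -/
theorem psiK_asymptotic (K : Type*) [Field K] [NumberField K] [IsGalois ℚ K]
    (q : ℕ) (hq : 1 ≤ q) (a : (ZMod q)ˣ) (ha : a ∈ Gq K q) :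
    Filter.Tendsto (fun x : ℝ => psiK K x q (a : ZMod q) * (phiK K q : ℝ) / x)
      Filter.atTop (nhds 1) := by
  have : NeZero q := ⟨Nat.one_le_iff_ne_zero.mp hq⟩
  have : NumberField (CyclotomicField q K) := IsCyclotomicExtension.numberField {q} K _
  have : IsGalois K (CyclotomicField q K) := IsCyclotomicExtension.isGalois {q} K _
  have hG : Gq K q = ((IsCyclotomicExtension.zeta_spec q K (CyclotomicField q K)).autToPow K).range :=
    dif_pos hq
  rw [hG] at ha
  have h := (PrimeIdealNorms.tendsto_sum_classLambda_div K
    (IsCyclotomicExtension.zeta_spec q K (CyclotomicField q K)) ha).mul_const (phiK K q : ℝ)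
  have hφ : (phiK K q : ℝ) ≠ 0 := by exact_mod_cast Nat.card_pos.ne'
  rw [← hG, ← phiK, one_div_mul_cancel hφ] at h
  refine h.congr fun x ↦ ?_
  rw [PrimeIdealNorms.psiK_eq_sum, Finset.sum_filter, div_mul_eq_mul_div]
  rfl
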